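/- Let H ∈ (0,1/2), T > 0, ρ_1, ρ_2 ∈ ℝ ∖ {0}, let B^H be a one-dimensional fractional Brownian motion with Hurst parameter H having continuous paths and W a standard one-dimensional Brownian motion independent of B^H. Suppose b : [0,T] × ℝ → ℝ has the decomposition b = b̃ + b̂, where b̃ is measurable and bounded and b̂ is measurable, Lipschitz continuous in the spatial variable uniformly in time and of linear growth uniformly in time. For x ∈ ℝ let X^x be the unique strong solution of X^x_t = x + ∫_0^t b(u,X^x_u)du + ρ_1 B^H_t + ρ_2 W_t on [0,T]. Then for every Φ ∈ C_c^∞(ℝ) the function u : ℝ → ℝ defined by u(x) := E[Φ(X^x_T)] is continuously differentiable on ℝ. -/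

import Mathlib

open MeasureTheory ProbabilityTheory Real Set
open scoped ENNReal NNReal BigOperators

noncomputable section

/-- A one-dimensional centered Gaussian process with the fractional Brownian motion
covariance structure with Hurst parameter `H`.  For `H = 1/2` this is a standard
one-dimensional Brownian motion. -/
structure IsFBM {Ω : Type*} [MeasurableSpace Ω] (μ : Measure Ω) (H : ℝ) (B : ℝ → Ω → ℝ) :
    Prop where
  meas : ∀ t, Measurable (B t)
  gaussian : ∀ (n : ℕ) (t : Fin n → ℝ) (c : Fin n → ℝ),
    ∃ v : ℝ≥0, μ.map (fun ω => ∑ i, c i * B (t i) ω) = gaussianReal 0 v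
  cov : ∀ s t : ℝ, 0 ≤ s → 0 ≤ t →
    ∫ ω, B t ω * B s ω ∂μ = (t ^ (2 * H) + s ^ (2 * H) - |t - s| ^ (2 * H)) / 2

/-- The `μ`-augmentation of the σ-algebra generated by `(B_s, W_s)_{0 ≤ s ≤ t}`. -/
def augPairFiltration {Ω : Type*} [MeasurableSpace Ω] (μ : Measure Ω)
    (B W : ℝ → Ω → ℝ) (t : ℝ) : MeasurableSpace Ω :=
  (⨆ s ∈ Set.Icc (0 : ℝ) t,
      MeasurableSpace.comap (B s) inferInstance ⊔ MeasurableSpace.comap (W s) inferInstance) ⊔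
    MeasurableSpace.generateFrom {A : Set Ω | μ A = 0}


/-- Gaussian kernel with variance `v`. -/
def gk (v y : ℝ) : ℝ := (√(2 * π * v))⁻¹ * rexp (-y ^ 2 / (2 * v))
/-- First spatial derivative. -/
def gk1 (v y : ℝ) : ℝ := -(y / v) * gk v y
/-- Second spatial derivative. -/
def gk2 (v y : ℝ) : ℝ := (y ^ 2 / v ^ 2 - 1 / v) * gk v y

lemma gk_eq (v : ℝ) (hv : 0 < v) : gk v = gaussianPDFReal 0 v.toNNReal := by
  ext y
  simp [gk, gaussianPDFReal, hv.le]

lemma gk_nonneg (v y : ℝ) : 0 ≤ gk v y := by unfold gk; positivity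

lemma gk_cont (v : ℝ) : Continuous (gk v) := by unfold gk; fun_prop
lemma gk1_cont (v : ℝ) : Continuous (gk1 v) := by
  unfold gk1; have := gk_cont v; fun_prop
lemma gk2_cont (v : ℝ) : Continuous (gk2 v) := by
  unfold gk2; have := gk_cont v; fun_prop

lemma gk_contOn : ContinuousOn (fun p : ℝ × ℝ => gk p.1 p.2) {p | 0 < p.1} := by
  unfold gk
  apply ContinuousOn.mul
  · apply ContinuousOn.inv₀
    · fun_prop
    · intro p hp; have : 0 < p.1 := hp; positivity
  · apply ContinuousOn.rexp
    apply ContinuousOn.div (by fun_prop) (by fun_prop)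
    intro p hp; have : 0 < p.1 := hp; positivity

lemma gk1_contOn : ContinuousOn (fun p : ℝ × ℝ => gk1 p.1 p.2) {p | 0 < p.1} := by
  unfold gk1
  apply ContinuousOn.mul _ gk_contOn
  apply ContinuousOn.neg
  apply ContinuousOn.div (by fun_prop) (by fun_prop)
  intro p hp; have : 0 < p.1 := hp; positivity

lemma gk_meas : Measurable (fun p : ℝ × ℝ => gk p.1 p.2) := by unfold gk; fun_prop
lemma gk1_meas : Measurable (fun p : ℝ × ℝ => gk1 p.1 p.2) := by
  unfold gk1; have := gk_meas; fun_prop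

lemma gk_hasDeriv (v : ℝ) (y : ℝ) : HasDerivAt (gk v) (gk1 v y) y := by
  unfold gk1 gk
  have h : HasDerivAt (fun y : ℝ => -y ^ 2 / (2 * v)) (-(y / v)) y := by
    have := ((hasDerivAt_pow 2 y).neg).div_const (2 * v)
    refine HasDerivAt.congr_deriv this ?_
    by_cases hv : v = 0
    · simp [hv]
    · field_simp; norm_num
  refine (h.exp.const_mul ((√(2 * π * v))⁻¹)).congr_deriv ?_
  ring

lemma gk1_hasDeriv (v : ℝ) (y : ℝ) : HasDerivAt (gk1 v) (gk2 v y) y := by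
  have h1 : HasDerivAt (fun y : ℝ => -(y / v)) (-(1 / v)) y := ((hasDerivAt_id y).div_const v).neg
  have := h1.mul (gk_hasDeriv v y)
  refine HasDerivAt.congr_deriv this ?_
  unfold gk2 gk1; ring

lemma gk_integrable (v : ℝ) (hv : 0 < v) : Integrable (gk v) := by
  rw [gk_eq v hv]; exact integrable_gaussianPDFReal _ _

lemma gk_integral (v : ℝ) (hv : 0 < v) : ∫ y, gk v y = 1 := by
  rw [gk_eq v hv]; exact integral_gaussianPDFReal_eq_one 0 (by simpa using hv)

lemma gk_le (v y : ℝ) (hv : 0 < v) : gk v y ≤ (√v)⁻¹ := by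
  unfold gk
  have h1 : rexp (-y ^ 2 / (2 * v)) ≤ 1 := by
    apply Real.exp_le_one_iff.2
    apply div_nonpos_of_nonpos_of_nonneg <;> nlinarith [sq_nonneg y]
  have h2 : √v ≤ √(2 * π * v) := by
    apply Real.sqrt_le_sqrt
    nlinarith [Real.pi_gt_three]
  have h3 : 0 < √v := Real.sqrt_pos.2 hv
  calc _ ≤ (√(2 * π * v))⁻¹ * 1 := by gcongr
    _ ≤ _ := by rw [mul_one]; gcongr

/-- comparison of kernels with variance v and twice v -/
lemma gk_two (v y : ℝ) (hv : 0 < v) : gk v y = √2 * rexp (-y ^ 2 / (4 * v)) * gk (2 * v) y := by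
  unfold gk
  have e : √(2 * π * (2 * v)) = √2 * √(2 * π * v) := by
    rw [← Real.sqrt_mul (by norm_num)]; congr 1; ring
  have h : rexp (-y ^ 2 / (2 * v)) = rexp (-y ^ 2 / (4 * v)) * rexp (-y ^ 2 / (2 * (2 * v))) := by
    rw [← Real.exp_add]; congr 1; field_simp; ring
  rw [e, h]
  have : 0 < √(2 * π * v) := Real.sqrt_pos.2 (by positivity)
  have : 0 < √(2 : ℝ) := by positivity
  field_simp

lemma sq_exp_le (v y : ℝ) (hv : 0 < v) : y ^ 2 / v * rexp (-y ^ 2 / (4 * v)) ≤ 2 := by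
  set s := y ^ 2 / (4 * v) with hs
  have hs0 : 0 ≤ s := by positivity
  have e1 : y ^ 2 / v = 4 * s := by rw [hs]; field_simp
  have e2 : -y ^ 2 / (4 * v) = -s := by rw [hs]; ring
  rw [e1, e2, Real.exp_neg]
  have h : 2 * s ≤ rexp s := by
    have := Real.add_one_le_exp (s - 1)
    have h2 : rexp s = rexp 1 * rexp (s - 1) := by rw [← Real.exp_add]; congr 1; ring
    have h3 := Real.exp_one_gt_d9
    rw [h2]; nlinarith [Real.exp_pos (s-1)]
  rw [← div_eq_mul_inv, div_le_iff₀ (Real.exp_pos s)]; linarith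

lemma sqrt2_le : √(2:ℝ) ≤ 3/2 := by
  rw [Real.sqrt_le_left (by norm_num)]; norm_num

lemma gk_exp_le (v y : ℝ) (hv : 0 < v) : gk v y ≤ 3/2 * gk (2 * v) y := by
  rw [gk_two v y hv]
  have h1 : rexp (-y ^ 2 / (4 * v)) ≤ 1 := by
    apply Real.exp_le_one_iff.2
    apply div_nonpos_of_nonpos_of_nonneg <;> nlinarith [sq_nonneg y]
  have := sqrt2_le
  have := gk_nonneg (2*v) y
  have : √2 * rexp (-y ^ 2 / (4 * v)) ≤ 3/2 * 1 := by gcongr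
  nlinarith

lemma gk_sq_le (v y : ℝ) (hv : 0 < v) : y ^ 2 / v * gk v y ≤ 3 * gk (2 * v) y := by
  rw [gk_two v y hv]
  have h1 := sq_exp_le v y hv
  have h2 := sqrt2_le
  have h3 := gk_nonneg (2*v) y
  have h4 : √2 * (y ^ 2 / v * rexp (-y ^ 2 / (4 * v))) ≤ 3/2 * 2 := by gcongr
  nlinarith

lemma gk1_abs_le (v y : ℝ) (hv : 0 < v) : |gk1 v y| ≤ 3 * (√v)⁻¹ * gk (2 * v) y := by
  have h1 := gk_sq_le v y hv
  have h2 := gk_exp_le v y hv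
  have h3 := gk_nonneg (2*v) y
  have h4 := gk_nonneg v y
  have hsv : 0 < √v := Real.sqrt_pos.2 hv
  have hsq : √v * √v = v := Real.mul_self_sqrt hv.le
  have e : |gk1 v y| = (√v)⁻¹ * ((|y| / √v) * gk v y) := by
    unfold gk1
    rw [abs_mul, abs_neg, abs_div, abs_of_pos hv, abs_of_nonneg h4]
    nth_rw 1 [← hsq]; field_simp
  have e2 : |y| / √v ≤ (1 + y ^ 2 / v) / 2 := by
    have : y ^ 2 / v = (|y| / √v) ^ 2 := by rw [div_pow, sq_abs, Real.sq_sqrt hv.le]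
    rw [this]; nlinarith [sq_nonneg (|y| / √v - 1)]
  have e3 : |y| / √v * gk v y ≤ 3 * gk (2 * v) y := by
    calc _ ≤ (1 + y ^ 2 / v) / 2 * gk v y := by gcongr
      _ ≤ _ := by nlinarith
  rw [e]
  calc _ ≤ (√v)⁻¹ * (3 * gk (2 * v) y) := by gcongr
    _ = _ := by ring

lemma gk1_mul_abs_le (v y : ℝ) (hv : 0 < v) : |y| * |gk1 v y| ≤ 3 * gk (2 * v) y := by
  have h1 := gk_sq_le v y hv
  have h4 := gk_nonneg v y
  have e : |y| * |gk1 v y| = y ^ 2 / v * gk v y := by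
    unfold gk1
    rw [abs_mul, abs_neg, abs_div, abs_of_pos hv, abs_of_nonneg h4, ← sq_abs y]; ring
  rw [e]; exact h1

lemma gk2_abs_le (v y : ℝ) (hv : 0 < v) : |gk2 v y| ≤ 6 * v⁻¹ * gk (2 * v) y := by
  have h1 := gk_sq_le v y hv
  have h2 := gk_exp_le v y hv
  have h3 := gk_nonneg (2*v) y
  have h4 := gk_nonneg v y
  have e : gk2 v y = v⁻¹ * (y ^ 2 / v * gk v y - gk v y) := by unfold gk2; field_simp
  rw [e, abs_mul, abs_of_pos (inv_pos.2 hv), mul_comm 6, mul_assoc]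
  apply mul_le_mul_of_nonneg_left _ (inv_pos.2 hv).le
  have : 0 ≤ y ^ 2 / v * gk v y := by positivity
  rw [abs_le]; constructor <;> nlinarith

lemma gk1_bdd (v y : ℝ) (hv : 0 < v) : |gk1 v y| ≤ 3 * v⁻¹ := by
  have h1 := gk1_abs_le v y hv
  have h2 := gk_le (2 * v) y (by linarith)
  have hsv : 0 < √v := Real.sqrt_pos.2 hv
  have h3 : (√(2 * v))⁻¹ ≤ (√v)⁻¹ := by
    apply inv_anti₀ hsv; apply Real.sqrt_le_sqrt; linarith
  have hsq : (√v)⁻¹ * (√v)⁻¹ = v⁻¹ := by rw [← mul_inv, Real.mul_self_sqrt hv.le]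
  calc _ ≤ _ := h1
    _ ≤ 3 * (√v)⁻¹ * (√v)⁻¹ := by gcongr; exact h2.trans h3
    _ = _ := by rw [mul_assoc, hsq]

lemma gk1_integrable (v : ℝ) (hv : 0 < v) : Integrable (gk1 v) := by
  refine Integrable.mono' ((gk_integrable (2*v) (by linarith)).const_mul (3 * (√v)⁻¹))
    (gk1_cont v).aestronglyMeasurable (ae_of_all _ fun y => ?_)
  exact gk1_abs_le v y hv
lemma gk2_integrable (v : ℝ) (hv : 0 < v) : Integrable (gk2 v) := by
  refine Integrable.mono' ((gk_integrable (2*v) (by linarith)).const_mul (6 * v⁻¹))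
    (gk2_cont v).aestronglyMeasurable (ae_of_all _ fun y => ?_)
  exact gk2_abs_le v y hv
lemma gk1_integral_le (v : ℝ) (hv : 0 < v) : ∫ y, |gk1 v y| ≤ 3 * (√v)⁻¹ := by
  calc _ ≤ ∫ y, 3 * (√v)⁻¹ * gk (2 * v) y := by
        apply integral_mono (gk1_integrable v hv).abs
          ((gk_integrable (2*v) (by linarith)).const_mul _)
        intro y; exact gk1_abs_le v y hv
    _ = _ := by rw [integral_const_mul, gk_integral _ (by linarith), mul_one]
lemma gk2_integral_le (v : ℝ) (hv : 0 < v) : ∫ y, |gk2 v y| ≤ 6 * v⁻¹ := by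
  calc _ ≤ ∫ y, 6 * v⁻¹ * gk (2 * v) y := by
        apply integral_mono (gk2_integrable v hv).abs
          ((gk_integrable (2*v) (by linarith)).const_mul _)
        intro y; exact gk2_abs_le v y hv
    _ = _ := by rw [integral_const_mul, gk_integral _ (by linarith), mul_one]

/-- semigroup property -/
lemma gk_semigroup (v w ρ y : ℝ) (hv : 0 < v) (hw : 0 < w) (hρ : ρ ≠ 0) :
    ∫ n, gk v (y + ρ * n) ∂(gaussianReal 0 w.toNNReal) = gk (v + ρ ^ 2 * w) y := by
  have hρ2 : 0 < ρ ^ 2 := by positivity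
  set V := v + ρ ^ 2 * w with hV
  have hVp : 0 < V := by positivity
  have hu : 0 < v * w / V := by positivity
  rw [integral_gaussianReal_eq_integral_smul (by simpa using hw), ← gk_eq w hw]
  have key : ∀ n, gk w n • gk v (y + ρ * n) = gk V y * gk (v * w / V) (n + ρ * w / V * y) := by
    intro n
    simp only [smul_eq_mul, gk]
    have e1 : √(2 * π * w) * √(2 * π * v) = √(2 * π * V) * √(2 * π * (v * w / V)) := by
      rw [← Real.sqrt_mul (by positivity), ← Real.sqrt_mul (by positivity)]
      congr 1; field_simp
    have e2 : rexp (-n ^ 2 / (2 * w)) * rexp (-(y + ρ * n) ^ 2 / (2 * v)) =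
        rexp (-y ^ 2 / (2 * V)) * rexp (-(n + ρ * w / V * y) ^ 2 / (2 * (v * w / V))) := by
      rw [← Real.exp_add, ← Real.exp_add]; congr 1
      field_simp
      rw [hV]; ring
    calc _ = (√(2 * π * w) * √(2 * π * v))⁻¹ *
          (rexp (-n ^ 2 / (2 * w)) * rexp (-(y + ρ * n) ^ 2 / (2 * v))) := by
          rw [mul_inv]; ring
      _ = _ := by rw [e1, e2, mul_inv]; ring
  simp_rw [key]
  rw [integral_const_mul, integral_add_right_eq_self (μ := volume) (gk (v * w / V)), gk_integral _ hu, mul_one]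

lemma trans_L1 (F F' : ℝ → ℝ) (hF : ∀ y, HasDerivAt F (F' y) y) (hc : Continuous F') (δ : ℝ) :
    ∫⁻ w, ‖F (w + δ) - F w‖ₑ ≤ ENNReal.ofReal |δ| * ∫⁻ w, ‖F' w‖ₑ := by
  have h1 : ∀ w, ‖F (w + δ) - F w‖ₑ ≤ ∫⁻ s in uIoc 0 δ, ‖F' (w + s)‖ₑ := by
    intro w
    have e : F (w + δ) - F w = ∫ s in (0:ℝ)..δ, F' (w + s) := by
      rw [intervalIntegral.integral_comp_add_left (fun s => F' s) w, add_zero,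
        intervalIntegral.integral_eq_sub_of_hasDerivAt (fun x _ => hF x)
          (hc.intervalIntegrable _ _)]
    rw [e, ← enorm_norm, intervalIntegral.norm_integral_eq_norm_integral_uIoc, enorm_norm]
    exact enorm_integral_le_lintegral_enorm _
  calc _ ≤ ∫⁻ w, ∫⁻ s in uIoc 0 δ, ‖F' (w + s)‖ₑ := lintegral_mono h1
    _ = ∫⁻ s in uIoc 0 δ, ∫⁻ w, ‖F' (w + s)‖ₑ := by
        rw [lintegral_lintegral_swap]
        apply Measurable.aemeasurable
        apply Measurable.enorm
        have := hc.measurable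
        fun_prop
    _ = ∫⁻ s in uIoc 0 δ, ∫⁻ w, ‖F' w‖ₑ := by
        congr 1; ext s
        exact lintegral_add_right_eq_self (fun w => ‖F' w‖ₑ) s
    _ = _ := by
        rw [setLIntegral_const, Set.uIoc, Real.volume_Ioc, max_sub_min_eq_abs, sub_zero, mul_comm]

lemma slope_L1 (F F' : ℝ → ℝ) (hF : ∀ y, HasDerivAt F (F' y) y) (hc : Continuous F') (h C : ℝ)
    (hC : ∀ s ∈ uIoc 0 h, ∫⁻ w, ‖F' (w + s) - F' w‖ₑ ≤ ENNReal.ofReal C) :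
    ∫⁻ w, ‖F (w + h) - F w - h * F' w‖ₑ ≤ ENNReal.ofReal |h| * ENNReal.ofReal C := by
  have h1 : ∀ w, ‖F (w + h) - F w - h * F' w‖ₑ ≤ ∫⁻ s in uIoc 0 h, ‖F' (w + s) - F' w‖ₑ := by
    intro w
    have e : F (w + h) - F w - h * F' w = ∫ s in (0:ℝ)..h, (F' (w + s) - F' w) := by
      rw [intervalIntegral.integral_sub, intervalIntegral.integral_comp_add_left (fun s => F' s) w, add_zero,
        intervalIntegral.integral_eq_sub_of_hasDerivAt (fun x _ => hF x)
          (hc.intervalIntegrable _ _)]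
      · simp
      · apply Continuous.intervalIntegrable; fun_prop
      · simp
    rw [e, ← enorm_norm, intervalIntegral.norm_integral_eq_norm_integral_uIoc, enorm_norm]
    exact enorm_integral_le_lintegral_enorm _
  calc _ ≤ ∫⁻ w, ∫⁻ s in uIoc 0 h, ‖F' (w + s) - F' w‖ₑ := lintegral_mono h1
    _ = ∫⁻ s in uIoc 0 h, ∫⁻ w, ‖F' (w + s) - F' w‖ₑ := by
        rw [lintegral_lintegral_swap]
        apply Measurable.aemeasurable
        apply Measurable.enorm
        have := hc.measurable
        fun_prop
    _ ≤ ∫⁻ s in uIoc 0 h, ENNReal.ofReal C := by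
        apply setLIntegral_mono measurable_const hC
    _ = _ := by
        rw [setLIntegral_const, Set.uIoc, Real.volume_Ioc, max_sub_min_eq_abs, sub_zero, mul_comm]

lemma le_of_sq_bound {a p q r : ℝ} (hp : a ≤ p) (hq : a ≤ q) (ha : 0 ≤ a) (hr : 0 ≤ r)
    (h : p * q ≤ r ^ 2) : a ≤ r := by
  nlinarith [mul_le_mul hp hq ha (ha.trans hp)]

lemma rpow_34 (v : ℝ) (hv : 0 < v) : (v ^ (-(3/4) : ℝ)) ^ 2 = v⁻¹ * (√v)⁻¹ := by
  rw [← Real.rpow_natCast, ← Real.rpow_mul hv.le, Real.sqrt_eq_rpow, ← Real.rpow_neg_one,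
    ← Real.rpow_neg hv.le, ← Real.rpow_add hv]
  norm_num

lemma gk1_modulus (v δ : ℝ) (hv : 0 < v) :
    ∫⁻ w, ‖gk1 v (w + δ) - gk1 v w‖ₑ ≤ ENNReal.ofReal (6 * √|δ| * v ^ (-(3/4) : ℝ)) := by
  have hsv : 0 < √v := Real.sqrt_pos.2 hv
  have a1 : ∫⁻ w, ‖gk1 v w‖ₑ ≤ ENNReal.ofReal (3 * (√v)⁻¹) := by
    rw [← ofReal_integral_norm_eq_lintegral_enorm (gk1_integrable v hv)]
    exact ENNReal.ofReal_le_ofReal (gk1_integral_le v hv)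
  have a2 : ∫⁻ w, ‖gk2 v w‖ₑ ≤ ENNReal.ofReal (6 * v⁻¹) := by
    rw [← ofReal_integral_norm_eq_lintegral_enorm (gk2_integrable v hv)]
    exact ENNReal.ofReal_le_ofReal (gk2_integral_le v hv)
  have b1 : ∫⁻ w, ‖gk1 v (w + δ) - gk1 v w‖ₑ ≤ ENNReal.ofReal (6 * (√v)⁻¹) := by
    calc _ ≤ ∫⁻ w, (‖gk1 v (w + δ)‖ₑ + ‖gk1 v w‖ₑ) := lintegral_mono fun w => enorm_sub_le
      _ = (∫⁻ w, ‖gk1 v (w + δ)‖ₑ) + ∫⁻ w, ‖gk1 v w‖ₑ :=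
        lintegral_add_right _ (gk1_cont v).measurable.enorm
      _ = (∫⁻ w, ‖gk1 v w‖ₑ) + ∫⁻ w, ‖gk1 v w‖ₑ := by
        rw [lintegral_add_right_eq_self (fun w => ‖gk1 v w‖ₑ) δ]
      _ ≤ ENNReal.ofReal (3 * (√v)⁻¹) + ENNReal.ofReal (3 * (√v)⁻¹) := by gcongr
      _ = _ := by rw [← ENNReal.ofReal_add (by positivity) (by positivity)]; congr 1; ring
  have b2 : ∫⁻ w, ‖gk1 v (w + δ) - gk1 v w‖ₑ ≤ ENNReal.ofReal (|δ| * (6 * v⁻¹)) := by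
    rw [ENNReal.ofReal_mul (abs_nonneg _)]
    exact (trans_L1 _ _ (gk1_hasDeriv v) (gk2_cont v) δ).trans (by gcongr)
  have hfin : ∫⁻ w, ‖gk1 v (w + δ) - gk1 v w‖ₑ ≠ ∞ := ne_top_of_le_ne_top ENNReal.ofReal_ne_top b1
  rw [ENNReal.le_ofReal_iff_toReal_le hfin (by positivity)] at b1 b2 ⊢
  refine le_of_sq_bound b1 b2 ENNReal.toReal_nonneg (by positivity) ?_
  rw [mul_pow, mul_pow, rpow_34 v hv, Real.sq_sqrt (abs_nonneg _)]
  apply le_of_eq; ring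

lemma gk_slope_L1 (v h x : ℝ) (hv : 0 < v) (hh : h ≠ 0) :
    ∫⁻ w, ‖(gk v (x + h - w) - gk v (x - w)) / h - gk1 v (x - w)‖ₑ
      ≤ ENNReal.ofReal (6 * √|h| * v ^ (-(3/4) : ℝ)) := by
  have e : ∀ w, ‖(gk v (x + h - w) - gk v (x - w)) / h - gk1 v (x - w)‖ₑ =
      ENNReal.ofReal (|h|⁻¹) * ‖gk v ((x - w) + h) - gk v (x - w) - h * gk1 v (x - w)‖ₑ := by
    intro w
    have : (gk v (x + h - w) - gk v (x - w)) / h - gk1 v (x - w) =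
      h⁻¹ * (gk v ((x - w) + h) - gk v (x - w) - h * gk1 v (x - w)) := by
      rw [show x + h - w = (x - w) + h by ring]; field_simp
    rw [this, enorm_mul, ← abs_inv, ← Real.enorm_eq_ofReal_abs]
  simp_rw [e]
  rw [lintegral_sub_left_eq_self (fun w => ENNReal.ofReal (|h|⁻¹) * ‖gk v (w + h) - gk v w - h * gk1 v w‖ₑ) x,
    lintegral_const_mul' _ _ ENNReal.ofReal_ne_top]
  have hp : 0 < |h| := abs_pos.2 hh
  have := slope_L1 (gk v) (gk1 v) (gk_hasDeriv v) (gk1_cont v) h (6 * √|h| * v ^ (-(3/4) : ℝ)) (by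
    intro s hs
    refine (gk1_modulus v s hv).trans (ENNReal.ofReal_le_ofReal ?_)
    have : |s| ≤ |h| := by
      rcases le_total 0 h with h0 | h0
      · rw [uIoc_of_le h0] at hs; rw [abs_of_pos hs.1, abs_of_nonneg h0]; exact hs.2
      · rw [uIoc_of_ge h0] at hs; rw [abs_of_nonpos hs.2, abs_of_nonpos h0]; linarith [hs.1]
    gcongr)
  calc _ ≤ ENNReal.ofReal (|h|⁻¹) * (ENNReal.ofReal |h| * ENNReal.ofReal (6 * √|h| * v ^ (-(3/4) : ℝ))) := by
        gcongr
    _ = _ := by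
        rw [← mul_assoc, ← ENNReal.ofReal_mul (by positivity), inv_mul_cancel₀ hp.ne']; simp

/-- L¹ bound on the difference of slopes. -/
lemma gk_slopes_L1 (v h k x y : ℝ) (hv : 0 < v) (hh : h ≠ 0) (hk : k ≠ 0) :
    ∫⁻ w, ‖(gk v (x + h - w) - gk v (x - w)) / h - (gk v (y + k - w) - gk v (y - w)) / k‖ₑ
      ≤ ENNReal.ofReal (6 * (√|h| + √|k| + √|x - y|) * v ^ (-(3/4) : ℝ)) := by
  have c1 := gk_cont v
  have c2 := gk1_cont v
  have m := gk1_modulus v (x - y) hv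
  rw [← lintegral_sub_left_eq_self _ y] at m
  have m' : ∫⁻ w, ‖gk1 v (x - w) - gk1 v (y - w)‖ₑ ≤ ENNReal.ofReal (6 * √|x - y| * v ^ (-(3/4) : ℝ)) := by
    refine le_trans (le_of_eq ?_) m
    congr 1; ext w; congr 3; ring
  calc _ ≤ ∫⁻ w, (‖(gk v (x + h - w) - gk v (x - w)) / h - gk1 v (x - w)‖ₑ +
          ‖(gk v (y + k - w) - gk v (y - w)) / k - gk1 v (y - w)‖ₑ + ‖gk1 v (x - w) - gk1 v (y - w)‖ₑ) := by
        apply lintegral_mono; intro w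
        have : (gk v (x + h - w) - gk v (x - w)) / h - (gk v (y + k - w) - gk v (y - w)) / k =
          ((gk v (x + h - w) - gk v (x - w)) / h - gk1 v (x - w)) -
          ((gk v (y + k - w) - gk v (y - w)) / k - gk1 v (y - w)) + (gk1 v (x - w) - gk1 v (y - w)) := by ring
        simp only
        rw [this]
        refine (enorm_add_le _ _).trans ?_
        gcongr
        exact enorm_sub_le
    _ = (∫⁻ w, ‖(gk v (x + h - w) - gk v (x - w)) / h - gk1 v (x - w)‖ₑ) +
          (∫⁻ w, ‖(gk v (y + k - w) - gk v (y - w)) / k - gk1 v (y - w)‖ₑ) +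
          ∫⁻ w, ‖gk1 v (x - w) - gk1 v (y - w)‖ₑ := by
        rw [lintegral_add_right, lintegral_add_right]
        · apply Measurable.enorm; apply Continuous.measurable; fun_prop
        · apply Measurable.enorm; apply Continuous.measurable; fun_prop
    _ ≤ ENNReal.ofReal (6 * √|h| * v ^ (-(3/4) : ℝ)) + ENNReal.ofReal (6 * √|k| * v ^ (-(3/4) : ℝ))
        + ENNReal.ofReal (6 * √|x - y| * v ^ (-(3/4) : ℝ)) := by
        gcongr
        · exact gk_slope_L1 v h x hv hh
        · exact gk_slope_L1 v k y hv hk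
    _ = _ := by
        rw [← ENNReal.ofReal_add (by positivity) (by positivity), ← ENNReal.ofReal_add (by positivity) (by positivity)]
        congr 1; ring

/-- Gronwall inequality in integral form. -/
lemma gronwall_int (f : ℝ → ℝ) (hf : Continuous f) (c K L : ℝ) (hK : 0 < K)
    (h0 : ∀ u ∈ Icc 0 L, 0 ≤ f u)
    (h : ∀ u ∈ Icc 0 L, f u ≤ c + K * ∫ r in (0:ℝ)..u, f r) :
    ∀ u ∈ Icc 0 L, f u ≤ c * rexp (K * u) := by
  intro u hu
  have hder : ∀ x, HasDerivAt (fun x => ∫ r in (0:ℝ)..x, f r) (f x) x := fun x =>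
    intervalIntegral.integral_hasDerivAt_right (hf.intervalIntegrable _ _)
      (hf.stronglyMeasurableAtFilter _ _) hf.continuousAt
  have hc : 0 ≤ c := by
    have h00 : (0:ℝ) ∈ Icc 0 L := ⟨le_rfl, hu.1.trans hu.2⟩
    have := h 0 h00
    have := h0 0 h00
    simp at *; linarith
  have key := norm_le_gronwallBound_of_norm_deriv_right_le (f := fun x => ∫ r in (0:ℝ)..x, f r)
    (f' := f) (δ := 0) (K := K) (ε := c) (a := 0) (b := L)
    (fun x _ => (hder x).continuousAt.continuousWithinAt) (fun x _ => (hder x).hasDerivWithinAt)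
    (by simp) (by
      intro x hx
      have hx' : x ∈ Icc 0 L := ⟨hx.1, hx.2.le⟩
      rw [Real.norm_of_nonneg (h0 x hx')]
      have := h x hx'
      have h2 : (∫ r in (0:ℝ)..x, f r) ≤ ‖∫ r in (0:ℝ)..x, f r‖ := le_norm_self _
      nlinarith) u hu
  rw [gronwallBound_of_K_ne_0 hK.ne'] at key
  have h2 : (∫ r in (0:ℝ)..u, f r) ≤ ‖∫ r in (0:ℝ)..u, f r‖ := le_norm_self _
  have h3 := h u hu
  simp only [sub_zero, zero_mul, zero_add] at key
  calc f u ≤ c + K * (c / K * (rexp (K * u) - 1)) := by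
        refine h3.trans ?_
        gcongr
        exact h2.trans key
    _ = _ := by field_simp; ring

section Flow
variable {S : Type*} [MeasurableSpace S]

/-- Picard iterates for the backward flow ending at `z` at time `t`. -/
def flowIt (a : ℝ → ℝ → ℝ) (β : ℝ → S → ℝ) (t : ℝ) : ℕ → S → ℝ → ℝ → ℝ
  | 0 => fun σ z s => z - β t σ + β s σ
  | (n + 1) => fun σ z s => z - β t σ + β s σ - ∫ r in Ioc s t, a r (flowIt a β t n σ z r)

/-- The properties of the backward flow. -/
structure IsFlow (a : ℝ → ℝ → ℝ) (β : ℝ → S → ℝ) (K T t : ℝ) (θ : S → ℝ → ℝ → ℝ) : Prop where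
  meas : Measurable fun p : S × ℝ × ℝ => θ p.1 p.2.1 p.2.2
  cont : ∀ σ z, Continuous (θ σ z)
  integ : ∀ σ z, Integrable fun r => a r (θ σ z r)
  eqn : ∀ σ z s, θ σ z s = z - β t σ + β s σ - ∫ r in Ioc s t, a r (θ σ z r)
  lip : ∀ σ z z', ∀ s ∈ Icc 0 t, |θ σ z s - θ σ z' s| ≤ rexp (K * T) * |z - z'|
  anti : ∀ σ z z', ∀ s ∈ Icc 0 t, |z - z'| ≤ rexp (K * T) * |θ σ z s - θ σ z' s|
  close : ∀ σ z z', ∀ s ∈ Icc 0 t,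
    |(z - θ σ z s) - (z' - θ σ z' s)| ≤ K * rexp (K * T) * (t - s) * |z - z'|

lemma aint (a : ℝ → ℝ → ℝ) (ha : Measurable fun p : ℝ × ℝ => a p.1 p.2) (T C : ℝ)
    (hT : ∀ r x, r ∉ Icc 0 T → a r x = 0) (hC : 0 ≤ C) (hg : ∀ r x, |a r x| ≤ C * (1 + |x|))
    (f : ℝ → ℝ) (hf : Measurable f) (M : ℝ) (hM : ∀ r ∈ Icc 0 T, |f r| ≤ M) :
    Integrable (fun r => a r (f r)) ∧ ∀ s t, |∫ r in Ioc s t, a r (f r)| ≤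
      ∫ r, (Icc 0 T).indicator (fun _ => C * (1 + M)) r := by
  have hb : ∀ r, ‖a r (f r)‖ ≤ (Icc 0 T).indicator (fun _ => C * (1 + M)) r := by
    intro r
    by_cases hr : r ∈ Icc 0 T
    · rw [indicator_of_mem hr, Real.norm_eq_abs]
      refine (hg _ _).trans ?_
      have := hM r hr
      gcongr
    · rw [hT _ _ hr, indicator_of_notMem hr]; simp
  have hi : Integrable ((Icc 0 T).indicator (fun _ => C * (1 + M))) (volume : Measure ℝ) := by
    rw [integrable_indicator_iff measurableSet_Icc]
    exact integrableOn_const (by simp)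
  have hfi : Integrable (fun r => a r (f r)) := by
    refine Integrable.mono' hi ?_ (ae_of_all _ hb)
    exact (ha.comp (measurable_id.prodMk hf)).aestronglyMeasurable
  refine ⟨hfi, fun s t => ?_⟩
  rw [← Real.norm_eq_abs]
  refine (norm_integral_le_integral_norm _).trans ?_
  refine (setIntegral_le_integral hfi.norm (ae_of_all _ fun _ => norm_nonneg _)).trans ?_
  exact integral_mono hfi.norm hi hb

theorem flow_exists (a : ℝ → ℝ → ℝ) (ha : Measurable fun p : ℝ × ℝ => a p.1 p.2) (T C K : ℝ)
    (hT : ∀ r x, r ∉ Icc 0 T → a r x = 0) (hC : 0 ≤ C) (hg : ∀ r x, |a r x| ≤ C * (1 + |x|))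
    (hK : 0 < K) (hlip : ∀ r x y, |a r x - a r y| ≤ K * |x - y|)
    (β : ℝ → S → ℝ) (hβm : ∀ s, Measurable (β s)) (hβc : ∀ σ, Continuous fun s => β s σ)
    (t : ℝ) (htT : t ≤ T) : ∃ θ : S → ℝ → ℝ → ℝ, IsFlow a β K T t θ := by
  classical
  have hβj : Measurable (fun p : ℝ × S => β p.1 p.2) :=
    measurable_uncurry_of_continuous_of_measurable hβc hβm
  -- measurability of iterates
  have hm : ∀ n, Measurable fun p : S × ℝ × ℝ => flowIt a β t n p.1 p.2.1 p.2.2 := by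
    have h0 : Measurable fun p : S × ℝ × ℝ => p.2.1 - β t p.1 + β p.2.2 p.1 := by
      have h1 : Measurable fun p : S × ℝ × ℝ => β p.2.2 p.1 :=
        hβj.comp ((measurable_snd.comp measurable_snd).prodMk measurable_fst)
      have h2 : Measurable fun p : S × ℝ × ℝ => β t p.1 := (hβm t).comp measurable_fst
      fun_prop
    intro n
    induction n with
    | zero => exact h0
    | succ n ih =>
      simp only [flowIt]
      refine h0.sub ?_
      have e : (fun p : S × ℝ × ℝ => ∫ r in Ioc p.2.2 t, a r (flowIt a β t n p.1 p.2.1 r)) =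
          fun p : S × ℝ × ℝ => ∫ r, (if p.2.2 < r ∧ r ≤ t then a r (flowIt a β t n p.1 p.2.1 r) else 0) := by
        ext p
        rw [← integral_indicator measurableSet_Ioc]
        congr 1
        ext r
        simp only [indicator, mem_Ioc]
      rw [e]
      refine (StronglyMeasurable.integral_prod_right' (f := fun q : (S × ℝ × ℝ) × ℝ =>
        if q.1.2.2 < q.2 ∧ q.2 ≤ t then a q.2 (flowIt a β t n q.1.1 q.1.2.1 q.2) else 0) ?_).measurable
      apply Measurable.stronglyMeasurable
      apply Measurable.ite
      · have k1 : MeasurableSet {q : (S × ℝ × ℝ) × ℝ | q.1.2.2 < q.2} :=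
          measurableSet_lt (by fun_prop) (by fun_prop)
        have k2 : MeasurableSet {q : (S × ℝ × ℝ) × ℝ | q.2 ≤ t} :=
          measurableSet_le (by fun_prop) (by fun_prop)
        exact k1.inter k2
      · refine ha.comp (measurable_snd.prodMk ?_)
        exact ih.comp (((by fun_prop : Measurable fun q : (S × ℝ × ℝ) × ℝ => (q.1.1, q.1.2.1, q.2))))
      · exact measurable_const
  have hmz : ∀ n σ z, Measurable (flowIt a β t n σ z) := by
    intro n σ z
    exact (hm n).comp (by fun_prop : Measurable fun s : ℝ => (σ, z, s))
  -- boundedness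
  have hb0 : ∀ σ z, ∃ M, ∀ r ∈ Icc 0 T, |z - β t σ + β r σ| ≤ M := by
    intro σ z
    have hc : Continuous fun r => z - β t σ + β r σ := by have := hβc σ; fun_prop
    obtain ⟨M, hM⟩ := (isCompact_Icc (a := (0:ℝ)) (b := T)).exists_bound_of_continuousOn hc.continuousOn
    exact ⟨M, hM⟩
  have hbn : ∀ n σ z, ∃ M, ∀ r ∈ Icc 0 T, |flowIt a β t n σ z r| ≤ M := by
    intro n σ z
    induction n with
    | zero => exact hb0 σ z
    | succ n ih =>
      obtain ⟨M, hM⟩ := ih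
      obtain ⟨M0, hM0⟩ := hb0 σ z
      refine ⟨M0 + ∫ r, (Icc 0 T).indicator (fun _ => C * (1 + M)) r, fun r hr => ?_⟩
      simp only [flowIt]
      refine (abs_sub _ _).trans (add_le_add (hM0 r hr) ((aint a ha T C hT hC hg _ (hmz n σ z) M hM).2 r t))
  have hai : ∀ n σ z, Integrable fun r => a r (flowIt a β t n σ z r) := by
    intro n σ z
    obtain ⟨M, hM⟩ := hbn n σ z
    exact (aint a ha T C hT hC hg _ (hmz n σ z) M hM).1
  -- geometric bound
  have hgeo : ∀ σ z, ∃ A, 0 ≤ A ∧ ∀ n s, |flowIt a β t (n+1) σ z s - flowIt a β t n σ z s| ≤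
      A * rexp (2 * K * |t - s|) / 2 ^ n := by
    intro σ z
    obtain ⟨M, hM⟩ := hbn 0 σ z
    set A := ∫ r, (Icc 0 T).indicator (fun _ => C * (1 + M)) r with hA
    have hA0 : 0 ≤ A := (abs_nonneg _).trans ((aint a ha T C hT hC hg _ (hmz 0 σ z) M hM).2 0 0)
    refine ⟨A, hA0, fun n => ?_⟩
    induction n with
    | zero =>
      intro s
      have h1 := (aint a ha T C hT hC hg _ (hmz 0 σ z) M hM).2 s t
      have h2 : 1 ≤ rexp (2 * K * |t - s|) := Real.one_le_exp (by positivity)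
      have h3 : flowIt a β t (0+1) σ z s - flowIt a β t 0 σ z s =
          -∫ r in Ioc s t, a r (flowIt a β t 0 σ z r) := by
        simp only [flowIt]; ring
      rw [h3, abs_neg]
      simp only [pow_zero, div_one]
      nlinarith
    | succ n ih =>
      intro s
      have h3 : flowIt a β t (n+1+1) σ z s - flowIt a β t (n+1) σ z s =
          -∫ r in Ioc s t, (a r (flowIt a β t (n+1) σ z r) - a r (flowIt a β t n σ z r)) := by
        rw [integral_sub (hai (n+1) σ z).integrableOn (hai n σ z).integrableOn]
        simp only [flowIt]; ring
      rw [h3, abs_neg]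
      rcases le_or_gt t s with hts | hts
      · rw [Ioc_eq_empty (by simpa using hts)]; simp; positivity
      · have h4 : |∫ r in Ioc s t, (a r (flowIt a β t (n+1) σ z r) - a r (flowIt a β t n σ z r))| ≤
            ∫ r in Ioc s t, K * (A * rexp (2 * K * (t - r)) / 2 ^ n) := by
          rw [← Real.norm_eq_abs]
          refine norm_integral_le_of_norm_le ?_ ?_
          · apply Continuous.integrableOn_Ioc; fun_prop
          · filter_upwards [ae_restrict_mem measurableSet_Ioc] with r hr
            refine (hlip _ _ _).trans ?_
            have := ih r
            rw [abs_of_nonneg (by linarith [hr.2] : 0 ≤ t - r)] at this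
            gcongr
        refine h4.trans ?_
        rw [abs_of_pos (by linarith : 0 < t - s), ← intervalIntegral.integral_of_le hts.le]
        have hd : ∀ r : ℝ, HasDerivAt (fun r => -(A / 2 ^ (n+1) * rexp (2 * K * (t - r))))
            (K * (A * rexp (2 * K * (t - r)) / 2 ^ n)) r := by
          intro r
          have h5 : HasDerivAt (fun r => 2 * K * (t - r)) (2 * K * (-1)) r :=
            ((hasDerivAt_id r).const_sub t).const_mul (2 * K)
          refine ((h5.exp.const_mul (A / 2 ^ (n+1))).neg).congr_deriv ?_
          rw [pow_succ]; field_simp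
        rw [intervalIntegral.integral_eq_sub_of_hasDerivAt (fun r _ => hd r)
          (by apply Continuous.intervalIntegrable; fun_prop)]
        simp only [sub_self, mul_zero, Real.exp_zero, mul_one]
        have : 0 ≤ A / 2 ^ (n+1) := by positivity
        have e : A * rexp (2 * K * (t - s)) / 2 ^ (n + 1) = A / 2 ^ (n+1) * rexp (2 * K * (t - s)) := by ring
        rw [e]; linarith
  choose A hA0 hA using hgeo
  have hdist : ∀ σ z s n, dist (flowIt a β t n σ z s) (flowIt a β t (n+1) σ z s) ≤
      (2 * A σ z * rexp (2 * K * |t - s|)) / 2 / 2 ^ n := by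
    intro σ z s n
    rw [dist_comm, Real.dist_eq]
    refine (hA σ z n s).trans (le_of_eq ?_); ring
  have hlim : ∀ σ z s, ∃ l, Filter.Tendsto (fun n => flowIt a β t n σ z s) Filter.atTop (nhds l) :=
    fun σ z s => cauchySeq_tendsto_of_complete (cauchySeq_of_le_geometric_two (hdist σ z s))
  choose θ hθ using hlim
  have hrate : ∀ σ z s n, |flowIt a β t n σ z s - θ σ z s| ≤ (2 * A σ z * rexp (2 * K * |t - s|)) / 2 ^ n := by
    intro σ z s n
    rw [← Real.dist_eq]
    exact dist_le_of_le_geometric_two_of_tendsto (hdist σ z s) (hθ σ z s) n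
  have hθm : Measurable fun p : S × ℝ × ℝ => θ p.1 p.2.1 p.2.2 := by
    refine measurable_of_tendsto_metrizable hm ?_
    rw [tendsto_pi_nhds]
    intro p; exact hθ _ _ _
  have hθmz : ∀ σ z, Measurable (θ σ z) := fun σ z =>
    hθm.comp (by fun_prop : Measurable fun s : ℝ => (σ, z, s))
  have hexpb : ∀ r ∈ Icc 0 T, rexp (2 * K * |t - r|) ≤ rexp (2 * K * (|t| + T)) := by
    intro r hr
    have : |t - r| ≤ |t| + T := by
      refine (abs_sub _ _).trans ?_
      rw [abs_of_nonneg hr.1]; linarith [hr.2]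
    gcongr
  have hθb : ∀ σ z, ∃ M, ∀ r ∈ Icc 0 T, |θ σ z r| ≤ M := by
    intro σ z
    obtain ⟨M, hM⟩ := hbn 0 σ z
    refine ⟨M + 2 * A σ z * rexp (2 * K * (|t| + T)), fun r hr => ?_⟩
    have h1 := hrate σ z r 0
    have h2 := hM r hr
    have h3 := hexpb r hr
    have h4 : 2 * A σ z * rexp (2 * K * |t - r|) ≤ 2 * A σ z * rexp (2 * K * (|t| + T)) := by
      have := hA0 σ z
      gcongr
    simp only [pow_zero, div_one] at h1
    have h5 : |θ σ z r| ≤ |flowIt a β t 0 σ z r| + |flowIt a β t 0 σ z r - θ σ z r| := by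
      have := abs_sub (flowIt a β t 0 σ z r) (flowIt a β t 0 σ z r - θ σ z r)
      simpa using this
    linarith
  have hθi : ∀ σ z, Integrable fun r => a r (θ σ z r) := by
    intro σ z
    obtain ⟨M, hM⟩ := hθb σ z
    exact (aint a ha T C hT hC hg _ (hθmz σ z) M hM).1
  have heqn : ∀ σ z s, θ σ z s = z - β t σ + β s σ - ∫ r in Ioc s t, a r (θ σ z r) := by
    intro σ z s
    have h1 := (Filter.tendsto_add_atTop_iff_nat 1).2 (hθ σ z s)
    refine tendsto_nhds_unique h1 ?_
    simp only [flowIt]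
    refine Filter.Tendsto.sub tendsto_const_nhds ?_
    rw [tendsto_iff_norm_sub_tendsto_zero]
    set B := 2 * A σ z * rexp (2 * K * (|t| + T)) with hB
    have hB0 : 0 ≤ B := by have := hA0 σ z; positivity
    refine squeeze_zero (fun _ => norm_nonneg _) (g := fun n => (∫ r, (Icc 0 T).indicator (fun _ => K * B) r) * (1/2) ^ n) ?_ ?_
    · intro n
      rw [← integral_sub (hai n σ z).integrableOn (hθi σ z).integrableOn]
      refine (norm_integral_le_integral_norm _).trans ?_
      refine (setIntegral_le_integral ((hai n σ z).sub (hθi σ z)).norm (ae_of_all _ fun _ => norm_nonneg _)).trans ?_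
      rw [← integral_mul_const]
      refine integral_mono ((hai n σ z).sub (hθi σ z)).norm ?_ ?_
      · apply Integrable.mul_const
        rw [integrable_indicator_iff measurableSet_Icc]
        exact integrableOn_const (by simp)
      · intro r
        show ‖a r (flowIt a β t n σ z r) - a r (θ σ z r)‖ ≤
          (Icc 0 T).indicator (fun _ => K * B) r * (1/2) ^ n
        by_cases hr : r ∈ Icc 0 T
        · rw [indicator_of_mem hr]
          refine (hlip _ _ _).trans ?_
          rw [mul_assoc]
          gcongr
          refine (hrate σ z r n).trans ?_
          rw [one_div, inv_pow, div_eq_mul_inv]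
          have := hA0 σ z
          have := hexpb r hr
          rw [hB]
          gcongr
        · rw [hT _ _ hr, hT _ _ hr, indicator_of_notMem hr]; simp
    · have := tendsto_pow_atTop_nhds_zero_of_lt_one (r := (1/2:ℝ)) (by norm_num) (by norm_num)
      simpa using this.const_mul (∫ r, (Icc 0 T).indicator (fun _ => K * B) r)
  have hcont : ∀ σ z, Continuous (θ σ z) := by
    intro σ z
    have h2 : Continuous fun s => ∫ r in Ioc s t, a r (θ σ z r) := by
      have e : (fun s => ∫ r in Ioc s t, a r (θ σ z r)) =
          fun s => - ∫ r in t..(min s t), a r (θ σ z r) := by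
        ext s
        rcases le_total s t with h | h
        · rw [min_eq_left h, intervalIntegral.integral_symm, neg_neg, intervalIntegral.integral_of_le h]
        · rw [min_eq_right h, Ioc_eq_empty (by simpa using h)]; simp
      rw [e]
      have := intervalIntegral.continuous_primitive (μ := volume) (fun a b => (hθi σ z).intervalIntegrable (a := a) (b := b)) t
      exact (this.comp (continuous_id.min continuous_const)).neg
    have : θ σ z = fun s => z - β t σ + β s σ - ∫ r in Ioc s t, a r (θ σ z r) := by
      ext s; exact heqn σ z s
    rw [this]
    have := hβc σ
    fun_prop
  -- difference
  have hdiff : ∀ σ z z' s, (θ σ z s - θ σ z' s) = (z - z') - ∫ r in Ioc s t, (a r (θ σ z r) - a r (θ σ z' r)) := by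
    intro σ z z' s
    rw [integral_sub (hθi σ z).integrableOn (hθi σ z').integrableOn, heqn σ z s, heqn σ z' s]; ring
  have hdc : ∀ σ z z', Continuous fun r => |θ σ z r - θ σ z' r| := by
    intro σ z z'
    have := hcont σ z
    have := hcont σ z'
    fun_prop
  have hintg : ∀ σ z z' s s', |∫ r in Ioc s s', (a r (θ σ z r) - a r (θ σ z' r))| ≤
      K * ∫ r in Ioc s s', |θ σ z r - θ σ z' r| := by
    intro σ z z' s s'
    rw [← Real.norm_eq_abs, ← integral_const_mul]
    refine norm_integral_le_of_norm_le ?_ (ae_of_all _ fun r => hlip _ _ _)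
    apply Continuous.integrableOn_Ioc
    exact (hdc σ z z').const_mul K
  have hup : ∀ σ z z', ∀ s ∈ Icc 0 t, |θ σ z s - θ σ z' s| ≤ rexp (K * T) * |z - z'| := by
    intro σ z z' s hs
    have := gronwall_int (fun u => |θ σ z (t - u) - θ σ z' (t - u)|)
      ((hdc σ z z').comp (continuous_const.sub continuous_id)) |z - z'| K t hK
      (fun _ _ => abs_nonneg _) (by
        intro u hu
        rw [intervalIntegral.integral_comp_sub_left (fun r => |θ σ z r - θ σ z' r|) t, sub_zero,
          intervalIntegral.integral_of_le (by linarith [hu.1]), hdiff]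
        exact (abs_sub _ _).trans (by gcongr; exact hintg σ z z' _ _)) (t - s) ⟨by linarith [hs.2], by linarith [hs.1]⟩
    simp only [sub_sub_cancel] at this
    refine this.trans ?_
    rw [mul_comm]
    have : t - s ≤ T := by linarith [hs.1]
    gcongr
  refine ⟨θ, hθm, hcont, hθi, heqn, hup, ?_, ?_⟩
  · intro σ z z' s hs
    have := gronwall_int (fun u => |θ σ z (s + u) - θ σ z' (s + u)|)
      ((hdc σ z z').comp (continuous_const.add continuous_id)) |θ σ z s - θ σ z' s| K (t - s) hK
      (fun _ _ => abs_nonneg _) (by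
        intro u hu
        rw [intervalIntegral.integral_comp_add_left (fun r => |θ σ z r - θ σ z' r|) s, add_zero,
          intervalIntegral.integral_of_le (by linarith [hu.1])]
        have e : θ σ z (s + u) - θ σ z' (s + u) = (θ σ z s - θ σ z' s) +
            ∫ r in Ioc s (s + u), (a r (θ σ z r) - a r (θ σ z' r)) := by
          rw [hdiff σ z z' s, hdiff σ z z' (s + u)]
          have hii : Integrable (fun r => a r (θ σ z r) - a r (θ σ z' r)) := (hθi σ z).sub (hθi σ z')
          have : ∫ r in Ioc s t, (a r (θ σ z r) - a r (θ σ z' r)) =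
            (∫ r in Ioc s (s + u), (a r (θ σ z r) - a r (θ σ z' r))) + ∫ r in Ioc (s+u) t, (a r (θ σ z r) - a r (θ σ z' r)) := by
            rw [← setIntegral_union (Ioc_disjoint_Ioc_of_le le_rfl) measurableSet_Ioc hii.integrableOn hii.integrableOn,
              Ioc_union_Ioc_eq_Ioc (by linarith [hu.1]) (by linarith [hu.2])]
          rw [this]; ring
        rw [e]
        exact (abs_add_le _ _).trans (by gcongr; exact hintg σ z z' _ _)) (t - s) ⟨by linarith [hs.2], le_rfl⟩
    have et : ∀ z, θ σ z (s + (t - s)) = z := by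
      intro z
      rw [show s + (t - s) = t by ring, heqn]; simp
    simp only [et] at this
    refine this.trans ?_
    rw [mul_comm]
    have : t - s ≤ T := by linarith [hs.1]
    gcongr
  · intro σ z z' s hs
    have e : (z - θ σ z s) - (z' - θ σ z' s) = ∫ r in Ioc s t, (a r (θ σ z r) - a r (θ σ z' r)) := by
      have := hdiff σ z z' s
      linarith
    rw [e]
    refine (hintg σ z z' s t).trans ?_
    have : ∫ r in Ioc s t, |θ σ z r - θ σ z' r| ≤ ∫ r in Ioc s t, rexp (K * T) * |z - z'| := by
      refine setIntegral_mono_on (hdc σ z z').integrableOn_Ioc (integrableOn_const (by simp)) measurableSet_Ioc ?_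
      intro r hr
      exact hup σ z z' r ⟨by linarith [hr.1, hs.1], hr.2⟩
    rw [setIntegral_const, Real.volume_real_Ioc_of_le hs.2, smul_eq_mul] at this
    calc _ ≤ K * ((t - s) * (rexp (K * T) * |z - z'|)) := by gcongr
      _ = _ := by ring
end Flow

lemma push_le (g : ℝ → ℝ) (hg : Measurable g) (L : ℝ)
    (h : ∀ z z', |z - z'| ≤ L * |g z - g z'|) (F : ℝ → ℝ≥0∞) (hF : Measurable F) :
    ∫⁻ z, F (g z) ≤ ENNReal.ofReal L * ∫⁻ y, F y := by
  have ha : AntilipschitzWith L.toNNReal g := by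
    refine AntilipschitzWith.of_le_mul_dist fun x y => ?_
    rw [Real.dist_eq, Real.dist_eq]
    refine (h x y).trans ?_
    gcongr
    exact Real.le_coe_toNNReal L
  have hle : (volume : Measure ℝ).map g ≤ ENNReal.ofReal L • volume := by
    refine Measure.le_iff.2 fun s hs => ?_
    rw [Measure.map_apply hg hs]
    have := ha.hausdorffMeasure_preimage_le (d := 1) zero_le_one s
    rw [hausdorffMeasure_real] at this
    simpa [ENNReal.ofReal] using this
  rw [← lintegral_map hF hg]
  refine (lintegral_mono' hle le_rfl).trans ?_
  rw [lintegral_smul_measure, smul_eq_mul]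

lemma riemann_ito (τ : ℝ) (hτ : 0 < τ) (F F1 : ℝ → ℝ → ℝ)
    (hF : ∀ s ∈ Icc 0 τ, ∀ y, HasDerivAt (F s) (F1 s y) y)
    (hF1 : ContinuousOn (fun p : ℝ × ℝ => F1 p.1 p.2) (Icc 0 τ ×ˢ univ))
    (d D : ℝ → ℝ) (hd : IntervalIntegrable d volume 0 τ) (hD : Continuous D) :
    Filter.Tendsto (fun n : ℕ => ∑ i ∈ Finset.range (n+1),
      (F ((i+1 : ℕ) * (τ / (n+1))) (D ((i+1 : ℕ) * (τ / (n+1)))) -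
       F ((i+1 : ℕ) * (τ / (n+1))) (D ((i+1 : ℕ) * (τ / (n+1))) -
        ∫ r in (i:ℕ) * (τ / (n+1))..(i+1 : ℕ) * (τ / (n+1)), d r))) Filter.atTop
      (nhds (∫ r in (0:ℝ)..τ, d r * F1 r (D r))) := by
  obtain ⟨R, hR⟩ := (isCompact_Icc (a := (0:ℝ)) (b := τ)).exists_bound_of_continuousOn hD.continuousOn
  set Q := ∫ r in (0:ℝ)..τ, |d r| with hQ
  have hQ0 : 0 ≤ Q := intervalIntegral.integral_nonneg hτ.le fun _ _ => abs_nonneg _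
  have hF1D : ContinuousOn (fun r => F1 r (D r)) (Icc 0 τ) := by
    refine hF1.comp (f := fun r => (r, D r)) (by fun_prop) ?_
    intro r hr; exact ⟨hr, mem_univ _⟩
  have hdF : IntervalIntegrable (fun r => d r * F1 r (D r)) volume 0 τ := by
    apply hd.mul_continuousOn; rwa [uIcc_of_le hτ.le]
  have hda : IntervalIntegrable (fun r => |d r|) volume 0 τ := hd.abs
  have sub : ∀ {f : ℝ → ℝ}, IntervalIntegrable f volume 0 τ → ∀ p q, 0 ≤ p → p ≤ q → q ≤ τ →
      IntervalIntegrable f volume p q := by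
    intro f hf p q hp hpq hq
    apply hf.mono_set
    rw [uIcc_of_le hpq, uIcc_of_le hτ.le]; exact Icc_subset_Icc hp hq
  rw [Metric.tendsto_atTop]
  intro ε hε
  set ε' := ε / (2 * (Q + 1)) with hε'
  have hε'0 : 0 < ε' := by positivity
  have hcpt : IsCompact (Icc 0 τ ×ˢ Icc (-(R+Q)) (R+Q)) := isCompact_Icc.prod isCompact_Icc
  have huc := hcpt.uniformContinuousOn_of_continuous (hF1.mono (prod_mono le_rfl (subset_univ _)))
  rw [Metric.uniformContinuousOn_iff] at huc
  obtain ⟨δ, hδ, huc⟩ := huc ε' hε'0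
  have hDu := (isCompact_Icc (a := (0:ℝ)) (b := τ)).uniformContinuousOn_of_continuous hD.continuousOn
  rw [Metric.uniformContinuousOn_iff] at hDu
  obtain ⟨η1, hη1, hDu⟩ := hDu (δ/2) (by positivity)
  have hPc : ContinuousOn (fun s => ∫ r in (0:ℝ)..s, |d r|) (Icc 0 τ) := by
    have := intervalIntegral.continuousOn_primitive_interval' (a := 0) hda (by simp)
    rwa [uIcc_of_le hτ.le] at this
  have hPu := (isCompact_Icc (a := (0:ℝ)) (b := τ)).uniformContinuousOn_of_continuous hPc
  rw [Metric.uniformContinuousOn_iff] at hPu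
  obtain ⟨η2, hη2, hPu⟩ := hPu (δ/2) (by positivity)
  set η := min (min η1 η2) δ with hη
  have hη0 : 0 < η := by positivity
  obtain ⟨N, hN⟩ := exists_nat_gt (τ / η)
  refine ⟨N, fun n hn => ?_⟩
  set m := τ / ((n:ℝ)+1) with hm
  have hm0 : 0 < m := by positivity
  have hmη : m < η := by
    rw [hm, div_lt_iff₀ (by positivity)]
    rw [div_lt_iff₀ hη0] at hN
    have : (N:ℝ) ≤ n := by exact_mod_cast hn
    nlinarith
  have hmτ : ((n+1:ℕ):ℝ) * m = τ := by rw [hm]; push_cast; field_simp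
  have hs0 : ∀ i : ℕ, 0 ≤ (i:ℝ) * m := fun i => by positivity
  have hsτ : ∀ i : ℕ, i ≤ n + 1 → (i:ℝ) * m ≤ τ := by
    intro i hi
    rw [← hmτ]; gcongr
  have hss : ∀ i : ℕ, ((i+1:ℕ):ℝ) * m = i * m + m := by intro i; push_cast; ring
  have hadj : ∀ {f : ℝ → ℝ}, IntervalIntegrable f volume 0 τ →
      ∫ r in (0:ℝ)..τ, f r = ∑ i ∈ Finset.range (n+1), ∫ r in (i:ℕ) * m..(i+1 : ℕ) * m, f r := by
    intro f hf
    have := intervalIntegral.sum_integral_adjacent_intervals (f := f) (μ := volume) (a := fun i : ℕ => (i:ℝ) * m) (n := n+1)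
      (fun k hk => sub hf _ _ (hs0 k) (by rw [hss]; linarith) (hsτ _ hk))
    rw [this, hmτ]; simp
  rw [Real.dist_eq, hadj hdF, ← Finset.sum_sub_distrib]
  have hterm : ∀ i ∈ Finset.range (n+1), |(F ((i+1 : ℕ) * m) (D ((i+1 : ℕ) * m)) -
       F ((i+1 : ℕ) * m) (D ((i+1 : ℕ) * m) - ∫ r in (i:ℕ) * m..(i+1 : ℕ) * m, d r)) -
       ∫ r in (i:ℕ) * m..(i+1 : ℕ) * m, d r * F1 r (D r)| ≤ ε' * ∫ r in (i:ℕ) * m..(i+1 : ℕ) * m, |d r| := by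
    intro i hi
    rw [Finset.mem_range] at hi
    set p := (i:ℝ) * m with hp
    have e : ((i+1:ℕ):ℝ) * m = p + m := hss i
    have hq' := hsτ (i+1) hi
    rw [e] at hq' ⊢
    set q := p + m with hq
    have hp0 : 0 ≤ p := hs0 i
    have hpq : p ≤ q := by linarith
    have hqI : q ∈ Icc 0 τ := ⟨by linarith, hq'⟩
    have hpI : p ∈ Icc 0 τ := ⟨hp0, by linarith⟩
    set Δ := ∫ r in p..q, d r with hΔ
    have hΔle : |Δ| ≤ ∫ r in p..q, |d r| := intervalIntegral.abs_integral_le_integral_abs hpq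
    have hPd : (∫ r in p..q, |d r|) = (∫ r in (0:ℝ)..q, |d r|) - ∫ r in (0:ℝ)..p, |d r| := by
      rw [intervalIntegral.integral_interval_sub_left (sub hda _ _ le_rfl hqI.1 hqI.2) (sub hda _ _ le_rfl hpI.1 hpI.2)]
    have hΔδ : |Δ| < δ / 2 := by
      refine hΔle.trans_lt ?_
      have := hPu q hqI p hpI (by
        rw [Real.dist_eq, show q - p = m by rw [hq]; ring, abs_of_pos hm0]
        exact hmη.trans_le ((min_le_left _ _).trans (min_le_right _ _)))
      rw [Real.dist_eq, ← hPd] at this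
      exact (le_abs_self _).trans_lt this
    have hΔQ : |Δ| ≤ Q := by
      refine hΔle.trans ?_
      exact intervalIntegral.integral_mono_interval hp0 hpq hq' (ae_of_all _ fun _ => abs_nonneg _) hda
    -- mean value
    obtain ⟨c, hc1, hc2⟩ : ∃ c, |c - D q| ≤ |Δ| ∧ F q (D q) - F q (D q - Δ) = Δ * F1 q c := by
      rcases lt_trichotomy Δ 0 with h | h | h
      · obtain ⟨c, hc, hc'⟩ := exists_hasDerivAt_eq_slope (F q) (F1 q) (a := D q) (b := D q - Δ) (by linarith)
          (fun y _ => (hF q hqI y).continuousAt.continuousWithinAt) (fun y _ => hF q hqI y)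
        refine ⟨c, ?_, ?_⟩
        · rw [abs_of_neg h, abs_of_pos (by linarith [hc.1])]; linarith [hc.2]
        · have : D q - Δ - D q = -Δ := by ring
          rw [this] at hc'; rw [hc']; field_simp [h.ne]; ring
      · exact ⟨D q, by simp, by simp [h]⟩
      · obtain ⟨c, hc, hc'⟩ := exists_hasDerivAt_eq_slope (F q) (F1 q) (a := D q - Δ) (b := D q) (by linarith)
          (fun y _ => (hF q hqI y).continuousAt.continuousWithinAt) (fun y _ => hF q hqI y)
        refine ⟨c, ?_, ?_⟩
        · rw [abs_of_pos h, abs_of_neg (by linarith [hc.2])]; linarith [hc.1]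
        · have : D q - (D q - Δ) = Δ := by ring
          rw [this] at hc'; rw [hc']; field_simp [h.ne']
    have hDI : ∀ r ∈ Icc 0 τ, |D r| ≤ R := hR
    have hcI : (q, c) ∈ Icc 0 τ ×ˢ Icc (-(R+Q)) (R+Q) := by
      refine ⟨hqI, ?_⟩
      rw [mem_Icc, ← abs_le]
      have := hDI q hqI
      have h2 : |c| ≤ |c - D q| + |D q| := by simpa using abs_add_le (c - D q) (D q)
      linarith
    have hpt : ∀ r ∈ Icc p q, |F1 q c - F1 r (D r)| ≤ ε' := by
      intro r hr
      have hrI : r ∈ Icc 0 τ := ⟨hp0.trans hr.1, hr.2.trans hq'⟩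
      have hrq : dist q r < η := by
        rw [Real.dist_eq, abs_of_nonneg (by linarith [hr.2])]
        have : q = p + m := hq
        linarith [hr.1]
      have := huc (q, c) hcI (r, D r) ⟨hrI, by
        rw [mem_Icc, ← abs_le]; have := hDI r hrI; linarith⟩ (by
        rw [Prod.dist_eq]
        refine max_lt (hrq.trans_le (min_le_right _ _)) ?_
        have h1 := hDu q hqI r hrI (hrq.trans_le ((min_le_left _ _).trans (min_le_left _ _)))
        have h2 : dist c (D q) < δ / 2 := by rw [Real.dist_eq]; linarith
        have := dist_triangle c (D q) (D r)
        simp only at *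
        linarith)
      rw [Real.dist_eq] at this
      exact this.le
    rw [hc2, hΔ, ← intervalIntegral.integral_mul_const, ← intervalIntegral.integral_sub
      ((sub hd _ _ hp0 hpq hq').mul_const _) (sub hdF _ _ hp0 hpq hq'),
      ← intervalIntegral.integral_const_mul, ← Real.norm_eq_abs]
    refine intervalIntegral.norm_integral_le_of_norm_le hpq ?_ ((sub hda _ _ hp0 hpq hq').const_mul _)
    refine ae_of_all _ fun r hr => ?_
    rw [← mul_sub, Real.norm_eq_abs, abs_mul, mul_comm]
    gcongr
    exact hpt r ⟨hr.1.le, hr.2⟩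
  calc _ ≤ ∑ i ∈ Finset.range (n+1), _ := Finset.abs_sum_le_sum_abs _ _
    _ ≤ _ := Finset.sum_le_sum hterm
    _ = ε' * Q := by rw [← Finset.mul_sum, hQ, hadj hda]
    _ < ε := by
      rw [hε', div_mul_eq_mul_div, div_lt_iff₀ (by positivity)]; nlinarith

lemma gk_step {Ω : Type*} [MeasurableSpace Ω] (μ : Measure Ω) [IsProbabilityMeasure μ]
    (ξ Y Z : Ω → ℝ) (hξ : Measurable ξ) (hξb : ∀ ω, |ξ ω| ≤ 1) (hY : Measurable Y)
    (hZ : Measurable Z)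
    (v w ρ : ℝ) (hv : 0 < v) (hw : 0 < w) (hρ : ρ ≠ 0)
    (hi : IndepFun (fun ω => (ξ ω, Y ω)) Z μ) (hl : μ.map Z = gaussianReal 0 w.toNNReal) :
    ∫ ω, ξ ω * gk v (Y ω + ρ * Z ω) ∂μ = ∫ ω, ξ ω * gk (v + ρ ^ 2 * w) (Y ω) ∂μ := by
  have hp : Measurable fun ω => (ξ ω, Y ω) := hξ.prodMk hY
  have hmap := (indepFun_iff_map_prod_eq_prod_map_map hp.aemeasurable hZ.aemeasurable).1 hi
  have hP1 : IsProbabilityMeasure (μ.map fun ω => (ξ ω, Y ω)) := Measure.isProbabilityMeasure_map hp.aemeasurable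
  have hm : Measurable fun q : (ℝ × ℝ) × ℝ => q.1.1 * gk v (q.1.2 + ρ * q.2) := by
    have : Measurable fun q : (ℝ × ℝ) × ℝ => gk v (q.1.2 + ρ * q.2) := (gk_cont v).measurable.comp (by fun_prop)
    fun_prop
  have hintg : Integrable (fun q : (ℝ × ℝ) × ℝ => q.1.1 * gk v (q.1.2 + ρ * q.2))
      (μ.map fun ω => ((ξ ω, Y ω), Z ω)) := by
    have : Measurable fun ω => ((ξ ω, Y ω), Z ω) := hp.prodMk hZ
    rw [integrable_map_measure hm.aestronglyMeasurable this.aemeasurable]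
    refine Integrable.of_bound (hm.comp this).aestronglyMeasurable ((√v)⁻¹) (ae_of_all _ fun ω => ?_)
    simp only [Function.comp, norm_mul, Real.norm_eq_abs]
    have h1 := hξb ω
    have h2 := gk_le v (Y ω + ρ * Z ω) hv
    rw [abs_of_nonneg (gk_nonneg _ _)]
    have h3 := gk_nonneg v (Y ω + ρ * Z ω)
    calc _ ≤ 1 * (√v)⁻¹ := by gcongr
      _ = _ := one_mul _
  have e1 : ∫ ω, ξ ω * gk v (Y ω + ρ * Z ω) ∂μ =
      ∫ q, q.1.1 * gk v (q.1.2 + ρ * q.2) ∂(μ.map fun ω => ((ξ ω, Y ω), Z ω)) := by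
    rw [integral_map (hp.prodMk hZ).aemeasurable hm.aestronglyMeasurable]
  rw [e1]
  rw [hmap, hl] at hintg ⊢
  rw [integral_prod _ hintg]
  simp only [integral_const_mul, gk_semigroup v w ρ _ hv hw hρ]
  rw [integral_map hp.aemeasurable]
  have := (gk_cont (v + ρ^2*w))
  apply Measurable.aestronglyMeasurable
  have := this.measurable
  fun_prop

theorem ito {Ω : Type*} [MeasurableSpace Ω] (μ : Measure Ω) [IsProbabilityMeasure μ]
    (ξ : Ω → ℝ) (D W d : ℝ → Ω → ℝ) (ρ τ t : ℝ) (hτ : 0 < τ) (ht : τ < t) (hρ : ρ ≠ 0)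
    (hξ : Measurable ξ) (hξb : ∀ ω, |ξ ω| ≤ 1)
    (hDm : ∀ s, Measurable (D s)) (hDc : ∀ ω, Continuous fun s => D s ω)
    (hWm : ∀ s, Measurable (W s))
    (hdm : Measurable fun p : Ω × ℝ => d p.2 p.1)
    (hdi : ∀ᵐ ω ∂μ, IntervalIntegrable (fun r => d r ω) volume 0 τ)
    (hinc : ∀ᵐ ω ∂μ, ∀ s s', 0 ≤ s → s ≤ s' → s' ≤ τ →
      D s' ω - D s ω = (∫ r in s..s', d r ω) + ρ * (W s' ω - W s ω))
    (hind : ∀ s s', 0 ≤ s → s < s' → s' ≤ τ →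
      IndepFun (fun ω => (ξ ω, D s ω)) (fun ω => W s' ω - W s ω) μ)
    (hlaw : ∀ s s', 0 ≤ s → s < s' → s' ≤ τ →
      μ.map (fun ω => W s' ω - W s ω) = gaussianReal 0 (s' - s).toNNReal)
    (hintg : Integrable (fun p : Ω × ℝ => ξ p.1 * d p.2 p.1) (μ.prod (volume.restrict (Ioc 0 τ)))) :
    ∫ ω, ξ ω * gk (ρ ^ 2 * (t - τ)) (D τ ω) ∂μ = ∫ ω, ξ ω * gk (ρ ^ 2 * t) (D 0 ω) ∂μ +
      ∫ p : Ω × ℝ, ξ p.1 * d p.2 p.1 * gk1 (ρ ^ 2 * (t - p.2)) (D p.2 p.1)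
        ∂(μ.prod (volume.restrict (Ioc 0 τ))) := by
  have hρ2 : 0 < ρ ^ 2 := by positivity
  set v0 := ρ ^ 2 * (t - τ) with hv0
  have hv0p : 0 < v0 := by have : 0 < t - τ := by linarith
                           positivity
  have hDj : Measurable fun p : Ω × ℝ => D p.2 p.1 :=
    (measurable_uncurry_of_continuous_of_measurable (u := D) hDc hDm).comp measurable_swap
  have hvle : ∀ r, r ≤ τ → v0 ≤ ρ ^ 2 * (t - r) := by intro r hr; rw [hv0]; gcongr
  have hgb : ∀ r y, r ≤ τ → |gk1 (ρ ^ 2 * (t - r)) y| ≤ 3 * v0⁻¹ := by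
    intro r y hr
    have := hvle r hr
    refine (gk1_bdd _ y (hv0p.trans_le this)).trans ?_
    gcongr
  have hm : Measurable fun p : Ω × ℝ => ξ p.1 * d p.2 p.1 * gk1 (ρ ^ 2 * (t - p.2)) (D p.2 p.1) := by
    have h1 : Measurable fun p : Ω × ℝ => gk1 (ρ ^ 2 * (t - p.2)) (D p.2 p.1) :=
      gk1_meas.comp (f := fun p : Ω × ℝ => (ρ ^ 2 * (t - p.2), D p.2 p.1)) (Measurable.prodMk (by fun_prop) hDj)
    have : Measurable fun p : Ω × ℝ => ξ p.1 := hξ.comp measurable_fst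
    exact (this.mul hdm).mul h1
  have hIint : Integrable (fun p : Ω × ℝ => ξ p.1 * d p.2 p.1 * gk1 (ρ ^ 2 * (t - p.2)) (D p.2 p.1))
      (μ.prod (volume.restrict (Ioc 0 τ))) := by
    refine Integrable.mono' (hintg.norm.const_mul (3 * v0⁻¹)) hm.aestronglyMeasurable ?_
    have : ∀ᵐ p ∂(μ.prod (volume.restrict (Ioc 0 τ))), p.2 ∈ Ioc 0 τ := by
      have h1 : μ.prod (volume.restrict (Ioc 0 τ)) = (μ.prod volume).restrict (univ ×ˢ Ioc 0 τ) := by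
        rw [← Measure.prod_restrict, Measure.restrict_univ]
      rw [h1]
      filter_upwards [ae_restrict_mem (MeasurableSet.univ.prod measurableSet_Ioc)] with p hp
      exact hp.2
    filter_upwards [this] with p hp
    rw [norm_mul, mul_comm]
    gcongr
    exact hgb _ _ hp.2
  rw [integral_prod _ hIint]
  -- discretisation
  set Rn : ℕ → Ω → ℝ := fun n ω => ∑ i ∈ Finset.range (n+1),
      (gk (ρ ^ 2 * (t - (i+1 : ℕ) * (τ / (n+1)))) (D ((i+1 : ℕ) * (τ / (n+1))) ω) -
       gk (ρ ^ 2 * (t - (i+1 : ℕ) * (τ / (n+1)))) (D ((i+1 : ℕ) * (τ / (n+1))) ω -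
        ∫ r in (i:ℕ) * (τ / (n+1))..(i+1 : ℕ) * (τ / (n+1)), d r ω)) with hRn
  have hlim : ∀ᵐ ω ∂μ, Filter.Tendsto (fun n => ξ ω * Rn n ω) Filter.atTop
      (nhds (∫ r, ξ ω * d r ω * gk1 (ρ ^ 2 * (t - r)) (D r ω) ∂(volume.restrict (Ioc 0 τ)))) := by
    filter_upwards [hdi] with ω hω
    have := riemann_ito τ hτ (fun s y => gk (ρ ^ 2 * (t - s)) y) (fun s y => gk1 (ρ ^ 2 * (t - s)) y)
      (fun s _ y => gk_hasDeriv _ _) (by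
        refine gk1_contOn.comp (f := fun p : ℝ × ℝ => (ρ ^ 2 * (t - p.1), p.2)) (by fun_prop) ?_
        intro p hp
        exact hv0p.trans_le (hvle p.1 hp.1.2)) (fun r => d r ω) (fun r => D r ω) hω (hDc ω)
    have := this.const_mul (ξ ω)
    rw [← intervalIntegral.integral_const_mul, intervalIntegral.integral_of_le hτ.le] at this
    simpa only [mul_assoc] using this
  -- facts on the mesh
  have mesh0 : ∀ n i : ℕ, (0:ℝ) ≤ (i:ℝ) * (τ / (n+1)) := fun n i => by positivity
  have meshlt : ∀ n i : ℕ, (i:ℝ) * (τ / (n+1)) < ((i+1:ℕ):ℝ) * (τ / (n+1)) := by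
    intro n i
    have : 0 < τ / ((n:ℝ)+1) := by positivity
    push_cast; nlinarith
  have meshτ : ∀ n i : ℕ, i ≤ n + 1 → (i:ℝ) * (τ / (n+1)) ≤ τ := by
    intro n i hi
    have : (i:ℝ) ≤ n + 1 := by exact_mod_cast hi
    rw [mul_div_assoc', div_le_iff₀ (by positivity)]
    nlinarith
  have meshend : ∀ n : ℕ, ((n+1:ℕ):ℝ) * (τ / (n+1)) = τ := by
    intro n; push_cast; field_simp
  have hξgi : ∀ s, s ≤ τ → ∀ Y : Ω → ℝ, AEMeasurable Y μ →
      Integrable (fun ω => ξ ω * gk (ρ ^ 2 * (t - s)) (Y ω)) μ := by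
    intro s hs Y hY
    have hv := hv0p.trans_le (hvle s hs)
    refine Integrable.of_bound ?_ ((√(ρ ^ 2 * (t - s)))⁻¹) (ae_of_all _ fun ω => ?_)
    · exact hξ.aestronglyMeasurable.mul ((gk_cont _).measurable.comp_aemeasurable hY).aestronglyMeasurable
    · rw [norm_mul, Real.norm_eq_abs, Real.norm_eq_abs, abs_of_nonneg (gk_nonneg _ _)]
      have h1 := hξb ω
      have h2 := gk_le _ (Y ω) hv
      have h3 := gk_nonneg (ρ ^ 2 * (t - s)) (Y ω)
      calc _ ≤ 1 * (√(ρ ^ 2 * (t - s)))⁻¹ := by gcongr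
        _ = _ := one_mul _
  have hcong : ∀ n i : ℕ, i < n + 1 → ∀ᵐ ω ∂μ, D ((i+1 : ℕ) * (τ / (n+1))) ω -
        (∫ r in (i:ℕ) * (τ / (n+1))..(i+1 : ℕ) * (τ / (n+1)), d r ω) =
        D ((i:ℝ) * (τ / (n+1))) ω + ρ * (W ((i+1 : ℕ) * (τ / (n+1))) ω - W ((i:ℝ) * (τ / (n+1))) ω) := by
    intro n i hi
    filter_upwards [hinc] with ω hω
    have := hω _ _ (mesh0 n i) (meshlt n i).le (meshτ n (i+1) hi)
    linarith
  have hterm : ∀ n i : ℕ, i < n + 1 →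
      Integrable (fun ω => ξ ω * (gk (ρ ^ 2 * (t - (i+1 : ℕ) * (τ / (n+1)))) (D ((i+1 : ℕ) * (τ / (n+1))) ω) -
       gk (ρ ^ 2 * (t - (i+1 : ℕ) * (τ / (n+1)))) (D ((i+1 : ℕ) * (τ / (n+1))) ω -
        ∫ r in (i:ℕ) * (τ / (n+1))..(i+1 : ℕ) * (τ / (n+1)), d r ω))) μ ∧
      ∫ ω, ξ ω * (gk (ρ ^ 2 * (t - (i+1 : ℕ) * (τ / (n+1)))) (D ((i+1 : ℕ) * (τ / (n+1))) ω) -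
       gk (ρ ^ 2 * (t - (i+1 : ℕ) * (τ / (n+1)))) (D ((i+1 : ℕ) * (τ / (n+1))) ω -
        ∫ r in (i:ℕ) * (τ / (n+1))..(i+1 : ℕ) * (τ / (n+1)), d r ω)) ∂μ =
      ∫ ω, ξ ω * gk (ρ ^ 2 * (t - (i+1 : ℕ) * (τ / (n+1)))) (D ((i+1 : ℕ) * (τ / (n+1))) ω) ∂μ -
      ∫ ω, ξ ω * gk (ρ ^ 2 * (t - (i : ℕ) * (τ / (n+1)))) (D ((i : ℕ) * (τ / (n+1))) ω) ∂μ := by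
    intro n i hi
    have hc := hcong n i hi
    have hlt := meshlt n i
    have hle := meshτ n (i+1) hi
    have h0 := mesh0 n i
    set s := (i:ℝ) * (τ / (n+1)) with hs
    set s' := ((i+1:ℕ):ℝ) * (τ / (n+1)) with hs'
    have i1 := hξgi s' hle (D s') (hDm s').aemeasurable
    have hY2 : Measurable fun ω => D s ω + ρ * (W s' ω - W s ω) := by
      have := hDm s; have := hWm s; have := hWm s'; fun_prop
    have i2 := hξgi s' hle (fun ω => D s' ω - ∫ r in s..s', d r ω) (hY2.aemeasurable.congr (by
      filter_upwards [hc] with ω hω; exact hω.symm))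
    simp only [mul_sub (ξ _)]
    refine ⟨i1.sub i2, ?_⟩
    rw [integral_sub i1 i2]
    congr 1
    have hv := hv0p.trans_le (hvle s' hle)
    have := gk_step μ ξ (D s) (fun ω => W s' ω - W s ω) hξ hξb (hDm s)
      ((hWm s').sub (hWm s)) (ρ ^ 2 * (t - s')) (s' - s) ρ hv (by linarith) hρ
      (hind s s' h0 hlt hle) (hlaw s s' h0 hlt hle)
    rw [show ρ ^ 2 * (t - s') + ρ ^ 2 * (s' - s) = ρ ^ 2 * (t - s) by ring] at this
    rw [← this]
    refine integral_congr_ae ?_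
    filter_upwards [hc] with ω hω
    rw [hω]
  have hval : ∀ n, ∫ ω, ξ ω * Rn n ω ∂μ = ∫ ω, ξ ω * gk v0 (D τ ω) ∂μ - ∫ ω, ξ ω * gk (ρ ^ 2 * t) (D 0 ω) ∂μ := by
    intro n
    simp only [hRn, Finset.mul_sum]
    rw [integral_finsetSum _ (fun i hi => (hterm n i (Finset.mem_range.1 hi)).1)]
    rw [Finset.sum_congr rfl (fun i hi => (hterm n i (Finset.mem_range.1 hi)).2)]
    rw [Finset.sum_range_sub (fun i : ℕ => ∫ ω, ξ ω * gk (ρ ^ 2 * (t - (i : ℕ) * (τ / (n+1)))) (D ((i : ℕ) * (τ / (n+1))) ω) ∂μ),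
      meshend]
    simp [hv0]
  have hRm : ∀ n, AEStronglyMeasurable (fun ω => ξ ω * Rn n ω) μ := by
    intro n
    simp only [hRn, Finset.mul_sum]
    exact (integrable_finsetSum _ (fun i hi => (hterm n i (Finset.mem_range.1 hi)).1)).aestronglyMeasurable
  have hdom : ∀ n, ∀ᵐ ω ∂μ, ‖ξ ω * Rn n ω‖ ≤ 3 * v0⁻¹ * ∫ r, ‖ξ ω * d r ω‖ ∂(volume.restrict (Ioc 0 τ)) := by
    intro n
    filter_upwards [hdi] with ω hω
    rw [norm_mul]
    have e : ∫ r, ‖ξ ω * d r ω‖ ∂(volume.restrict (Ioc 0 τ)) = ‖ξ ω‖ * ∫ r in (0:ℝ)..τ, |d r ω| := by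
      rw [intervalIntegral.integral_of_le hτ.le, ← integral_const_mul]
      simp [norm_mul]
    rw [e, mul_left_comm]
    gcongr
    have hadj := intervalIntegral.sum_integral_adjacent_intervals (f := fun r => |d r ω|) (μ := volume)
      (a := fun i : ℕ => (i:ℝ) * (τ / (n+1))) (n := n+1)
      (fun k hk => by
        apply hω.abs.mono_set
        rw [uIcc_of_le (meshlt n k).le, uIcc_of_le hτ.le]; exact Icc_subset_Icc (mesh0 n k) (meshτ n _ hk))
    rw [meshend] at hadj
    simp only [Nat.cast_zero, zero_mul] at hadj
    rw [← hadj, Finset.mul_sum]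
    refine (norm_sum_le _ _).trans (Finset.sum_le_sum fun i hi => ?_)
    have hle := meshτ n (i+1) (Finset.mem_range.1 hi)
    have hlip := Convex.norm_image_sub_le_of_norm_hasDerivWithin_le
      (f := gk (ρ ^ 2 * (t - (i+1 : ℕ) * (τ / (n+1))))) (f' := gk1 (ρ ^ 2 * (t - (i+1 : ℕ) * (τ / (n+1)))))
      (s := univ) (C := 3 * v0⁻¹)
      (fun y _ => (gk_hasDeriv _ y).hasDerivWithinAt) (fun y _ => hgb _ y hle) convex_univ
      (x := D ((i+1 : ℕ) * (τ / (n+1))) ω - ∫ r in (i:ℕ) * (τ / (n+1))..(i+1 : ℕ) * (τ / (n+1)), d r ω)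
      (y := D ((i+1 : ℕ) * (τ / (n+1))) ω) (mem_univ _) (mem_univ _)
    refine hlip.trans ?_
    rw [sub_sub_cancel]
    gcongr
    exact intervalIntegral.abs_integral_le_integral_abs (meshlt n i).le
  have hdct := tendsto_integral_of_dominated_convergence _ hRm
    (hintg.norm.integral_prod_left.const_mul (3 * v0⁻¹)) hdom hlim
  simp only [hval] at hdct
  have := tendsto_nhds_unique hdct tendsto_const_nhds
  linarith

lemma gronwall_var (f A : ℝ → ℝ) (hf : Continuous f) (hA : Continuous A) (K τ : ℝ) (hτ : 0 ≤ τ)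
    (hK : 0 < K) (hA0 : ∀ s ∈ Icc 0 τ, 0 ≤ A s)
    (h : ∀ s ∈ Icc 0 τ, f s ≤ A s + K * ∫ r in (0:ℝ)..s, f r) :
    ∫ r in (0:ℝ)..τ, f r ≤ rexp (K * τ) * ∫ r in (0:ℝ)..τ, A r := by
  have hder : ∀ f : ℝ → ℝ, Continuous f → ∀ x, HasDerivAt (fun x => ∫ r in (0:ℝ)..x, f r) (f x) x :=
    fun f hf x => intervalIntegral.integral_hasDerivAt_right (hf.intervalIntegrable _ _)
      (hf.stronglyMeasurableAtFilter _ _) hf.continuousAt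
  have hd : ∀ x, HasDerivAt (fun x => rexp (-(K * x)) * (∫ r in (0:ℝ)..x, f r) - ∫ r in (0:ℝ)..x, A r)
      (rexp (-(K * x)) * (f x - K * ∫ r in (0:ℝ)..x, f r) - A x) x := by
    intro x
    have h1 : HasDerivAt (fun x => -(K * x)) (-(K * 1)) x := ((hasDerivAt_id x).const_mul K).neg
    refine ((h1.exp.mul (hder f hf x)).sub (hder A hA x)).congr_deriv ?_
    ring
  have hanti : AntitoneOn (fun x => rexp (-(K * x)) * (∫ r in (0:ℝ)..x, f r) - ∫ r in (0:ℝ)..x, A r) (Icc 0 τ) := by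
    refine antitoneOn_of_deriv_nonpos (convex_Icc _ _) (fun x _ => (hd x).continuousAt.continuousWithinAt)
      (fun x _ => (hd x).differentiableAt.differentiableWithinAt) ?_
    intro x hx
    rw [interior_Icc] at hx
    have hx' : x ∈ Icc 0 τ := ⟨hx.1.le, hx.2.le⟩
    rw [(hd x).deriv]
    have h1 := h x hx'
    have h2 := hA0 x hx'
    have h3 : rexp (-(K * x)) ≤ 1 := by
      apply Real.exp_le_one_iff.2
      have := hx'.1
      have : 0 ≤ K * x := by positivity
      linarith
    have h4 := Real.exp_pos (-(K * x))
    nlinarith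
  have := hanti ⟨le_rfl, hτ⟩ ⟨hτ, le_rfl⟩ hτ
  simp only [intervalIntegral.integral_same, mul_zero, sub_zero] at this
  have h5 : rexp (-(K * τ)) * (∫ r in (0:ℝ)..τ, f r) ≤ ∫ r in (0:ℝ)..τ, A r := by linarith
  calc ∫ r in (0:ℝ)..τ, f r = rexp (K * τ) * (rexp (-(K * τ)) * (∫ r in (0:ℝ)..τ, f r)) := by
        rw [← mul_assoc, ← Real.exp_add]; simp
    _ ≤ _ := by gcongr

/-- Standing assumptions on the coefficients and noises. -/
structure Coef {Ω S : Type*} [MeasurableSpace Ω] [MeasurableSpace S] (μ : Measure Ω)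
    (pr : Ω → S) (bt a : ℝ → ℝ → ℝ) (β : ℝ → S → ℝ) (W : ℝ → Ω → ℝ) (ρ K C M T : ℝ) : Prop where
  hT : 0 < T
  hρ : ρ ≠ 0
  hK : 0 < K
  hC : 0 ≤ C
  hM : 0 ≤ M
  a_meas : Measurable fun p : ℝ × ℝ => a p.1 p.2
  a_off : ∀ r x, r ∉ Icc 0 T → a r x = 0
  a_gr : ∀ r x, |a r x| ≤ C * (1 + |x|)
  a_lip : ∀ r x y, |a r x - a r y| ≤ K * |x - y|
  bt_meas : Measurable fun p : ℝ × ℝ => bt p.1 p.2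
  bt_bdd : ∀ r x, |bt r x| ≤ M
  pr_meas : Measurable pr
  β_meas : ∀ s, Measurable (β s)
  β_cont : ∀ σ, Continuous fun s => β s σ
  W_meas : ∀ s, Measurable (W s)
  W_cont : ∀ ω, Continuous fun s => W s ω
  law : ∀ s s', 0 ≤ s → s < s' → s' ≤ T →
      μ.map (fun ω => W s' ω - W s ω) = gaussianReal 0 (s' - s).toNNReal

/-- Assumptions on the solution. -/
structure Sol {Ω S : Type*} [MeasurableSpace Ω] [MeasurableSpace S] (μ : Measure Ω)
    (pr : Ω → S) (bt a : ℝ → ℝ → ℝ) (β : ℝ → S → ℝ) (W : ℝ → Ω → ℝ) (ρ T : ℝ)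
    (x : ℝ) (X : ℝ → Ω → ℝ) : Prop where
  meas : ∀ s, Measurable (X s)
  cont : ∀ ω, Continuous fun s => X s ω
  init : ∀ᵐ ω ∂μ, X 0 ω = x
  inc : ∀ᵐ ω ∂μ, ∀ s s', 0 ≤ s → s ≤ s' → s' ≤ T →
    X s' ω - X s ω = (∫ r in s..s', (bt r (X r ω) + a r (X r ω))) +
      (β s' (pr ω) - β s (pr ω)) + ρ * (W s' ω - W s ω)
  ind : ∀ s s', 0 ≤ s → s < s' → s' ≤ T →
      IndepFun (fun ω => (pr ω, X s ω)) (fun ω => W s' ω - W s ω) μ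

section
variable {Ω S : Type*} [MeasurableSpace Ω] [MeasurableSpace S] {μ : Measure Ω}
    [IsProbabilityMeasure μ] {pr : Ω → S} {bt a : ℝ → ℝ → ℝ} {β : ℝ → S → ℝ} {W : ℝ → Ω → ℝ}
    {ρ K C M T : ℝ}

lemma Coef.W_mom (hc : Coef μ pr bt a β W ρ K C M T) :
    Integrable (fun p : Ω × ℝ => W p.2 p.1 - W 0 p.1) (μ.prod (volume.restrict (Ioc 0 T))) := by
  have hWj : Measurable fun p : Ω × ℝ => W p.2 p.1 :=
    (measurable_uncurry_of_continuous_of_measurable (u := W) hc.W_cont hc.W_meas).comp measurable_swap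
  have hm : Measurable fun p : Ω × ℝ => W p.2 p.1 - W 0 p.1 :=
    hWj.sub ((hc.W_meas 0).comp measurable_fst)
  refine ⟨hm.aestronglyMeasurable, ?_⟩
  rw [hasFiniteIntegral_iff_enorm, lintegral_prod_symm _ hm.enorm.aemeasurable]
  have hb : ∀ r ∈ Ioc 0 T, ∫⁻ ω, ‖W r ω - W 0 ω‖ₑ ∂μ ≤ ENNReal.ofReal (1 + T) := by
    intro r hr
    have hl := hc.law 0 r le_rfl hr.1 hr.2
    have hmr : Measurable fun ω => W r ω - W 0 ω := (hc.W_meas r).sub (hc.W_meas 0)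
    have e : ∫⁻ ω, ‖W r ω - W 0 ω‖ₑ ∂μ = ∫⁻ y, ‖y‖ₑ ∂(gaussianReal 0 (r - 0).toNNReal) := by
      rw [← hl, lintegral_map measurable_enorm hmr]
    rw [e]
    have hi2 : Integrable (fun y : ℝ => y ^ 2) (gaussianReal 0 (r - 0).toNNReal) := by
      have := (memLp_id_gaussianReal (μ := 0) (v := (r - 0).toNNReal) 2)
      exact this.integrable_sq
    have hv : ∫ y, y ^ 2 ∂(gaussianReal 0 (r - 0).toNNReal) = r := by
      have h1 := variance_id_gaussianReal (μ := 0) (v := (r - 0).toNNReal)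
      rw [variance_of_integral_eq_zero (by fun_prop) (by simp)] at h1
      simp only [id] at h1
      rw [h1]; simp [hr.1.le]
    calc ∫⁻ y, ‖y‖ₑ ∂(gaussianReal 0 (r - 0).toNNReal)
        ≤ ∫⁻ y, ENNReal.ofReal (1 + y ^ 2) ∂(gaussianReal 0 (r - 0).toNNReal) := by
          refine lintegral_mono fun y => ?_
          rw [← ofReal_norm]
          apply ENNReal.ofReal_le_ofReal
          rw [Real.norm_eq_abs]
          nlinarith [sq_nonneg (|y| - 1), sq_abs y, abs_nonneg y]
      _ = ENNReal.ofReal (1 + r) := by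
          have hi3 : Integrable (fun y : ℝ => 1 + y ^ 2) (gaussianReal 0 (r - 0).toNNReal) :=
            (integrable_const _).add hi2
          rw [← ofReal_integral_eq_lintegral_ofReal hi3 (ae_of_all _ fun y => by positivity)]
          rw [integral_add (integrable_const _) hi2, hv]; simp
      _ ≤ _ := by apply ENNReal.ofReal_le_ofReal; linarith [hr.2]
  refine (setLIntegral_mono measurable_const hb).trans_lt ?_
  rw [lintegral_const]
  simp
  exact ENNReal.mul_lt_top (by simp) (by simp)

lemma flowEx (hc : Coef μ pr bt a β W ρ K C M T) (t : ℝ) (ht : t ≤ T) :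
    ∃ θ : S → ℝ → ℝ → ℝ, IsFlow a β K T t θ :=
  flow_exists a hc.a_meas T C K hc.a_off hc.hC hc.a_gr hc.hK hc.a_lip β hc.β_meas hc.β_cont t ht

/-- the parametrix kernel -/
def qk (bt a : ℝ → ℝ → ℝ) (ρ t : ℝ) (θ : S → ℝ → ℝ → ℝ) (r : ℝ) (σ : S) (y z : ℝ) : ℝ :=
  (bt r y + a r y - a r (θ σ z r)) * gk1 (ρ ^ 2 * (t - r)) (y - θ σ z r)

lemma qk_meas (hc : Coef μ pr bt a β W ρ K C M T) {t : ℝ} {θ : S → ℝ → ℝ → ℝ}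
    (hθ : IsFlow a β K T t θ) :
    Measurable fun p : (ℝ × S × ℝ) × ℝ => qk bt a ρ t θ p.1.1 p.1.2.1 p.1.2.2 p.2 := by
  unfold qk
  have h1 : Measurable fun p : (ℝ × S × ℝ) × ℝ => θ p.1.2.1 p.2 p.1.1 :=
    hθ.meas.comp (f := fun p : (ℝ × S × ℝ) × ℝ => (p.1.2.1, p.2, p.1.1)) (by fun_prop)
  have h2 : Measurable fun p : (ℝ × S × ℝ) × ℝ => a p.1.1 (θ p.1.2.1 p.2 p.1.1) :=
    hc.a_meas.comp (f := fun p : (ℝ × S × ℝ) × ℝ => (p.1.1, θ p.1.2.1 p.2 p.1.1))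
      (Measurable.prodMk (by fun_prop) h1)
  have h3 : Measurable fun p : (ℝ × S × ℝ) × ℝ => a p.1.1 p.1.2.2 :=
    hc.a_meas.comp (f := fun p : (ℝ × S × ℝ) × ℝ => (p.1.1, p.1.2.2)) (by fun_prop)
  have h4 : Measurable fun p : (ℝ × S × ℝ) × ℝ => bt p.1.1 p.1.2.2 :=
    hc.bt_meas.comp (f := fun p : (ℝ × S × ℝ) × ℝ => (p.1.1, p.1.2.2)) (by fun_prop)
  have h5 : Measurable fun p : (ℝ × S × ℝ) × ℝ => gk1 (ρ ^ 2 * (t - p.1.1)) (p.1.2.2 - θ p.1.2.1 p.2 p.1.1) :=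
    gk1_meas.comp (f := fun p : (ℝ × S × ℝ) × ℝ => (ρ ^ 2 * (t - p.1.1), p.1.2.2 - θ p.1.2.1 p.2 p.1.1))
      (Measurable.prodMk (by fun_prop) (Measurable.sub (by fun_prop) h1))
  exact ((h4.add h3).sub h2).mul h5

lemma qk_abs (hc : Coef μ pr bt a β W ρ K C M T) {t : ℝ} (θ : S → ℝ → ℝ → ℝ)
    (r : ℝ) (hr : r < t) (σ : S) (y z : ℝ) :
    |qk bt a ρ t θ r σ y z| ≤ (3 * M * (√(ρ ^ 2 * (t - r)))⁻¹ + 3 * K) * gk (2 * (ρ ^ 2 * (t - r))) (y - θ σ z r) := by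
  unfold qk
  have hv : 0 < ρ ^ 2 * (t - r) := by
    have := hc.hρ
    have : 0 < t - r := by linarith
    positivity
  set v := ρ ^ 2 * (t - r)
  have h1 := gk1_abs_le v (y - θ σ z r) hv
  have h2 := gk1_mul_abs_le v (y - θ σ z r) hv
  have h3 := hc.bt_bdd r y
  have h4 := hc.a_lip r y (θ σ z r)
  have hM := hc.hM
  have hK := hc.hK
  rw [abs_mul]
  have h5 : |bt r y + a r y - a r (θ σ z r)| ≤ M + K * |y - θ σ z r| := by
    rw [add_sub_assoc]
    exact (abs_add_le _ _).trans (add_le_add h3 h4)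
  calc _ ≤ (M + K * |y - θ σ z r|) * |gk1 v (y - θ σ z r)| := by gcongr
    _ = M * |gk1 v (y - θ σ z r)| + K * (|y - θ σ z r| * |gk1 v (y - θ σ z r)|) := by ring
    _ ≤ M * (3 * (√v)⁻¹ * gk (2 * v) (y - θ σ z r)) + K * (3 * gk (2 * v) (y - θ σ z r)) := by gcongr
    _ = _ := by ring

lemma gk_push {t : ℝ} {θ : S → ℝ → ℝ → ℝ} (hθ : IsFlow a β K T t θ) (σ : S) (y s v : ℝ)
    (hs : s ∈ Icc 0 t) (hv : 0 < v) :
    ∫⁻ z, ENNReal.ofReal (gk v (y - θ σ z s)) ≤ ENNReal.ofReal (rexp (K * T)) := by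
  have hm : Measurable fun z => θ σ z s := hθ.meas.comp (by fun_prop : Measurable fun z : ℝ => (σ, z, s))
  have := push_le (fun z => θ σ z s) hm (rexp (K * T)) (fun z z' => hθ.anti σ z z' s hs)
    (fun w => ENNReal.ofReal (gk v (y - w))) (by
      have := (gk_cont v).measurable
      fun_prop)
  refine this.trans ?_
  rw [lintegral_sub_left_eq_self (fun w => ENNReal.ofReal (gk v w)) y,
    ← ofReal_integral_eq_lintegral_ofReal (gk_integrable v hv) (ae_of_all _ fun y => gk_nonneg _ _),
    gk_integral v hv]
  simp

/-- constant in the kernel bound -/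
def qC (ρ K M T : ℝ) : ℝ := rexp (K * T) * (3 * M / |ρ| + 3 * K * √T)

lemma qC_nonneg (hc : Coef μ pr bt a β W ρ K C M T) : 0 ≤ qC ρ K M T := by
  have := hc.hM; have := hc.hK
  unfold qC; positivity

lemma qk_L1 (hc : Coef μ pr bt a β W ρ K C M T) {t : ℝ} {θ : S → ℝ → ℝ → ℝ}
    (hθ : IsFlow a β K T t θ) (htT : t ≤ T) (r : ℝ) (hr0 : 0 ≤ r) (hr : r < t) (σ : S) (y : ℝ) :
    ∫⁻ z, ‖qk bt a ρ t θ r σ y z‖ₑ ≤ ENNReal.ofReal (qC ρ K M T * (t - r) ^ (-(1/2) : ℝ)) := by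
  have hρ := hc.hρ
  have htr : 0 < t - r := by linarith
  have hv : 0 < ρ ^ 2 * (t - r) := by positivity
  have hM := hc.hM
  have hK := hc.hK
  have hsq : √(ρ ^ 2 * (t - r)) = |ρ| * √(t - r) := by
    rw [Real.sqrt_mul (sq_nonneg _), Real.sqrt_sq_eq_abs]
  have hstr : 0 < √(t - r) := Real.sqrt_pos.2 htr
  have hle : √(t - r) ≤ √T := Real.sqrt_le_sqrt (by linarith)
  have hm : Measurable fun z => θ σ z r := hθ.meas.comp (by fun_prop : Measurable fun z : ℝ => (σ, z, r))
  have hm2 : Measurable fun z => ENNReal.ofReal (gk (2 * (ρ ^ 2 * (t - r))) (y - θ σ z r)) := by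
    have := (gk_cont (2 * (ρ ^ 2 * (t - r)))).measurable
    fun_prop
  calc ∫⁻ z, ‖qk bt a ρ t θ r σ y z‖ₑ ≤ ∫⁻ z, ENNReal.ofReal (3 * M * (√(ρ ^ 2 * (t - r)))⁻¹ + 3 * K) *
        ENNReal.ofReal (gk (2 * (ρ ^ 2 * (t - r))) (y - θ σ z r)) := by
        refine lintegral_mono fun z => ?_
        rw [← ENNReal.ofReal_mul (by positivity), ← ofReal_norm]
        exact ENNReal.ofReal_le_ofReal (qk_abs hc θ r hr σ y z)
    _ ≤ ENNReal.ofReal (3 * M * (√(ρ ^ 2 * (t - r)))⁻¹ + 3 * K) * ENNReal.ofReal (rexp (K * T)) := by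
        rw [lintegral_const_mul _ hm2]
        gcongr
        exact gk_push hθ σ y r _ ⟨hr0, hr.le⟩ (by linarith)
    _ ≤ _ := by
        rw [← ENNReal.ofReal_mul (by positivity)]
        apply ENNReal.ofReal_le_ofReal
        rw [Real.rpow_neg htr.le, ← Real.sqrt_eq_rpow, hsq, qC]
        have hρ' : 0 < |ρ| := abs_pos.2 hρ
        have h1 : 3 * K ≤ 3 * K * √T * (√(t - r))⁻¹ := by
          rw [← div_eq_mul_inv, le_div_iff₀ hstr]; gcongr
        have h2 : 3 * M * (|ρ| * √(t - r))⁻¹ = 3 * M / |ρ| * (√(t - r))⁻¹ := by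
          rw [mul_inv]; ring
        rw [h2]
        have h3 := Real.exp_pos (K * T)
        calc _ ≤ (3 * M / |ρ| * (√(t - r))⁻¹ + 3 * K * √T * (√(t - r))⁻¹) * rexp (K * T) := by gcongr
          _ = _ := by ring
end

section
variable {Ω S : Type*} [MeasurableSpace Ω] [MeasurableSpace S] {μ : Measure Ω}
    [IsProbabilityMeasure μ] {pr : Ω → S} {bt a : ℝ → ℝ → ℝ} {β : ℝ → S → ℝ} {W : ℝ → Ω → ℝ}
    {ρ K C M T : ℝ}

lemma Sol.joint {x : ℝ} {X : ℝ → Ω → ℝ}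
    (hX : Sol μ pr bt a β W ρ T x X) : Measurable fun p : Ω × ℝ => X p.2 p.1 :=
  (measurable_uncurry_of_continuous_of_measurable (u := X) hX.cont hX.meas).comp measurable_swap

lemma b_intble (hc : Coef μ pr bt a β W ρ K C M T) (f : ℝ → ℝ) (hf : Continuous f) (p q : ℝ) :
    IntervalIntegrable (fun r => bt r (f r) + a r (f r)) volume p q := by
  apply IntervalIntegrable.add
  · refine IntervalIntegrable.mono_fun (intervalIntegrable_const (c := M)) ?_ (ae_of_all _ fun r => ?_)
    · exact (hc.bt_meas.comp (measurable_id.prodMk hf.measurable)).aestronglyMeasurable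
    · exact (hc.bt_bdd _ _).trans (le_abs_self M)
  · refine IntervalIntegrable.mono_fun (f := fun r => C * (1 + |f r|)) ?_ ?_ (ae_of_all _ fun r => ?_)
    · apply Continuous.intervalIntegrable; fun_prop
    · exact (hc.a_meas.comp (measurable_id.prodMk hf.measurable)).aestronglyMeasurable
    · exact (hc.a_gr _ _).trans (le_abs_self _)

lemma ito_app (hc : Coef μ pr bt a β W ρ K C M T) {x : ℝ} {X : ℝ → Ω → ℝ}
    (hX : Sol μ pr bt a β W ρ T x X) {t : ℝ} {θ : S → ℝ → ℝ → ℝ}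
    (hθ : IsFlow a β K T t θ) (htT : t ≤ T) (τ : ℝ) (hτ : 0 < τ) (hτt : τ < t)
    (A : Set S) (hA : MeasurableSet A) (N : ℝ) (hAN : ∀ σ ∈ A, |θ σ 0 0| ≤ N) (z : ℝ) :
    ∫ ω, A.indicator 1 (pr ω) * gk (ρ ^ 2 * (t - τ)) (X τ ω - θ (pr ω) z τ) ∂μ =
      ∫ ω, A.indicator 1 (pr ω) * gk (ρ ^ 2 * t) (x - θ (pr ω) z 0) ∂μ +
      ∫ p : Ω × ℝ, A.indicator 1 (pr p.1) * qk bt a ρ t θ p.2 (pr p.1) (X p.2 p.1) z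
        ∂(μ.prod (volume.restrict (Ioc 0 τ))) := by
  classical
  have hK := hc.hK
  have hM := hc.hM
  have hpr := hc.pr_meas
  set ξ : Ω → ℝ := fun ω => A.indicator 1 (pr ω) with hξdef
  have hind1 : Measurable (A.indicator (1 : S → ℝ)) := measurable_one.indicator hA
  have hξ : Measurable ξ := hind1.comp hpr
  have hξ01 : ∀ ω, 0 ≤ ξ ω ∧ ξ ω ≤ 1 ∧ (ξ ω ≠ 0 → pr ω ∈ A) := by
    intro ω
    by_cases h : pr ω ∈ A
    · simp [hξdef, h]
    · simp [hξdef, h]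
  have hξb : ∀ ω, |ξ ω| ≤ 1 := fun ω => by rw [abs_of_nonneg (hξ01 ω).1]; exact (hξ01 ω).2.1
  set D : ℝ → Ω → ℝ := fun s ω => X s ω - θ (pr ω) z s with hD
  set d : ℝ → Ω → ℝ := fun r ω => bt r (X r ω) + a r (X r ω) - a r (θ (pr ω) z r) with hd
  have hθs : ∀ s, Measurable fun σ => θ σ z s := fun s =>
    hθ.meas.comp (by fun_prop : Measurable fun σ : S => (σ, z, s))
  have hDm : ∀ s, Measurable (D s) := fun s => (hX.meas s).sub ((hθs s).comp hpr)
  have hDc : ∀ ω, Continuous fun s => D s ω := fun ω => (hX.cont ω).sub (hθ.cont _ _)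
  have hDj : Measurable fun p : Ω × ℝ => D p.2 p.1 :=
    (measurable_uncurry_of_continuous_of_measurable (u := D) hDc hDm).comp measurable_swap
  have hXj := hX.joint
  have hdm : Measurable fun p : Ω × ℝ => d p.2 p.1 := by
    have h1 : Measurable fun p : Ω × ℝ => bt p.2 (X p.2 p.1) :=
      hc.bt_meas.comp (f := fun p : Ω × ℝ => (p.2, X p.2 p.1)) (measurable_snd.prodMk hXj)
    have h2 : Measurable fun p : Ω × ℝ => a p.2 (X p.2 p.1) :=
      hc.a_meas.comp (f := fun p : Ω × ℝ => (p.2, X p.2 p.1)) (measurable_snd.prodMk hXj)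
    have h3 : Measurable fun p : Ω × ℝ => θ (pr p.1) z p.2 :=
      hθ.meas.comp (f := fun p : Ω × ℝ => (pr p.1, z, p.2)) (by fun_prop)
    have h4 : Measurable fun p : Ω × ℝ => a p.2 (θ (pr p.1) z p.2) :=
      hc.a_meas.comp (f := fun p : Ω × ℝ => (p.2, θ (pr p.1) z p.2)) (measurable_snd.prodMk h3)
    exact (h1.add h2).sub h4
  have hdi : ∀ ω p q, IntervalIntegrable (fun r => d r ω) volume p q := fun ω p q =>
    (b_intble hc _ (hX.cont ω) p q).sub (hθ.integ _ _).intervalIntegrable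
  have hinc : ∀ᵐ ω ∂μ, ∀ s s', 0 ≤ s → s ≤ s' → s' ≤ τ →
      D s' ω - D s ω = (∫ r in s..s', d r ω) + ρ * (W s' ω - W s ω) := by
    filter_upwards [hX.inc] with ω hω s s' hs hss hsτ
    have h1 := hω s s' hs hss (by linarith)
    have h2 : θ (pr ω) z s' - θ (pr ω) z s = β s' (pr ω) - β s (pr ω) + ∫ r in s..s', a r (θ (pr ω) z r) := by
      have hi := hθ.integ (pr ω) z
      have : ∫ r in Ioc s t, a r (θ (pr ω) z r) = (∫ r in Ioc s s', a r (θ (pr ω) z r)) +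
          ∫ r in Ioc s' t, a r (θ (pr ω) z r) := by
        rw [← setIntegral_union (Ioc_disjoint_Ioc_of_le le_rfl) measurableSet_Ioc hi.integrableOn hi.integrableOn,
              Ioc_union_Ioc_eq_Ioc hss (by linarith)]
      rw [hθ.eqn _ z s, hθ.eqn _ z s', this, intervalIntegral.integral_of_le hss]; ring
    simp only [hD, hd]
    rw [intervalIntegral.integral_sub (b_intble hc _ (hX.cont ω) _ _) (hθ.integ _ _).intervalIntegrable]
    linarith
  have hindep : ∀ s s', 0 ≤ s → s < s' → s' ≤ τ →
      IndepFun (fun ω => (ξ ω, D s ω)) (fun ω => W s' ω - W s ω) μ := by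
    intro s s' hs hss hsτ
    have := hX.ind s s' hs hss (by linarith)
    have hφ : Measurable fun q : S × ℝ => (A.indicator (1 : S → ℝ) q.1, q.2 - θ q.1 z s) := by
      refine Measurable.prodMk (hind1.comp measurable_fst) (measurable_snd.sub ?_)
      exact (hθs s).comp measurable_fst
    exact this.comp hφ measurable_id
  have hdb : ∀ r ω, |d r ω| ≤ M + K * |D r ω| := by
    intro r ω
    simp only [hd, hD, add_sub_assoc]
    exact (abs_add_le _ _).trans (add_le_add (hc.bt_bdd _ _) (hc.a_lip _ _ _))
  have hintg : Integrable (fun p : Ω × ℝ => ξ p.1 * d p.2 p.1) (μ.prod (volume.restrict (Ioc 0 τ))) := by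
    set c0 := |x| + N + rexp (K * T) * |z| with hc0
    set U : Ω × ℝ → ℝ := fun p => c0 + M * T + |ρ| * |W p.2 p.1 - W 0 p.1| with hU
    have hUi : Integrable U (μ.prod (volume.restrict (Ioc 0 τ))) := by
      have h1 := hc.W_mom.abs
      have h2 : Integrable (fun p : Ω × ℝ => |W p.2 p.1 - W 0 p.1|) (μ.prod (volume.restrict (Ioc 0 τ))) := by
        refine h1.mono_measure ?_
        gcongr
        linarith
      exact (integrable_const _).add (h2.const_mul _)
    -- pathwise bound
    have hpath : ∀ᵐ ω ∂μ, ∫ r in (0:ℝ)..τ, |ξ ω * D r ω| ≤ rexp (K * τ) * ∫ r in (0:ℝ)..τ, |U (ω, r)| := by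
      filter_upwards [hinc, hX.init] with ω hω h0
      have hWc := hc.W_cont ω
      have hDω := hDc ω
      by_cases hξ0 : ξ ω = 0
      · have : 0 ≤ ∫ r in (0:ℝ)..τ, |U (ω, r)| := intervalIntegral.integral_nonneg hτ.le fun _ _ => abs_nonneg _
        simp only [hξ0, zero_mul, abs_zero, intervalIntegral.integral_zero]
        positivity
      · have hAω := (hξ01 ω).2.2 hξ0
        have hξ1 : ξ ω = 1 := by simp [hξdef, hAω]
        have hD0 : |D 0 ω| ≤ c0 := by
          simp only [hD, h0]
          have h1 := hθ.lip (pr ω) z 0 0 ⟨le_rfl, by linarith⟩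
          have h2 := hAN _ hAω
          have h3 : |θ (pr ω) z 0| ≤ |θ (pr ω) z 0 - θ (pr ω) 0 0| + |θ (pr ω) 0 0| := by
            simpa using abs_add_le (θ (pr ω) z 0 - θ (pr ω) 0 0) (θ (pr ω) 0 0)
          have h4 := abs_sub x (θ (pr ω) z 0)
          simp only [sub_zero] at h1
          linarith
        simp only [hξ1, one_mul]
        refine gronwall_var (fun r => |D r ω|) (fun r => |U (ω, r)|) (by fun_prop) (by simp only [hU]; fun_prop) K τ hτ.le hK
          (fun _ _ => abs_nonneg _) ?_
        intro s hs
        have h1 := hω 0 s le_rfl hs.1 hs.2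
        have h2 : |∫ r in (0:ℝ)..s, d r ω| ≤ M * T + K * ∫ r in (0:ℝ)..s, |D r ω| := by
          have : |∫ r in (0:ℝ)..s, d r ω| ≤ ∫ r in (0:ℝ)..s, (M + K * |D r ω|) := by
            rw [← Real.norm_eq_abs]
            refine intervalIntegral.norm_integral_le_of_norm_le hs.1 (ae_of_all _ fun r _ => hdb r ω) ?_
            apply Continuous.intervalIntegrable; fun_prop
          refine this.trans ?_
          rw [intervalIntegral.integral_add (by simp) (by apply Continuous.intervalIntegrable; fun_prop),
            intervalIntegral.integral_const_mul, intervalIntegral.integral_const, sub_zero, smul_eq_mul]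
          have : s * M ≤ M * T := by
            rw [mul_comm]
            have := hs.2
            gcongr; linarith
          linarith
        have h3 : D s ω = D 0 ω + ((∫ r in (0:ℝ)..s, d r ω) + ρ * (W s ω - W 0 ω)) := by linarith
        have h4 : |D s ω| ≤ |D 0 ω| + (|∫ r in (0:ℝ)..s, d r ω| + |ρ| * |W s ω - W 0 ω|) := by
          conv_lhs => rw [h3]
          refine (abs_add_le _ _).trans (by gcongr; refine (abs_add_le _ _).trans_eq (by rw [abs_mul]))
        have h5 : U (ω, s) ≤ |U (ω, s)| := le_abs_self _
        simp only [hU] at h5 ⊢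
        linarith
    have hξj : Measurable fun p : Ω × ℝ => ξ p.1 := hξ.comp measurable_fst
    have hDi : Integrable (fun p : Ω × ℝ => ξ p.1 * D p.2 p.1) (μ.prod (volume.restrict (Ioc 0 τ))) := by
      refine (integrable_prod_iff (hξj.mul hDj).aestronglyMeasurable).2 ?_
      constructor
      · refine ae_of_all _ fun ω => ?_
        have h1 : IntegrableOn (fun r => D r ω) (Ioc 0 τ) volume := (hDc ω).integrableOn_Ioc
        exact h1.const_mul (ξ ω)
      · refine Integrable.mono' (g := fun ω => rexp (K * τ) * ∫ r, |U (ω, r)| ∂(volume.restrict (Ioc 0 τ))) ?_ ?_ ?_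
        · exact hUi.norm.integral_prod_left.const_mul _
        · exact ((hξj.mul hDj).norm.stronglyMeasurable.integral_prod_right').aestronglyMeasurable
        · filter_upwards [hpath] with ω hω
          rw [intervalIntegral.integral_of_le hτ.le, intervalIntegral.integral_of_le hτ.le] at hω
          rw [Real.norm_of_nonneg (integral_nonneg fun _ => norm_nonneg _)]
          exact hω
    refine Integrable.mono' ((integrable_const M).add (hDi.norm.const_mul K)) (hξj.mul hdm).aestronglyMeasurable
      (ae_of_all _ fun p => ?_)
    simp only [Pi.add_apply, norm_mul, Real.norm_eq_abs]
    have h1 := hdb p.2 p.1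
    have h2 := hξb p.1
    have h3 := abs_nonneg (ξ p.1)
    calc |ξ p.1| * |d p.2 p.1| ≤ |ξ p.1| * (M + K * |D p.2 p.1|) := by gcongr
      _ = |ξ p.1| * M + K * (|ξ p.1| * |D p.2 p.1|) := by ring
      _ ≤ 1 * M + K * (|ξ p.1| * |D p.2 p.1|) := by gcongr
      _ = _ := by ring
  have key := ito μ ξ D W d ρ τ t hτ hτt hc.hρ hξ hξb hDm hDc hc.W_meas hdm (ae_of_all _ fun ω => hdi ω 0 τ)
    hinc hindep (fun s s' h1 h2 h3 => hc.law s s' h1 h2 (by linarith)) hintg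
  rw [key]
  congr 1
  · refine integral_congr_ae ?_
    filter_upwards [hX.init] with ω h0
    simp only [hD, h0, hξdef]
  · refine integral_congr_ae (ae_of_all _ fun p => ?_)
    simp only [qk, hξdef, hd, hD, mul_assoc]
end

lemma gk_scale (v s u : ℝ) (hs : 0 < s) (hv : 0 < v) : s * gk (v * s ^ 2) (s * u) = gk v u := by
  unfold gk
  have h1 : √(2 * π * (v * s ^ 2)) = √(2 * π * v) * s := by
    rw [← mul_assoc, Real.sqrt_mul (by positivity), Real.sqrt_sq hs.le]
  have h2 : -(s * u) ^ 2 / (2 * (v * s ^ 2)) = -u ^ 2 / (2 * v) := by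
    field_simp
  rw [h1, h2, mul_inv]
  field_simp

lemma gk_neg (v y : ℝ) : gk v (-y) = gk v y := by unfold gk; simp

lemma approx_id (f : ℝ → ℝ) (hf : Continuous f) (F0 : ℝ) (hfb : ∀ z, |f z| ≤ F0) (ρ L y : ℝ) (hρ : ρ ≠ 0)
    (hL : 0 ≤ L)
    (s x : ℕ → ℝ) (φ : ℕ → ℝ → ℝ) (hs : ∀ n, 0 < s n)
    (hs0 : Filter.Tendsto s Filter.atTop (nhds 0)) (hx : Filter.Tendsto x Filter.atTop (nhds y))
    (hφm : ∀ n, Measurable (φ n))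
    (hφ : ∀ n z z', |(z - φ n z) - (z' - φ n z')| ≤ L * s n ^ 2 * |z - z'|)
    (hφy : Filter.Tendsto (fun n => φ n y) Filter.atTop (nhds y)) :
    Filter.Tendsto (fun n => ∫ z, f z * gk (ρ ^ 2 * s n ^ 2) (x n - φ n z)) Filter.atTop (nhds (f y)) := by
  have hρ2 : 0 < ρ ^ 2 := by positivity
  have hF0 : 0 ≤ F0 := (abs_nonneg _).trans (hfb 0)
  set w : ℕ → ℝ := fun n => x n + (y - φ n y) with hw
  have hwy : Filter.Tendsto w Filter.atTop (nhds y) := by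
    have := hx.add (hφy.const_sub y)
    simpa using this
  set u : ℕ → ℝ → ℝ := fun n ζ => (x n - φ n (w n + s n * ζ)) / s n with hu
  have hub : ∀ n ζ, |u n ζ + ζ| ≤ L * s n * |w n - y| + L * s n ^ 2 * |ζ| := by
    intro n ζ
    have hsn := hs n
    have h1 := hφ n (w n + s n * ζ) y
    have h2 : u n ζ + ζ = ((w n + s n * ζ - φ n (w n + s n * ζ)) - (y - φ n y)) / s n := by
      simp only [hu, hw]; field_simp; ring
    rw [h2, abs_div, abs_of_pos hsn, div_le_iff₀ hsn]
    refine h1.trans ?_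
    have h3 : |w n + s n * ζ - y| ≤ |w n - y| + s n * |ζ| := by
      have : w n + s n * ζ - y = (w n - y) + s n * ζ := by ring
      rw [this]
      refine (abs_add_le _ _).trans_eq ?_
      rw [abs_mul, abs_of_pos hsn]
    calc _ ≤ L * s n ^ 2 * (|w n - y| + s n * |ζ|) := by gcongr
      _ = _ := by ring
  have hrew : ∀ n, ∫ z, f z * gk (ρ ^ 2 * s n ^ 2) (x n - φ n z) = ∫ ζ, f (w n + s n * ζ) * gk (ρ ^ 2) (u n ζ) := by
    intro n
    have hsn := hs n
    rw [← integral_add_left_eq_self _ (w n)]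
    have := Measure.integral_comp_mul_left (fun z => f (w n + z) * gk (ρ ^ 2 * s n ^ 2) (x n - φ n (w n + z))) (s n)
    rw [abs_of_pos (inv_pos.2 hsn), smul_eq_mul] at this
    have h2 : ∫ z, f (w n + z) * gk (ρ ^ 2 * s n ^ 2) (x n - φ n (w n + z)) =
      s n * ∫ ζ, f (w n + s n * ζ) * gk (ρ ^ 2 * s n ^ 2) (x n - φ n (w n + s n * ζ)) := by
      rw [this]; field_simp
    rw [h2, ← integral_const_mul]
    congr 1; ext ζ
    rw [← gk_scale (ρ ^ 2) (s n) (u n ζ) hsn hρ2]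
    have : s n * u n ζ = x n - φ n (w n + s n * ζ) := by simp only [hu]; field_simp
    rw [this]; ring
  simp only [hrew]
  have hlimval : f y = ∫ ζ, f y * gk (ρ ^ 2) (-ζ) := by
    simp only [gk_neg]
    rw [integral_const_mul, gk_integral _ hρ2, mul_one]
  rw [hlimval]
  set cst := F0 * ((√(2 * π * ρ ^ 2))⁻¹ * rexp (1 / (2 * ρ ^ 2))) with hcst
  refine tendsto_integral_filter_of_dominated_convergence
    (fun ζ => cst * rexp (-(1 / (16 * ρ ^ 2)) * ζ ^ 2)) ?_ ?_ ?_ ?_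
  · refine Filter.Eventually.of_forall fun n => Measurable.aestronglyMeasurable ?_
    have h1 := hf.measurable
    have h2 := hφm n
    have h3 := (gk_cont (ρ ^ 2)).measurable
    simp only [hu]
    fun_prop
  · have e1 : ∀ᶠ n in Filter.atTop, L * s n * |w n - y| < 1 := by
      have h1 : Filter.Tendsto (fun n => |w n - y|) Filter.atTop (nhds |y - y|) := (hwy.sub_const y).abs
      have : Filter.Tendsto (fun n => L * s n * |w n - y|) Filter.atTop (nhds (L * 0 * |y - y|)) :=
        (hs0.const_mul L).mul h1
      refine this.eventually (gt_mem_nhds (by simp))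
    have e2 : ∀ᶠ n in Filter.atTop, L * s n ^ 2 < 1 / 2 := by
      have : Filter.Tendsto (fun n => L * s n ^ 2) Filter.atTop (nhds (L * 0 ^ 2)) := (hs0.pow 2).const_mul L
      refine this.eventually (gt_mem_nhds (by simp))
    filter_upwards [e1, e2] with n h1 h2
    refine ae_of_all _ fun ζ => ?_
    rw [norm_mul, Real.norm_eq_abs, Real.norm_eq_abs, abs_of_nonneg (gk_nonneg _ _), hcst, mul_assoc]
    have h0 := gk_nonneg (ρ ^ 2) (u n ζ)
    refine mul_le_mul (hfb _) ?_ h0 hF0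
    have h3 := hub n ζ
    have h4 : |ζ| / 2 - 1 ≤ |u n ζ| := by
      have h5 : |ζ| ≤ |u n ζ + ζ| + |u n ζ| := by
        have := abs_sub (u n ζ + ζ) (u n ζ); simpa using this
      have h6 : L * s n ^ 2 * |ζ| ≤ 1 / 2 * |ζ| := by gcongr
      linarith
    have h5 : ζ ^ 2 / 8 - 1 ≤ u n ζ ^ 2 := by
      rw [← sq_abs ζ, ← sq_abs (u n ζ)]
      have := abs_nonneg ζ
      have := abs_nonneg (u n ζ)
      nlinarith [sq_nonneg (|u n ζ| - 1)]
    unfold gk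
    rw [mul_assoc (√(2 * π * ρ ^ 2))⁻¹, ← Real.exp_add]
    gcongr
    have : 1 / (2 * ρ ^ 2) + -(1 / (16 * ρ ^ 2)) * ζ ^ 2 = -(ζ ^ 2 / 8 - 1) / (2 * ρ ^ 2) := by
      field_simp; ring
    rw [this]
    gcongr
  · exact (integrable_exp_neg_mul_sq (by positivity)).const_mul _
  · refine ae_of_all _ fun ζ => ?_
    have h1 : Filter.Tendsto (fun n => u n ζ) Filter.atTop (nhds (-ζ)) := by
      have hz : Filter.Tendsto (fun n => u n ζ + ζ) Filter.atTop (nhds 0) := by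
        refine squeeze_zero_norm (hub · ζ) ?_
        have h1 : Filter.Tendsto (fun n => |w n - y|) Filter.atTop (nhds |y - y|) := (hwy.sub_const y).abs
        have := ((hs0.const_mul L).mul h1).add (((hs0.pow 2).const_mul L).mul_const |ζ|)
        simpa using this
      have := hz.sub_const ζ
      simpa using this
    have h2 : Filter.Tendsto (fun n => w n + s n * ζ) Filter.atTop (nhds y) := by
      have := hwy.add (hs0.mul_const ζ)
      simpa using this
    exact ((hf.tendsto y).comp h2).mul (((gk_cont (ρ ^ 2)).tendsto (-ζ)).comp h1)

section
variable {Ω S : Type*} [MeasurableSpace Ω] [MeasurableSpace S] {μ : Measure Ω}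
    [IsProbabilityMeasure μ] {pr : Ω → S} {bt a : ℝ → ℝ → ℝ} {β : ℝ → S → ℝ} {W : ℝ → Ω → ℝ}
    {ρ K C M T : ℝ}

lemma lint_rpow (t c : ℝ) (ht : 0 < t) (e : ℝ) (he : -1 < e) :
    IntegrableOn (fun r => c * (t - r) ^ e) (Ioc 0 t) := by
  have h1 : IntervalIntegrable (fun r : ℝ => r ^ e) volume 0 t :=
    intervalIntegral.intervalIntegrable_rpow' he
  have h2 := h1.comp_sub_left t
  simp only [sub_zero, sub_self] at h2
  exact ((intervalIntegrable_iff_integrableOn_Ioc_of_le ht.le).1 h2.symm).const_mul c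

lemma k0_integrable (hc : Coef μ pr bt a β W ρ K C M T) {t : ℝ} {θ : S → ℝ → ℝ → ℝ}
    (hθ : IsFlow a β K T t θ) (Y : Ω → ℝ) (hY : Measurable Y) (s v : ℝ) (hs : s ∈ Icc 0 t)
    (hv : 0 < v) :
    Integrable (fun p : Ω × ℝ => gk v (Y p.1 - θ (pr p.1) p.2 s)) (μ.prod volume) := by
  have hpr := hc.pr_meas
  have hm : Measurable fun p : Ω × ℝ => gk v (Y p.1 - θ (pr p.1) p.2 s) := by
    have h1 : Measurable fun p : Ω × ℝ => θ (pr p.1) p.2 s :=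
      hθ.meas.comp (f := fun p : Ω × ℝ => (pr p.1, p.2, s)) (by fun_prop)
    exact (gk_cont v).measurable.comp ((hY.comp measurable_fst).sub h1)
  refine ⟨hm.aestronglyMeasurable, ?_⟩
  rw [hasFiniteIntegral_iff_enorm, lintegral_prod _ hm.enorm.aemeasurable]
  refine (lintegral_mono (g := fun _ => ENNReal.ofReal (rexp (K * T))) fun ω => ?_).trans_lt ?_
  · refine le_trans (le_of_eq ?_) (gk_push hθ (pr ω) (Y ω) s v hs hv)
    refine lintegral_congr fun z => ?_
    exact Real.enorm_of_nonneg (gk_nonneg _ _)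
  · simp

lemma qk_integrable (hc : Coef μ pr bt a β W ρ K C M T) {x : ℝ} {X : ℝ → Ω → ℝ}
    (hX : Sol μ pr bt a β W ρ T x X) {t : ℝ} {θ : S → ℝ → ℝ → ℝ}
    (hθ : IsFlow a β K T t θ) (ht : 0 < t) (htT : t ≤ T) :
    Measurable (fun p : (Ω × ℝ) × ℝ => qk bt a ρ t θ p.1.2 (pr p.1.1) (X p.1.2 p.1.1) p.2) ∧
    Integrable (fun p : (Ω × ℝ) × ℝ => qk bt a ρ t θ p.1.2 (pr p.1.1) (X p.1.2 p.1.1) p.2)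
      ((μ.prod (volume.restrict (Ioc 0 t))).prod volume) := by
  have hpr := hc.pr_meas
  have hm : Measurable fun p : (Ω × ℝ) × ℝ =>
      qk bt a ρ t θ p.1.2 (pr p.1.1) (X p.1.2 p.1.1) p.2 := by
    have hj := hX.joint
    have hj2 : Measurable fun p : (Ω × ℝ) × ℝ => X p.1.2 p.1.1 := hj.comp measurable_fst
    exact (qk_meas hc hθ).comp
      (f := fun p : (Ω × ℝ) × ℝ => ((p.1.2, pr p.1.1, X p.1.2 p.1.1), p.2))
      (((measurable_snd.comp measurable_fst).prodMk
        ((hpr.comp (measurable_fst.comp measurable_fst)).prodMk hj2)).prodMk measurable_snd)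
  refine ⟨hm, hm.aestronglyMeasurable, ?_⟩
  rw [hasFiniteIntegral_iff_enorm, lintegral_prod _ hm.enorm.aemeasurable,
    lintegral_prod_symm _ (hm.enorm.lintegral_prod_right').aemeasurable]
  have hi := lint_rpow t (qC ρ K M T) ht (-(1/2)) (by norm_num)
  have hb : ∀ᵐ r ∂(volume.restrict (Ioc 0 t)),
      ∫⁻ ω, ∫⁻ z, ‖qk bt a ρ t θ r (pr ω) (X r ω) z‖ₑ ∂volume ∂μ ≤
        ‖qC ρ K M T * (t - r) ^ (-(1/2) : ℝ)‖ₑ := by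
    have : ∀ᵐ r ∂(volume.restrict (Ioc 0 t)), r ≠ t := by
      refine ae_restrict_of_ae ?_
      simp [ae_iff]
    filter_upwards [ae_restrict_mem measurableSet_Ioc, this] with r hr hrt
    have hr2 : r < t := lt_of_le_of_ne hr.2 hrt
    refine (lintegral_mono fun ω => qk_L1 hc hθ htT r hr.1.le hr2 (pr ω) (X r ω)).trans ?_
    rw [lintegral_const, measure_univ, mul_one, Real.enorm_eq_ofReal_abs]
    exact ENNReal.ofReal_le_ofReal (le_abs_self _)
  exact (lintegral_mono_ae hb).trans_lt hi.2

lemma ito_fub (hc : Coef μ pr bt a β W ρ K C M T) {x : ℝ} {X : ℝ → Ω → ℝ}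
    (hX : Sol μ pr bt a β W ρ T x X) {t : ℝ} {θ : S → ℝ → ℝ → ℝ}
    (hθ : IsFlow a β K T t θ) (htT : t ≤ T) (τ : ℝ) (hτ : 0 < τ) (hτt : τ < t)
    (A : Set S) (hA : MeasurableSet A) (N : ℝ) (hAN : ∀ σ ∈ A, |θ σ 0 0| ≤ N)
    (f : ℝ → ℝ) (hf : Measurable f) (F0 : ℝ) (hfb : ∀ z, |f z| ≤ F0) :
    ∫ ω, (A.indicator 1 (pr ω) * ∫ z, f z * gk (ρ ^ 2 * (t - τ)) (X τ ω - θ (pr ω) z τ)) ∂μ =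
      ∫ p : Ω × ℝ, (A.indicator 1 (pr p.1) * f p.2) * gk (ρ ^ 2 * t) (x - θ (pr p.1) p.2 0)
        ∂(μ.prod volume) +
      ∫ p : (Ω × ℝ) × ℝ, (A.indicator 1 (pr p.1.1) * f p.2) *
          qk bt a ρ t θ p.1.2 (pr p.1.1) (X p.1.2 p.1.1) p.2
        ∂((μ.prod (volume.restrict (Ioc 0 τ))).prod volume) := by
  have hpr := hc.pr_meas
  have hρ := hc.hρ
  have ht : 0 < t := hτ.trans hτt
  have hind1 : Measurable (A.indicator (1 : S → ℝ)) := measurable_one.indicator hA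
  have hi1 : ∀ σ, |A.indicator (1 : S → ℝ) σ| ≤ 1 := by
    intro σ; by_cases h : σ ∈ A <;> simp [h]
  have hb : ∀ σ z, ‖A.indicator (1 : S → ℝ) σ * f z‖ ≤ F0 := by
    intro σ z
    rw [norm_mul, Real.norm_eq_abs, Real.norm_eq_abs]
    calc _ ≤ 1 * F0 := mul_le_mul (hi1 σ) (hfb z) (abs_nonneg _) zero_le_one
      _ = _ := one_mul _
  have I1 : Integrable (fun p : Ω × ℝ => (A.indicator 1 (pr p.1) * f p.2) *
      gk (ρ ^ 2 * (t - τ)) (X τ p.1 - θ (pr p.1) p.2 τ)) (μ.prod volume) :=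
    (k0_integrable hc hθ (X τ) (hX.meas τ) τ _ ⟨hτ.le, hτt.le⟩
      (by have : 0 < t - τ := by linarith
          positivity)).bdd_mul (by fun_prop) (ae_of_all _ fun p => hb _ _)
  have I2 : Integrable (fun p : Ω × ℝ => (A.indicator 1 (pr p.1) * f p.2) *
      gk (ρ ^ 2 * t) (x - θ (pr p.1) p.2 0)) (μ.prod volume) :=
    (k0_integrable hc hθ (fun _ => x) measurable_const 0 _ ⟨le_rfl, ht.le⟩
      (by positivity)).bdd_mul (by fun_prop) (ae_of_all _ fun p => hb _ _)
  have I3 : Integrable (fun p : (Ω × ℝ) × ℝ => (A.indicator 1 (pr p.1.1) * f p.2) *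
          qk bt a ρ t θ p.1.2 (pr p.1.1) (X p.1.2 p.1.1) p.2)
      ((μ.prod (volume.restrict (Ioc 0 τ))).prod volume) := by
    have h := (qk_integrable hc hX hθ ht htT).2
    have hle : (μ.prod (volume.restrict (Ioc 0 τ))).prod (volume : Measure ℝ) ≤
        (μ.prod (volume.restrict (Ioc 0 t))).prod volume := by
      refine Measure.prod_mono (Measure.prod_mono le_rfl ?_) le_rfl
      exact Measure.restrict_mono (Ioc_subset_Ioc_right hτt.le) le_rfl
    exact (h.mono_measure hle).bdd_mul (by fun_prop) (ae_of_all _ fun p => hb _ _)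
  have e := fun z => congrArg (fun c => f z * c)
    (ito_app hc hX hθ htT τ hτ hτt A hA N hAN z)
  have e2 := congrArg (fun F : ℝ → ℝ => ∫ z, F z) (funext e)
  simp only [mul_add] at e2
  simp only [← integral_const_mul] at e2 ⊢
  rw [integral_add] at e2
  · rw [integral_prod_symm _ I2, integral_prod_symm _ I3]
    have h1 := integral_integral_swap (f := fun ω z => (A.indicator 1 (pr ω) * f z) *
      gk (ρ ^ 2 * (t - τ)) (X τ ω - θ (pr ω) z τ)) I1
    calc _ = _ := by simpa only [mul_assoc] using h1
      _ = _ := by simpa only [mul_assoc, mul_left_comm] using e2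
      _ = _ := by simp only [mul_assoc, mul_left_comm]
  · have := I2.integral_prod_right
    simpa only [mul_assoc, mul_left_comm] using this
  · have := I3.integral_prod_right
    simpa only [mul_assoc, mul_left_comm] using this
end

section
variable {Ω S : Type*} [MeasurableSpace Ω] [MeasurableSpace S] {μ : Measure Ω}
    [IsProbabilityMeasure μ] {pr : Ω → S} {bt a : ℝ → ℝ → ℝ} {β : ℝ → S → ℝ} {W : ℝ → Ω → ℝ}
    {ρ K C M T : ℝ}

lemma ident_AN (hc : Coef μ pr bt a β W ρ K C M T) {x : ℝ} {X : ℝ → Ω → ℝ}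
    (hX : Sol μ pr bt a β W ρ T x X) {t : ℝ} {θ : S → ℝ → ℝ → ℝ}
    (hθ : IsFlow a β K T t θ) (ht : 0 < t) (htT : t ≤ T)
    (A : Set S) (hA : MeasurableSet A) (N : ℝ) (hAN : ∀ σ ∈ A, |θ σ 0 0| ≤ N)
    (f : ℝ → ℝ) (hf : Continuous f) (F0 : ℝ) (hfb : ∀ z, |f z| ≤ F0) :
    ∫ ω, (A.indicator 1 (pr ω) * f (X t ω)) ∂μ =
      ∫ p : Ω × ℝ, (A.indicator 1 (pr p.1) * f p.2) * gk (ρ ^ 2 * t) (x - θ (pr p.1) p.2 0)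
        ∂(μ.prod volume) +
      ∫ p : (Ω × ℝ) × ℝ, (A.indicator 1 (pr p.1.1) * f p.2) *
          qk bt a ρ t θ p.1.2 (pr p.1.1) (X p.1.2 p.1.1) p.2
        ∂((μ.prod (volume.restrict (Ioc 0 t))).prod volume) := by
  have hpr := hc.pr_meas
  have hρ := hc.hρ
  have hF0 : 0 ≤ F0 := (abs_nonneg _).trans (hfb 0)
  have hind1 : Measurable (A.indicator (1 : S → ℝ)) := measurable_one.indicator hA
  have hi1 : ∀ σ, |A.indicator (1 : S → ℝ) σ| ≤ 1 := by
    intro σ; by_cases h : σ ∈ A <;> simp [h]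
  have hb : ∀ σ z, ‖A.indicator (1 : S → ℝ) σ * f z‖ ≤ F0 := by
    intro σ z
    rw [norm_mul, Real.norm_eq_abs, Real.norm_eq_abs]
    calc _ ≤ 1 * F0 := mul_le_mul (hi1 σ) (hfb z) (abs_nonneg _) zero_le_one
      _ = _ := one_mul _
  set G : (Ω × ℝ) × ℝ → ℝ := fun p => (A.indicator 1 (pr p.1.1) * f p.2) *
          qk bt a ρ t θ p.1.2 (pr p.1.1) (X p.1.2 p.1.1) p.2 with hG
  have I3 : Integrable G ((μ.prod (volume.restrict (Ioc 0 t))).prod volume) :=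
    (qk_integrable hc hX hθ ht htT).2.bdd_mul
      (by have := hf.measurable; fun_prop) (ae_of_all _ fun p => hb _ _)
  set τ : ℕ → ℝ := fun n => t - t / (n + 2) with hτdef
  have hτ0 : ∀ n : ℕ, 0 < t / ((n : ℝ) + 2) := fun n => by positivity
  have hτ1 : ∀ n, τ n < t := fun n => by simp only [hτdef]; linarith [hτ0 n]
  have hτ2 : ∀ n, 0 < τ n := fun n => by
    simp only [hτdef]
    have : t / ((n : ℝ) + 2) < t := by
      rw [div_lt_iff₀ (by positivity)]; nlinarith [(Nat.cast_nonneg n : (0:ℝ) ≤ n)]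
    linarith
  have hlim0 : Filter.Tendsto (fun n : ℕ => t / ((n : ℝ) + 2)) Filter.atTop (nhds 0) :=
    Filter.Tendsto.const_div_atTop
      (Filter.tendsto_atTop_add_const_right _ _ tendsto_natCast_atTop_atTop) t
  have hlim : Filter.Tendsto τ Filter.atTop (nhds t) := by
    have := hlim0.const_sub t
    simpa using this
  have key := fun n => ito_fub hc hX hθ htT (τ n) (hτ2 n) (hτ1 n) A hA N hAN f hf.measurable F0 hfb
  have L1 : Filter.Tendsto (fun n => ∫ ω, (A.indicator 1 (pr ω) *
      ∫ z, f z * gk (ρ ^ 2 * (t - τ n)) (X (τ n) ω - θ (pr ω) z (τ n))) ∂μ) Filter.atTop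
      (nhds (∫ ω, (A.indicator 1 (pr ω) * f (X t ω)) ∂μ)) := by
    refine tendsto_integral_of_dominated_convergence (fun _ => F0 * rexp (K * T)) ?_
      (integrable_const _) ?_ ?_
    · intro n
      have hI := (k0_integrable hc hθ (X (τ n)) (hX.meas _) (τ n) (ρ ^ 2 * (t - τ n)) ⟨(hτ2 n).le, (hτ1 n).le⟩
        (by have := sub_pos.2 (hτ1 n); positivity)).bdd_mul (f := fun p : Ω × ℝ => f p.2) (c := F0)
        (by have := hf.measurable; fun_prop) (ae_of_all _ fun p => hfb _)
      exact (hind1.comp hpr).aestronglyMeasurable.mul hI.integral_prod_left.aestronglyMeasurable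
    · intro n
      refine ae_of_all _ fun ω => ?_
      have hv : 0 < ρ ^ 2 * (t - τ n) := by have := sub_pos.2 (hτ1 n); positivity
      rw [norm_mul, Real.norm_eq_abs]
      refine (mul_le_mul (hi1 _) ?_ (norm_nonneg _) zero_le_one).trans (one_mul _).le
      have h1 := gk_push hθ (pr ω) (X (τ n) ω) (τ n) _ ⟨(hτ2 n).le, (hτ1 n).le⟩ hv
      have h2 : ‖∫ z, f z * gk (ρ ^ 2 * (t - τ n)) (X (τ n) ω - θ (pr ω) z (τ n))‖ₑ ≤
          ENNReal.ofReal (F0 * rexp (K * T)) := by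
        refine (enorm_integral_le_lintegral_enorm _).trans ?_
        rw [ENNReal.ofReal_mul hF0]
        refine le_trans ?_ (mul_le_mul_right h1 _)
        rw [← lintegral_const_mul' _ _ ENNReal.ofReal_ne_top]
        refine lintegral_mono fun z => ?_
        rw [enorm_mul, Real.enorm_of_nonneg (gk_nonneg _ _), Real.enorm_eq_ofReal_abs]
        gcongr
        exact hfb z
      rw [← ofReal_norm] at h2
      exact (ENNReal.ofReal_le_ofReal_iff (by positivity)).1 h2
    · refine ae_of_all _ fun ω => ?_
      refine Filter.Tendsto.const_mul _ ?_
      have hK := hc.hK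
      have := approx_id f hf F0 hfb ρ (K * rexp (K * T)) (X t ω) hρ (by positivity)
        (fun n => √(t / (n + 2))) (fun n => X (τ n) ω) (fun n z => θ (pr ω) z (τ n))
        (fun n => by have := hτ0 n; positivity) ?_ (((hX.cont ω).tendsto t).comp hlim)
        (fun n => hθ.meas.comp (by fun_prop : Measurable fun z : ℝ => (pr ω, z, τ n))) ?_ ?_
      · refine this.congr fun n => ?_
        rw [Real.sq_sqrt (hτ0 n).le]
        simp only [hτdef, sub_sub_cancel]
      · have := hlim0.sqrt
        simpa using this
      · intro n z z'
        rw [Real.sq_sqrt (hτ0 n).le]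
        have := hθ.close (pr ω) z z' (τ n) ⟨(hτ2 n).le, (hτ1 n).le⟩
        simpa only [hτdef, sub_sub_cancel] using this
      · have h := ((hθ.cont (pr ω) (X t ω)).tendsto t).comp hlim
        have e : θ (pr ω) (X t ω) t = X t ω := by rw [hθ.eqn]; simp
        rw [e] at h
        exact h
  have L3 : Filter.Tendsto (fun n => ∫ p, G p ∂((μ.prod (volume.restrict (Ioc 0 (τ n)))).prod volume))
      Filter.atTop (nhds (∫ p, G p ∂((μ.prod (volume.restrict (Ioc 0 t))).prod volume))) := by
    have hle : ∀ s ≤ t, (μ.prod (volume.restrict (Ioc 0 s))).prod (volume : Measure ℝ) ≤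
        (μ.prod (volume.restrict (Ioc 0 t))).prod volume := by
      intro s hs
      refine Measure.prod_mono (Measure.prod_mono le_rfl ?_) le_rfl
      exact Measure.restrict_mono (Ioc_subset_Ioc_right hs) le_rfl
    have e : ∀ s ≤ t, ∫ p, G p ∂((μ.prod (volume.restrict (Ioc 0 s))).prod volume) =
        ∫ r in Ioc 0 s, ∫ ω, ∫ z, G ((ω, r), z) ∂volume ∂μ := by
      intro s hs
      have hI := I3.mono_measure (hle s hs)
      rw [integral_prod _ hI, integral_prod_symm _ hI.integral_prod_left]
    have hIr : IntegrableOn (fun r => ∫ ω, ∫ z, G ((ω, r), z) ∂volume ∂μ) (Icc 0 t) := by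
      rw [integrableOn_Icc_iff_integrableOn_Ioc]
      exact I3.integral_prod_left.integral_prod_right
    have hcon := intervalIntegral.continuousOn_primitive hIr
    rw [e t le_rfl]
    have h1 : Filter.Tendsto τ Filter.atTop (nhdsWithin t (Icc 0 t)) :=
      tendsto_nhdsWithin_iff.2 ⟨hlim, Filter.Eventually.of_forall fun n => ⟨(hτ2 n).le, (hτ1 n).le⟩⟩
    have := (hcon t ⟨ht.le, le_rfl⟩).tendsto.comp h1
    refine this.congr fun n => ?_
    rw [e (τ n) (hτ1 n).le]; rfl
  refine tendsto_nhds_unique L1 ?_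
  simp_rw [key]
  exact L3.const_add _

lemma ident_A (hc : Coef μ pr bt a β W ρ K C M T) {x : ℝ} {X : ℝ → Ω → ℝ}
    (hX : Sol μ pr bt a β W ρ T x X) {t : ℝ} {θ : S → ℝ → ℝ → ℝ}
    (hθ : IsFlow a β K T t θ) (ht : 0 < t) (htT : t ≤ T)
    (A : Set S) (hA : MeasurableSet A)
    (f : ℝ → ℝ) (hf : Continuous f) (F0 : ℝ) (hfb : ∀ z, |f z| ≤ F0) :
    ∫ ω, (A.indicator 1 (pr ω) * f (X t ω)) ∂μ =
      ∫ p : Ω × ℝ, (A.indicator 1 (pr p.1) * f p.2) * gk (ρ ^ 2 * t) (x - θ (pr p.1) p.2 0)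
        ∂(μ.prod volume) +
      ∫ p : (Ω × ℝ) × ℝ, (A.indicator 1 (pr p.1.1) * f p.2) *
          qk bt a ρ t θ p.1.2 (pr p.1.1) (X p.1.2 p.1.1) p.2
        ∂((μ.prod (volume.restrict (Ioc 0 t))).prod volume) := by
  have hpr := hc.pr_meas
  have hρ := hc.hρ
  have hfm := hf.measurable
  have hF0 : 0 ≤ F0 := (abs_nonneg _).trans (hfb 0)
  set AN : ℕ → Set S := fun n => A ∩ {σ | |θ σ 0 0| ≤ n} with hANdef
  have hANm : ∀ n, MeasurableSet (AN n) := fun n => by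
    refine hA.inter (measurableSet_le ?_ measurable_const)
    exact (hθ.meas.comp (by fun_prop : Measurable fun σ : S => (σ, (0:ℝ), (0:ℝ)))).abs
  have hind1 : ∀ n, Measurable ((AN n).indicator (1 : S → ℝ)) := fun n =>
    measurable_one.indicator (hANm n)
  have hi1 : ∀ n σ, |(AN n).indicator (1 : S → ℝ) σ| ≤ 1 := by
    intro n σ; by_cases h : σ ∈ AN n <;> simp [h]
  have hb : ∀ n σ z, ‖(AN n).indicator (1 : S → ℝ) σ * f z‖ ≤ F0 := by
    intro n σ z
    rw [norm_mul, Real.norm_eq_abs, Real.norm_eq_abs]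
    calc _ ≤ 1 * F0 := mul_le_mul (hi1 n σ) (hfb z) (abs_nonneg _) zero_le_one
      _ = _ := one_mul _
  have hl : ∀ σ z, Filter.Tendsto (fun n => (AN n).indicator (1 : S → ℝ) σ * f z) Filter.atTop
      (nhds (A.indicator (1 : S → ℝ) σ * f z)) := by
    intro σ z
    refine Filter.Tendsto.mul_const _ ?_
    refine tendsto_const_nhds.congr' ?_
    obtain ⟨n0, hn0⟩ := exists_nat_ge |θ σ 0 0|
    filter_upwards [Filter.eventually_ge_atTop n0] with n hn
    have : |θ σ 0 0| ≤ n := hn0.trans (by exact_mod_cast hn)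
    by_cases h : σ ∈ A <;> simp [hANdef, h, this, indicator]
  have gen : ∀ {E : Type _} [MeasurableSpace E] (m : Measure E) (s : E → S) (y : E → ℝ) (k : E → ℝ),
      Measurable s → Measurable y → Integrable k m →
      Filter.Tendsto (fun n => ∫ e, ((AN n).indicator (1 : S → ℝ) (s e) * f (y e)) * k e ∂m)
        Filter.atTop (nhds (∫ e, (A.indicator (1 : S → ℝ) (s e) * f (y e)) * k e ∂m)) := by
    intro E _ m s y k hs hy hk
    refine tendsto_integral_of_dominated_convergence (fun e => F0 * ‖k e‖) ?_ (hk.norm.const_mul _) ?_ ?_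
    · intro n
      have := hind1 n
      exact (by fun_prop : Measurable fun e => (AN n).indicator (1 : S → ℝ) (s e) * f (y e)).aestronglyMeasurable.mul
        hk.aestronglyMeasurable
    · intro n
      refine ae_of_all _ fun e => ?_
      rw [norm_mul]
      exact mul_le_mul_of_nonneg_right (hb n _ _) (norm_nonneg _)
    · exact ae_of_all _ fun e => (hl _ _).mul_const _
  have L1 := gen μ pr (X t) (fun _ => 1) hpr (hX.meas t) (integrable_const _)
  have L2 := gen (μ.prod volume) (fun p : Ω × ℝ => pr p.1) (fun p => p.2) _ (by fun_prop) (by fun_prop)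
    (k0_integrable hc hθ (fun _ => x) measurable_const 0 (ρ ^ 2 * t) ⟨le_rfl, ht.le⟩ (by positivity))
  have L3 := gen _ (fun p : (Ω × ℝ) × ℝ => pr p.1.1) (fun p => p.2) _ (by fun_prop) (by fun_prop)
    (qk_integrable hc hX hθ ht htT).2
  simp only [mul_one] at L1
  refine tendsto_nhds_unique L1 ?_
  refine (L2.add L3).congr fun n => ?_
  exact (ident_AN hc hX hθ ht htT (AN n) (hANm n) n (fun σ hσ => hσ.2) f hf F0 hfb).symm
end

lemma prod_meas_ext {S : Type*} [MeasurableSpace S] (m n : Measure (S × ℝ)) [IsFiniteMeasure m]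
    [IsFiniteMeasure n]
    (h : ∀ (A : Set S), MeasurableSet A → ∀ (f : ℝ → ℝ), Continuous f → ∀ F0 : ℝ,
      (∀ z, |f z| ≤ F0) →
      ∫ p : S × ℝ, A.indicator 1 p.1 * f p.2 ∂m = ∫ p : S × ℝ, A.indicator 1 p.1 * f p.2 ∂n) :
    m = n := by
  refine Measure.ext_prod fun {A B} hA hB => ?_
  have e : (m.restrict (A ×ˢ univ)).map Prod.snd = (n.restrict (A ×ˢ univ)).map Prod.snd := by
    refine ext_of_forall_integral_eq_of_IsFiniteMeasure fun f => ?_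
    have h1 := h A hA f f.continuous ‖f‖ (fun z => f.norm_coe_le_norm z)
    have e1 : ∀ m : Measure (S × ℝ), ∫ z, f z ∂((m.restrict (A ×ˢ univ)).map Prod.snd) =
        ∫ p : S × ℝ, A.indicator 1 p.1 * f p.2 ∂m := by
      intro m
      rw [integral_map measurable_snd.aemeasurable f.continuous.measurable.aestronglyMeasurable,
        ← integral_indicator (hA.prod MeasurableSet.univ)]
      congr 1; ext p
      by_cases hp : p.1 ∈ A <;> simp [hp, indicator]
    rw [e1, e1, h1]
  have h2 := congrArg (fun q : Measure ℝ => q B) e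
  simp only [Measure.map_apply measurable_snd hB, Measure.restrict_apply (measurable_snd hB)] at h2
  have e3 : Prod.snd ⁻¹' B ∩ A ×ˢ univ = A ×ˢ B := by
    ext p; simp [and_comm]
  rwa [e3] at h2

/-- pushforward of a positive part density -/
def pdens {E F : Type*} [MeasurableSpace E] [MeasurableSpace F] (m : Measure E) (φ : E → F)
    (k : E → ℝ) : Measure F := (m.withDensity fun e => ENNReal.ofReal (k e)).map φ

lemma pdens_fin {E F : Type*} [MeasurableSpace E] [MeasurableSpace F] (m : Measure E) (φ : E → F)
    (k : E → ℝ) (hk : Integrable k m) : IsFiniteMeasure (pdens m φ k) := by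
  have := isFiniteMeasure_withDensity_ofReal hk.2
  unfold pdens
  infer_instance

lemma pdens_int {E F : Type*} [MeasurableSpace E] [MeasurableSpace F] (m : Measure E) (φ : E → F)
    (hφ : Measurable φ) (k : E → ℝ) (hkm : Measurable k) (g : F → ℝ) (hg : Measurable g) :
    ∫ z, g z ∂(pdens m φ k) = ∫ e, g (φ e) * max (k e) 0 ∂m := by
  unfold pdens
  rw [integral_map hφ.aemeasurable hg.aestronglyMeasurable,
    integral_withDensity_eq_integral_toReal_smul (by fun_prop) (by simp)]
  congr 1; ext e
  rw [smul_eq_mul, mul_comm, ENNReal.toReal_ofReal']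

lemma pdens_sub {E F : Type*} [MeasurableSpace E] [MeasurableSpace F] (m : Measure E) (φ : E → F)
    (hφ : Measurable φ) (k : E → ℝ) (hkm : Measurable k) (hk : Integrable k m)
    (g : F → ℝ) (hg : Measurable g) (G0 : ℝ) (hgb : ∀ z, |g z| ≤ G0) :
    ∫ e, g (φ e) * k e ∂m = ∫ z, g z ∂(pdens m φ k) - ∫ z, g z ∂(pdens m φ (fun e => - k e)) := by
  rw [pdens_int m φ hφ k hkm g hg, pdens_int m φ hφ (fun e => - k e) hkm.neg g hg, ← integral_sub]
  · congr 1; ext e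
    rw [← mul_sub]
    congr 1
    rcases le_total (k e) 0 with h | h
    · simp [h]
    · simp [h]
  · exact hk.pos_part.bdd_mul (hg.comp hφ).aestronglyMeasurable (ae_of_all _ fun e => hgb _)
  · exact hk.neg.pos_part.bdd_mul (hg.comp hφ).aestronglyMeasurable (ae_of_all _ fun e => hgb _)

lemma ext_ident {S E₁ E₂ E₃ : Type*} [MeasurableSpace S] [MeasurableSpace E₁] [MeasurableSpace E₂]
    [MeasurableSpace E₃] (m₁ : Measure E₁) (m₂ : Measure E₂) (m₃ : Measure E₃)
    (φ₁ : E₁ → S × ℝ) (φ₂ : E₂ → S × ℝ) (φ₃ : E₃ → S × ℝ)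
    (hφ₁ : Measurable φ₁) (hφ₂ : Measurable φ₂) (hφ₃ : Measurable φ₃)
    (k₁ : E₁ → ℝ) (k₂ : E₂ → ℝ) (k₃ : E₃ → ℝ)
    (hm₁ : Measurable k₁) (hm₂ : Measurable k₂) (hm₃ : Measurable k₃)
    (hk₁ : Integrable k₁ m₁) (hk₂ : Integrable k₂ m₂) (hk₃ : Integrable k₃ m₃)
    (h : ∀ (A : Set S), MeasurableSet A → ∀ (f : ℝ → ℝ), Continuous f → ∀ F0 : ℝ,
      (∀ z, |f z| ≤ F0) →
      ∫ e, (A.indicator 1 (φ₁ e).1 * f (φ₁ e).2) * k₁ e ∂m₁ =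
      ∫ e, (A.indicator 1 (φ₂ e).1 * f (φ₂ e).2) * k₂ e ∂m₂ +
      ∫ e, (A.indicator 1 (φ₃ e).1 * f (φ₃ e).2) * k₃ e ∂m₃)
    (g : S × ℝ → ℝ) (hg : Measurable g) (G0 : ℝ) (hgb : ∀ z, |g z| ≤ G0) :
    ∫ e, g (φ₁ e) * k₁ e ∂m₁ = ∫ e, g (φ₂ e) * k₂ e ∂m₂ + ∫ e, g (φ₃ e) * k₃ e ∂m₃ := by
  have f1 := pdens_fin m₁ φ₁ k₁ hk₁
  have f2 := pdens_fin m₂ φ₂ k₂ hk₂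
  have f3 := pdens_fin m₃ φ₃ k₃ hk₃
  have f1' := pdens_fin m₁ φ₁ (fun e => - k₁ e) hk₁.neg
  have f2' := pdens_fin m₂ φ₂ (fun e => - k₂ e) hk₂.neg
  have f3' := pdens_fin m₃ φ₃ (fun e => - k₃ e) hk₃.neg
  have gi : ∀ (q : Measure (S × ℝ)) [IsFiniteMeasure q] (g : S × ℝ → ℝ), Measurable g →
      ∀ G0 : ℝ, (∀ z, |g z| ≤ G0) → Integrable g q := fun q _ g hg G0 hgb =>
    Integrable.of_bound hg.aestronglyMeasurable G0 (ae_of_all _ hgb)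
  have ee : pdens m₁ φ₁ k₁ + pdens m₂ φ₂ (fun e => - k₂ e) + pdens m₃ φ₃ (fun e => - k₃ e) =
      pdens m₂ φ₂ k₂ + pdens m₃ φ₃ k₃ + pdens m₁ φ₁ (fun e => - k₁ e) := by
    refine prod_meas_ext _ _ fun A hA f hf F0 hfb => ?_
    have hfm := hf.measurable
    have hind1 : Measurable (A.indicator (1 : S → ℝ)) := measurable_one.indicator hA
    have hgm : Measurable fun p : S × ℝ => A.indicator (1 : S → ℝ) p.1 * f p.2 := by fun_prop
    have hgb : ∀ p : S × ℝ, |A.indicator (1 : S → ℝ) p.1 * f p.2| ≤ F0 := by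
      intro p
      rw [abs_mul]
      have hi1 : |A.indicator (1 : S → ℝ) p.1| ≤ 1 := by
        by_cases h : p.1 ∈ A <;> simp [h]
      calc _ ≤ 1 * F0 := mul_le_mul hi1 (hfb p.2) (abs_nonneg _) zero_le_one
        _ = _ := one_mul _
    have h0 := h A hA f hf F0 hfb
    rw [pdens_sub m₁ φ₁ hφ₁ k₁ hm₁ hk₁ _ hgm F0 hgb, pdens_sub m₂ φ₂ hφ₂ k₂ hm₂ hk₂ _ hgm F0 hgb,
      pdens_sub m₃ φ₃ hφ₃ k₃ hm₃ hk₃ _ hgm F0 hgb] at h0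
    have := fun q (i : IsFiniteMeasure q) => gi q _ hgm F0 hgb
    rw [integral_add_measure (this _ inferInstance) (this _ inferInstance),
      integral_add_measure (this _ inferInstance) (this _ inferInstance),
      integral_add_measure (this _ inferInstance) (this _ inferInstance),
      integral_add_measure (this _ inferInstance) (this _ inferInstance)]
    linarith
  have h0 := congrArg (fun q => ∫ z, g z ∂q) ee
  have := fun q (i : IsFiniteMeasure q) => gi q _ hg G0 hgb
  rw [integral_add_measure (this _ inferInstance) (this _ inferInstance),
    integral_add_measure (this _ inferInstance) (this _ inferInstance),
    integral_add_measure (this _ inferInstance) (this _ inferInstance),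
    integral_add_measure (this _ inferInstance) (this _ inferInstance)] at h0
  rw [pdens_sub m₁ φ₁ hφ₁ k₁ hm₁ hk₁ _ hg G0 hgb, pdens_sub m₂ φ₂ hφ₂ k₂ hm₂ hk₂ _ hg G0 hgb,
      pdens_sub m₃ φ₃ hφ₃ k₃ hm₃ hk₃ _ hg G0 hgb]
  linarith

section
variable {Ω S : Type*} [MeasurableSpace Ω] [MeasurableSpace S] {μ : Measure Ω}
    [IsProbabilityMeasure μ] {pr : Ω → S} {bt a : ℝ → ℝ → ℝ} {β : ℝ → S → ℝ} {W : ℝ → Ω → ℝ}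
    {ρ K C M T : ℝ}

lemma ident (hc : Coef μ pr bt a β W ρ K C M T) {x : ℝ} {X : ℝ → Ω → ℝ}
    (hX : Sol μ pr bt a β W ρ T x X) {t : ℝ} {θ : S → ℝ → ℝ → ℝ}
    (hθ : IsFlow a β K T t θ) (ht : 0 < t) (htT : t ≤ T)
    (g : S × ℝ → ℝ) (hg : Measurable g) (G0 : ℝ) (hgb : ∀ z, |g z| ≤ G0) :
    Integrable (fun p : Ω × ℝ => g (pr p.1, p.2) * gk (ρ ^ 2 * t) (x - θ (pr p.1) p.2 0))
      (μ.prod volume) ∧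
    IntegrableOn (fun r => ∫ ω, ∫ z, g (pr ω, z) * qk bt a ρ t θ r (pr ω) (X r ω) z ∂volume ∂μ) (Ioc 0 t) ∧
    ∫ ω, g (pr ω, X t ω) ∂μ =
      ∫ ω, ∫ z, g (pr ω, z) * gk (ρ ^ 2 * t) (x - θ (pr ω) z 0) ∂volume ∂μ +
      ∫ r in Ioc 0 t, ∫ ω, ∫ z, g (pr ω, z) * qk bt a ρ t θ r (pr ω) (X r ω) z ∂volume ∂μ := by
  have hpr := hc.pr_meas
  have hρ := hc.hρ
  have J2 := k0_integrable hc hθ (fun _ => x) measurable_const 0 (ρ ^ 2 * t) ⟨le_rfl, ht.le⟩ (by positivity)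
  have J2m : Measurable fun p : Ω × ℝ => gk (ρ ^ 2 * t) (x - θ (pr p.1) p.2 0) := by
    have h1 : Measurable fun p : Ω × ℝ => θ (pr p.1) p.2 0 :=
      hθ.meas.comp (f := fun p : Ω × ℝ => (pr p.1, p.2, (0:ℝ))) (by fun_prop)
    exact (gk_cont _).measurable.comp (measurable_const.sub h1)
  obtain ⟨J3m, J3⟩ := qk_integrable hc hX hθ ht htT
  have I2 := J2.bdd_mul (f := fun p : Ω × ℝ => g (pr p.1, p.2)) (c := G0)
    (hg.comp (by fun_prop)).aestronglyMeasurable (ae_of_all _ fun p => hgb _)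
  have I3 := J3.bdd_mul (f := fun p : (Ω × ℝ) × ℝ => g (pr p.1.1, p.2)) (c := G0)
    (hg.comp (by fun_prop)).aestronglyMeasurable (ae_of_all _ fun p => hgb _)
  refine ⟨I2, I3.integral_prod_left.integral_prod_right, ?_⟩
  have hm1 : Measurable fun ω => (pr ω, X t ω) := hpr.prodMk (hX.meas t)
  have := ext_ident μ (μ.prod volume) ((μ.prod (volume.restrict (Ioc 0 t))).prod volume)
    (fun ω => (pr ω, X t ω)) (fun p : Ω × ℝ => (pr p.1, p.2)) (fun p : (Ω × ℝ) × ℝ => (pr p.1.1, p.2))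
    hm1 (by fun_prop) (by fun_prop) (fun _ => 1) _ _ measurable_const J2m J3m (integrable_const _) J2 J3
    (fun A hA f hf F0 hfb => by
      simpa only [mul_one] using ident_A hc hX hθ ht htT A hA f hf F0 hfb) g hg G0 hgb
  simp only [mul_one] at this
  rw [this, integral_prod _ I2, integral_prod _ I3, integral_prod_symm _ I3.integral_prod_left]
end

lemma exp_neg_le_rpow (y : ℝ) (hy : 0 < y) : rexp (-y) ≤ y ^ (-(1/8) : ℝ) := by
  rw [Real.rpow_def_of_pos hy]
  apply Real.exp_le_exp.2
  have := Real.log_le_sub_one_of_pos hy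
  linarith

lemma beta_ptw (t r : ℝ) (h0 : 0 < r) (h1 : r < t) :
    (t - r) ^ (-(5/8) : ℝ) * r ^ (-(3/4) : ℝ) ≤
      (t / 2) ^ (-(5/8) : ℝ) * r ^ (-(3/4) : ℝ) + (t / 2) ^ (-(3/4) : ℝ) * (t - r) ^ (-(5/8) : ℝ) := by
  have ht : 0 < t := h0.trans h1
  have htr : 0 < t - r := by linarith
  have a1 : 0 ≤ (t / 2) ^ (-(5/8) : ℝ) * r ^ (-(3/4) : ℝ) := by positivity
  have a2 : 0 ≤ (t / 2) ^ (-(3/4) : ℝ) * (t - r) ^ (-(5/8) : ℝ) := by positivity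
  rcases le_total r (t / 2) with h | h
  · have : (t - r) ^ (-(5/8) : ℝ) ≤ (t / 2) ^ (-(5/8) : ℝ) :=
      Real.rpow_le_rpow_of_nonpos (by positivity) (by linarith) (by norm_num)
    have := mul_le_mul_of_nonneg_right this (by positivity : 0 ≤ r ^ (-(3/4) : ℝ))
    linarith
  · have : r ^ (-(3/4) : ℝ) ≤ (t / 2) ^ (-(3/4) : ℝ) :=
      Real.rpow_le_rpow_of_nonpos (by positivity) h (by norm_num)
    have := mul_le_mul_of_nonneg_left this (by positivity : 0 ≤ (t - r) ^ (-(5/8) : ℝ))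
    linarith

lemma beta_int (t : ℝ) (ht : 0 < t) :
    IntegrableOn (fun r : ℝ => (t / 2) ^ (-(5/8) : ℝ) * r ^ (-(3/4) : ℝ) +
      (t / 2) ^ (-(3/4) : ℝ) * (t - r) ^ (-(5/8) : ℝ)) (Ioc 0 t) ∧
    ∫ r in Ioc 0 t, ((t / 2) ^ (-(5/8) : ℝ) * r ^ (-(3/4) : ℝ) +
      (t / 2) ^ (-(3/4) : ℝ) * (t - r) ^ (-(5/8) : ℝ)) ≤ 16 * t ^ (-(3/8) : ℝ) := by
  have i1 : IntervalIntegrable (fun r : ℝ => r ^ (-(3/4) : ℝ)) volume 0 t :=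
    intervalIntegral.intervalIntegrable_rpow' (by norm_num)
  have i2 : IntervalIntegrable (fun r : ℝ => r ^ (-(5/8) : ℝ)) volume 0 t :=
    intervalIntegral.intervalIntegrable_rpow' (by norm_num)
  have i3 := i2.comp_sub_left t
  simp only [sub_zero, sub_self] at i3
  have i4 := (i1.const_mul ((t / 2) ^ (-(5/8) : ℝ))).add (i3.symm.const_mul ((t / 2) ^ (-(3/4) : ℝ)))
  refine ⟨(intervalIntegrable_iff_integrableOn_Ioc_of_le ht.le).1 i4, ?_⟩
  rw [← intervalIntegral.integral_of_le ht.le, intervalIntegral.integral_add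
    (i1.const_mul _) (i3.symm.const_mul _), intervalIntegral.integral_const_mul,
    intervalIntegral.integral_const_mul, intervalIntegral.integral_comp_sub_left
      (fun r : ℝ => r ^ (-(5/8) : ℝ)) t, sub_self, sub_zero,
    integral_rpow (Or.inl (by norm_num)), integral_rpow (Or.inl (by norm_num))]
  have z1 : (0:ℝ) ^ (-(3/4) + 1 : ℝ) = 0 := Real.zero_rpow (by norm_num)
  have z2 : (0:ℝ) ^ (-(5/8) + 1 : ℝ) = 0 := Real.zero_rpow (by norm_num)
  rw [z1, z2, sub_zero, sub_zero]
  have e : ∀ c : ℝ, -1 ≤ c → (t / 2) ^ c ≤ 2 * t ^ c := by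
    intro c hc
    rw [Real.div_rpow ht.le (by norm_num), div_eq_inv_mul, ← Real.rpow_neg (by norm_num)]
    gcongr
    calc (2:ℝ) ^ (-c) ≤ 2 ^ (1:ℝ) := Real.rpow_le_rpow_of_exponent_le (by norm_num) (by linarith)
      _ = 2 := by simp
  have e1 := e (-(5/8)) (by norm_num)
  have e2 := e (-(3/4)) (by norm_num)
  have p1 : t ^ (-(5/8) : ℝ) * t ^ (-(3/4) + 1 : ℝ) = t ^ (-(3/8) : ℝ) := by
    rw [← Real.rpow_add ht]; norm_num
  have p2 : t ^ (-(3/4) : ℝ) * t ^ (-(5/8) + 1 : ℝ) = t ^ (-(3/8) : ℝ) := by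
    rw [← Real.rpow_add ht]; norm_num
  have q1 : (t / 2) ^ (-(5/8) : ℝ) * (t ^ (-(3/4) + 1 : ℝ) / (-(3/4) + 1)) ≤ 8 * t ^ (-(3/8) : ℝ) := by
    calc _ ≤ (2 * t ^ (-(5/8) : ℝ)) * (t ^ (-(3/4) + 1 : ℝ) / (-(3/4) + 1)) := by
          apply mul_le_mul_of_nonneg_right e1
          have : (0:ℝ) ≤ -(3/4) + 1 := by norm_num
          positivity
      _ = 8 * (t ^ (-(5/8) : ℝ) * t ^ (-(3/4) + 1 : ℝ)) := by ring
      _ = _ := by rw [p1]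
  have q2 : (t / 2) ^ (-(3/4) : ℝ) * (t ^ (-(5/8) + 1 : ℝ) / (-(5/8) + 1)) ≤ 8 * t ^ (-(3/8) : ℝ) := by
    calc _ ≤ (2 * t ^ (-(3/4) : ℝ)) * (t ^ (-(5/8) + 1 : ℝ) / (-(5/8) + 1)) := by
          apply mul_le_mul_of_nonneg_right e2
          have : (0:ℝ) ≤ -(5/8) + 1 := by norm_num
          positivity
      _ = 16 / 3 * (t ^ (-(3/4) : ℝ) * t ^ (-(5/8) + 1 : ℝ)) := by ring
      _ = 16 / 3 * t ^ (-(3/8) : ℝ) := by rw [p2]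
      _ ≤ _ := by gcongr; norm_num
  linarith

lemma kern_choice (c T : ℝ) (hc : 0 ≤ c) (hT : 0 < T) : ∃ l : ℝ, 0 < l ∧ ∀ t, 0 < t → t ≤ T →
    ∃ w : ℝ → ℝ, IntegrableOn w (Ioc 0 t) ∧
      (∀ r, 0 < r → r < t → c * (t - r) ^ (-(1/2) : ℝ) * (r ^ (-(3/4) : ℝ) * rexp (l * r)) ≤ w r) ∧
      ∫ r in Ioc 0 t, w r ≤ 1 / 2 * (t ^ (-(3/4) : ℝ) * rexp (l * t)) := by
  set δ : ℝ := 1 / (32 * (c + 1) * T ^ (3/8 : ℝ)) with hδ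
  have hδ0 : 0 < δ := by positivity
  refine ⟨δ ^ (-8 : ℝ), by positivity, fun t ht htT => ?_⟩
  set l := δ ^ (-8 : ℝ) with hl
  have hl0 : 0 < l := by positivity
  have hlδ : l ^ (-(1/8) : ℝ) = δ := by
    rw [hl, ← Real.rpow_mul hδ0.le]; norm_num
  obtain ⟨b1, b2⟩ := beta_int t ht
  refine ⟨_, b1.const_mul (c * rexp (l * t) * δ), fun r h0 h1 => ?_, ?_⟩
  · have htr : 0 < t - r := by linarith
    have e1 : rexp (l * r) ≤ rexp (l * t) * (δ * (t - r) ^ (-(1/8) : ℝ)) := by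
      have := exp_neg_le_rpow (l * (t - r)) (by positivity)
      rw [Real.mul_rpow hl0.le htr.le, hlδ] at this
      calc rexp (l * r) = rexp (l * t) * rexp (-(l * (t - r))) := by
            rw [← Real.exp_add]; congr 1; ring
        _ ≤ _ := by gcongr
    have e2 : (t - r) ^ (-(1/2) : ℝ) * (t - r) ^ (-(1/8) : ℝ) = (t - r) ^ (-(5/8) : ℝ) := by
      rw [← Real.rpow_add htr]; norm_num
    calc c * (t - r) ^ (-(1/2) : ℝ) * (r ^ (-(3/4) : ℝ) * rexp (l * r))
        ≤ c * (t - r) ^ (-(1/2) : ℝ) * (r ^ (-(3/4) : ℝ) *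
          (rexp (l * t) * (δ * (t - r) ^ (-(1/8) : ℝ)))) := by gcongr
      _ = c * rexp (l * t) * δ * (((t - r) ^ (-(1/2) : ℝ) * (t - r) ^ (-(1/8) : ℝ)) * r ^ (-(3/4) : ℝ)) := by
          ring
      _ ≤ _ := by
          rw [e2]
          exact mul_le_mul_of_nonneg_left (beta_ptw t r h0 h1) (by positivity)
  · rw [integral_const_mul]
    have e3 : t ^ (-(3/8) : ℝ) ≤ T ^ (3/8 : ℝ) * t ^ (-(3/4) : ℝ) := by
      have : t ^ (-(3/8) : ℝ) = t ^ (3/8 : ℝ) * t ^ (-(3/4) : ℝ) := by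
        rw [← Real.rpow_add ht]; norm_num
      rw [this]
      gcongr
    have e4 : c * δ * (16 * T ^ (3/8 : ℝ)) ≤ 1 / 2 := by
      have : 0 < T ^ (3/8 : ℝ) := by positivity
      have : c * δ * (16 * T ^ (3/8 : ℝ)) = c / (c + 1) * (1 / 2) := by
        rw [hδ]; field_simp; ring
      rw [this]
      have : c / (c + 1) ≤ 1 := by rw [div_le_one (by positivity)]; linarith
      linarith
    calc _ ≤ c * rexp (l * t) * δ * (16 * (T ^ (3/8 : ℝ) * t ^ (-(3/4) : ℝ))) := by
          refine mul_le_mul_of_nonneg_left (b2.trans ?_) (by positivity)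
          gcongr
      _ = (c * δ * (16 * T ^ (3/8 : ℝ))) * (t ^ (-(3/4) : ℝ) * rexp (l * t)) := by ring
      _ ≤ _ := by gcongr

lemma c1_of_slopes (u : ℝ → ℝ) (C0 : ℝ)
    (h : ∀ x y h k : ℝ, h ≠ 0 → k ≠ 0 → |(u (x + h) - u x) / h - (u (y + k) - u y) / k| ≤
      C0 * (√|h| + √|k| + √|x - y|)) : ContDiff ℝ 1 u := by
  set F : Filter ℝ := nhdsWithin 0 {0}ᶜ with hF
  have hFne : F.NeBot := by rw [hF]; infer_instance
  have hmem : ∀ᶠ s in F, s ≠ 0 := self_mem_nhdsWithin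
  have hz : Filter.Tendsto (fun s : ℝ => C0 * √|s|) F (nhds 0) := by
    have : Filter.Tendsto (fun s : ℝ => C0 * √|s|) (nhds 0) (nhds (C0 * √|0|)) :=
      (by fun_prop : Continuous fun s : ℝ => C0 * √|s|).tendsto 0
    simp only [abs_zero, sqrt_zero, mul_zero] at this
    exact this.mono_left nhdsWithin_le_nhds
  have hlim : ∀ x, ∃ d, Filter.Tendsto (fun s => (u (x + s) - u x) / s) F (nhds d) := by
    intro x
    apply cauchy_map_iff_exists_tendsto.1
    rw [Metric.cauchy_iff]
    refine ⟨inferInstance, fun ε hε => ?_⟩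
    have h1 : ∀ᶠ s in F, C0 * √|s| < ε / 2 := hz.eventually (gt_mem_nhds (by positivity))
    refine ⟨_, Filter.image_mem_map (hmem.and h1), ?_⟩
    rintro _ ⟨s, ⟨hs0, hs1⟩, rfl⟩ _ ⟨s', ⟨hs0', hs1'⟩, rfl⟩
    rw [Real.dist_eq]
    have := h x x s s' hs0 hs0'
    simp only [sub_self, abs_zero, sqrt_zero, add_zero, mul_add] at this
    linarith
  choose d hd using hlim
  have hder : ∀ x, HasDerivAt u (d x) x := by
    intro x
    rw [hasDerivAt_iff_tendsto_slope_zero]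
    refine (hd x).congr fun s => ?_
    rw [smul_eq_mul, div_eq_inv_mul]
  have hdd : ∀ x y, |d x - d y| ≤ C0 * √|x - y| := by
    intro x y
    have h1 : Filter.Tendsto (fun s => |(u (x + s) - u x) / s - (u (y + s) - u y) / s|) F
        (nhds |d x - d y|) := ((hd x).sub (hd y)).abs
    have h2 : Filter.Tendsto (fun s : ℝ => C0 * √|s| + C0 * √|s| + C0 * √|x - y|) F
        (nhds (0 + 0 + C0 * √|x - y|)) := (hz.add hz).add_const _
    rw [zero_add, zero_add] at h2
    refine le_of_tendsto_of_tendsto h1 h2 ?_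
    filter_upwards [hmem] with s hs
    have := h x y s s hs hs
    linarith
  rw [contDiff_one_iff_deriv]
  refine ⟨fun x => (hder x).differentiableAt, ?_⟩
  have e : deriv u = d := funext fun x => (hder x).deriv
  rw [e, continuous_iff_continuousAt]
  intro y
  have h3 : Filter.Tendsto (fun x => C0 * √|x - y|) (nhds y) (nhds 0) := by
    have : Filter.Tendsto (fun x : ℝ => C0 * √|x - y|) (nhds y) (nhds (C0 * √|y - y|)) :=
      (by fun_prop : Continuous fun x : ℝ => C0 * √|x - y|).tendsto y
    simpa using this
  rw [ContinuousAt, tendsto_iff_norm_sub_tendsto_zero]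
  exact squeeze_zero (fun _ => norm_nonneg _) (fun x => hdd x y) h3

section
variable {Ω S : Type*} [MeasurableSpace Ω] [MeasurableSpace S] {μ : Measure Ω}
    [IsProbabilityMeasure μ] {pr : Ω → S} {bt a : ℝ → ℝ → ℝ} {β : ℝ → S → ℝ} {W : ℝ → Ω → ℝ}
    {ρ K C M T : ℝ}

/-- difference of two slopes -/
def dsl (F : ℝ → ℝ) (x h y k : ℝ) : ℝ := (F (x + h) - F x) / h - (F (y + k) - F y) / k

lemma dsl_smul (F : ℝ → ℝ) (c x h y k : ℝ) :
    dsl (fun s => c * F s) x h y k = c * dsl F x h y k := by unfold dsl; ring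

lemma dsl_add (F G : ℝ → ℝ) (x h y k : ℝ) :
    dsl (fun s => F s + G s) x h y k = dsl F x h y k + dsl G x h y k := by unfold dsl; ring

lemma dsl_int {E : Type*} [MeasurableSpace E] (m : Measure E) (F : ℝ → E → ℝ)
    (hF : ∀ s, Integrable (F s) m) (x h y k : ℝ) :
    dsl (fun s => ∫ e, F s e ∂m) x h y k = ∫ e, dsl (fun s => F s e) x h y k ∂m := by
  unfold dsl
  have h1 : Integrable (fun e => (F (x + h) e - F x e) / h) m := ((hF _).sub (hF _)).div_const _
  have h2 : Integrable (fun e => (F (y + k) e - F y e) / k) m := ((hF _).sub (hF _)).div_const _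
  rw [integral_sub h1 h2, integral_div, integral_div, integral_sub (hF _) (hF _),
    integral_sub (hF _) (hF _)]

lemma dsl_intble {E : Type*} [MeasurableSpace E] (m : Measure E) (F : ℝ → E → ℝ)
    (hF : ∀ s, Integrable (F s) m) (x h y k : ℝ) :
    Integrable (fun e => dsl (fun s => F s e) x h y k) m := by
  unfold dsl
  exact (((hF _).sub (hF _)).div_const _).sub (((hF _).sub (hF _)).div_const _)

/-- the one-step operator -/
def Rop (bt a : ℝ → ℝ → ℝ) (ρ t : ℝ) (θ : S → ℝ → ℝ → ℝ) (g : S × ℝ → ℝ) (r : ℝ) (q : S × ℝ) : ℝ :=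
  ∫ z, g (q.1, z) * qk bt a ρ t θ r q.1 q.2 z

lemma Rop_meas (hc : Coef μ pr bt a β W ρ K C M T) {t : ℝ} {θ : S → ℝ → ℝ → ℝ}
    (hθ : IsFlow a β K T t θ) (g : S × ℝ → ℝ) (hg : Measurable g) (r : ℝ) :
    Measurable (Rop bt a ρ t θ g r) := by
  unfold Rop
  have h1 : Measurable fun p : (S × ℝ) × ℝ => qk bt a ρ t θ r p.1.1 p.1.2 p.2 :=
    (qk_meas hc hθ).comp (f := fun p : (S × ℝ) × ℝ => ((r, p.1.1, p.1.2), p.2)) (by fun_prop)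
  have h2 : Measurable fun p : (S × ℝ) × ℝ => g (p.1.1, p.2) := hg.comp (by fun_prop)
  exact (h2.mul h1).stronglyMeasurable.integral_prod_right'.measurable

lemma Rop_bdd (hc : Coef μ pr bt a β W ρ K C M T) {t : ℝ} {θ : S → ℝ → ℝ → ℝ}
    (hθ : IsFlow a β K T t θ) (htT : t ≤ T) (g : S × ℝ → ℝ) (G0 : ℝ)
    (hgb : ∀ z, |g z| ≤ G0) (r : ℝ) (h0 : 0 ≤ r) (h1 : r < t) (q : S × ℝ) :
    |Rop bt a ρ t θ g r q| ≤ G0 * (qC ρ K M T * (t - r) ^ (-(1/2) : ℝ)) := by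
  have hG0 : 0 ≤ G0 := (abs_nonneg _).trans (hgb q)
  have hq := qC_nonneg hc
  have htr : 0 < t - r := by linarith
  have h2 : ‖Rop bt a ρ t θ g r q‖ₑ ≤ ENNReal.ofReal (G0 * (qC ρ K M T * (t - r) ^ (-(1/2) : ℝ))) := by
    refine (enorm_integral_le_lintegral_enorm _).trans ?_
    rw [ENNReal.ofReal_mul hG0]
    refine le_trans ?_ (mul_le_mul_right (qk_L1 hc hθ htT r h0 h1 q.1 q.2) _)
    rw [← lintegral_const_mul' _ _ ENNReal.ofReal_ne_top]
    refine lintegral_mono fun z => ?_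
    rw [enorm_mul, Real.enorm_eq_ofReal_abs (g _)]
    gcongr
    exact hgb _
  rw [← ofReal_norm] at h2
  exact (ENNReal.ofReal_le_ofReal_iff (by positivity)).1 h2

lemma main_bound (hc : Coef μ pr bt a β W ρ K C M T) (X : ℝ → ℝ → Ω → ℝ)
    (hX : ∀ x, Sol μ pr bt a β W ρ T x (X x)) :
    ∃ C0 : ℝ, ∀ x h y k : ℝ, h ≠ 0 → k ≠ 0 → ∀ g : S × ℝ → ℝ, Measurable g → ∀ G0, (∀ z, |g z| ≤ G0) →
      |dsl (fun s => ∫ ω, g (pr ω, X s T ω) ∂μ) x h y k| ≤ G0 * (C0 * (√|h| + √|k| + √|x - y|)) := by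
  have hρ := hc.hρ
  have hpr := hc.pr_meas
  have hT := hc.hT
  obtain ⟨l, hl0, hl⟩ := kern_choice (qC ρ K M T) T (qC_nonneg hc) hT
  have hTT : 0 < T ^ (-(3/4) : ℝ) := by positivity
  set P0 : ℝ := rexp (K * T) * (6 * (ρ ^ 2) ^ (-(3/4) : ℝ)) with hP0
  refine ⟨2 * P0 * (T ^ (-(3/4) : ℝ) * rexp (l * T)), fun x h y k hh hk => ?_⟩
  set D : ℝ := √|h| + √|k| + √|x - y| with hD
  have hD0 : 0 ≤ D := by positivity
  set w : ℝ → ℝ := fun t => t ^ (-(3/4) : ℝ) * rexp (l * t) with hw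
  set L : ℝ → (S × ℝ → ℝ) → ℝ := fun t g => dsl (fun s => ∫ ω, g (pr ω, X s t ω) ∂μ) x h y k with hL
  have gint : ∀ s t g, Measurable g → ∀ G0 : ℝ, (∀ z, |g z| ≤ G0) →
      Integrable (fun ω => g (pr ω, X s t ω)) μ := fun s t g hg G0 hgb =>
    Integrable.of_bound (hg.comp (hpr.prodMk ((hX s).meas t))).aestronglyMeasurable G0
      (ae_of_all _ fun ω => hgb _)
  set A0 : ℝ := 2 / |h| + 2 / |k| with hA0
  -- a priori
  have apr : ∀ t g, Measurable g → ∀ G0 : ℝ, (∀ z, |g z| ≤ G0) → |L t g| ≤ G0 * A0 := by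
    intro t g hg G0 hgb
    have hu : ∀ s, |∫ ω, g (pr ω, X s t ω) ∂μ| ≤ G0 := by
      intro s
      have := norm_integral_le_of_norm_le_const (μ := μ) (C := G0) (f := fun ω => g (pr ω, X s t ω)) (ae_of_all _ fun ω => hgb (pr ω, X s t ω))
      simpa using this
    have hs : ∀ s s' c : ℝ, |((∫ ω, g (pr ω, X s t ω) ∂μ) - ∫ ω, g (pr ω, X s' t ω) ∂μ) / c| ≤
        G0 * (2 / |c|) := by
      intro s s' c
      rw [abs_div]
      have := (abs_sub (∫ ω, g (pr ω, X s t ω) ∂μ) (∫ ω, g (pr ω, X s' t ω) ∂μ)).trans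
        (add_le_add (hu s) (hu s'))
      calc _ ≤ (G0 + G0) / |c| := by gcongr
        _ = _ := by ring
    simp only [hL, dsl]
    refine (abs_sub _ _).trans ?_
    have h1 := hs (x + h) x h
    have h2 := hs (y + k) y k
    rw [hA0, mul_add]
    exact add_le_add h1 h2
  -- first-order term
  have ell : ∀ t, 0 < t → t ≤ T → ∀ θ, IsFlow a β K T t θ → ∀ g : S × ℝ → ℝ, Measurable g → ∀ G0 : ℝ,
      (∀ z, |g z| ≤ G0) →
      |dsl (fun s => ∫ ω, ∫ z, g (pr ω, z) * gk (ρ ^ 2 * t) (s - θ (pr ω) z 0) ∂volume ∂μ) x h y k| ≤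
        G0 * (P0 * D * t ^ (-(3/4) : ℝ)) := by
    intro t ht htT θ hθ g hg G0 hgb
    have hI := fun s => (ident hc (hX s) hθ ht htT g hg G0 hgb).1
    have e1 : ∀ s, ∫ ω, ∫ z, g (pr ω, z) * gk (ρ ^ 2 * t) (s - θ (pr ω) z 0) ∂volume ∂μ =
        ∫ p : Ω × ℝ, g (pr p.1, p.2) * gk (ρ ^ 2 * t) (s - θ (pr p.1) p.2 0) ∂(μ.prod volume) :=
      fun s => (integral_prod _ (hI s)).symm
    simp only [e1]
    rw [dsl_int _ _ hI]
    simp only [dsl_smul]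
    have hz := hgb
    by_cases hS : Nonempty (S × ℝ)
    swap
    · have : IsEmpty Ω := ⟨fun ω => hS ⟨(pr ω, 0)⟩⟩
      have h0 := Measure.eq_zero_of_isEmpty μ
      exact absurd h0 (IsProbabilityMeasure.ne_zero μ)
    obtain ⟨q0⟩ := hS
    have hG0 : 0 ≤ G0 := (abs_nonneg _).trans (hgb q0)
    set FF : ℝ → ℝ := fun v => dsl (fun s => gk (ρ ^ 2 * t) (s - v)) x h y k with hFF
    have hFm : Measurable FF := by
      have := (gk_cont (ρ ^ 2 * t)).measurable
      simp only [hFF, dsl]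
      fun_prop
    have hv : 0 < ρ ^ 2 * t := by positivity
    have hrate : (6 * D * (ρ ^ 2 * t) ^ (-(3/4) : ℝ)) = 6 * (ρ ^ 2) ^ (-(3/4) : ℝ) * D * t ^ (-(3/4) : ℝ) := by
      rw [Real.mul_rpow (by positivity) ht.le]; ring
    have hFL : ∫⁻ v, ‖FF v‖ₑ ≤ ENNReal.ofReal (6 * D * (ρ ^ 2 * t) ^ (-(3/4) : ℝ)) :=
      gk_slopes_L1 (ρ ^ 2 * t) h k x y hv hh hk
    have hmθ : Measurable fun p : Ω × ℝ => θ (pr p.1) p.2 0 :=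
      hθ.meas.comp (f := fun p : Ω × ℝ => (pr p.1, p.2, (0:ℝ))) (by fun_prop)
    have h2 : ‖∫ p : Ω × ℝ, g (pr p.1, p.2) * FF (θ (pr p.1) p.2 0) ∂(μ.prod volume)‖ₑ ≤
        ENNReal.ofReal (G0 * (P0 * D * t ^ (-(3/4) : ℝ))) := by
      refine (enorm_integral_le_lintegral_enorm _).trans ?_
      rw [ENNReal.ofReal_mul hG0]
      calc _ ≤ ∫⁻ p : Ω × ℝ, ENNReal.ofReal G0 * ‖FF (θ (pr p.1) p.2 0)‖ₑ ∂(μ.prod volume) := by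
            refine lintegral_mono fun p => ?_
            rw [enorm_mul, Real.enorm_eq_ofReal_abs (g _)]
            gcongr
            exact hgb _
        _ = ENNReal.ofReal G0 * ∫⁻ p : Ω × ℝ, ‖FF (θ (pr p.1) p.2 0)‖ₑ ∂(μ.prod volume) :=
            lintegral_const_mul' _ _ ENNReal.ofReal_ne_top
        _ ≤ _ := by
            gcongr
            have hFe : Measurable fun p : Ω × ℝ => ‖FF (θ (pr p.1) p.2 0)‖ₑ := (hFm.comp hmθ).enorm
            rw [lintegral_prod _ hFe.aemeasurable]
            have hin : ∀ ω, ∫⁻ z, ‖FF (θ (pr ω) z 0)‖ₑ ≤ ENNReal.ofReal (P0 * D * t ^ (-(3/4) : ℝ)) := by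
              intro ω
              have := push_le (fun z => θ (pr ω) z 0)
                (hθ.meas.comp (by fun_prop : Measurable fun z : ℝ => (pr ω, z, (0:ℝ)))) (rexp (K * T))
                (fun z z' => hθ.anti (pr ω) z z' 0 ⟨le_rfl, ht.le⟩) (fun v => ‖FF v‖ₑ) hFm.enorm
              refine this.trans ?_
              refine (mul_le_mul_right hFL _).trans (le_of_eq ?_)
              rw [← ENNReal.ofReal_mul (by positivity), hrate, hP0]
              congr 1; ring
            refine (lintegral_mono hin).trans ?_
            simp
    rw [← ofReal_norm] at h2
    exact (ENNReal.ofReal_le_ofReal_iff (by positivity)).1 h2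
  -- recursive identity
  have rec1 : ∀ S0 : ℝ, 0 ≤ S0 → (∀ t, 0 < t → t ≤ T → ∀ g, Measurable g → ∀ G0 : ℝ, (∀ z, |g z| ≤ G0) →
        |L t g| ≤ G0 * (S0 * w t)) →
      (∀ t, 0 < t → t ≤ T → ∀ g, Measurable g → ∀ G0 : ℝ, (∀ z, |g z| ≤ G0) →
        |L t g| ≤ G0 * ((P0 * D + S0 / 2) * w t)) := by
    intro S0 hS0 hyp t ht htT g hg G0 hgb
    obtain ⟨θ, hθ⟩ := flowEx hc t htT
    have hi := fun s => (ident hc (hX s) hθ ht htT g hg G0 hgb).2.1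
    have e := fun s => (ident hc (hX s) hθ ht htT g hg G0 hgb).2.2
    have hG0 : 0 ≤ G0 := by
      by_contra hneg
      have : IsEmpty Ω := ⟨fun ω => hneg ((abs_nonneg _).trans (hgb (pr ω, 0)))⟩
      exact absurd (Measure.eq_zero_of_isEmpty μ) (IsProbabilityMeasure.ne_zero μ)
    obtain ⟨ww, hw1, hw2, hw3⟩ := hl t ht htT
    have eL : L t g = dsl (fun s => ∫ ω, ∫ z, g (pr ω, z) * gk (ρ ^ 2 * t) (s - θ (pr ω) z 0) ∂volume ∂μ) x h y k
        + ∫ r in Ioc 0 t, L r (Rop bt a ρ t θ g r) := by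
      have h1 : ∫ r in Ioc 0 t, L r (Rop bt a ρ t θ g r) = dsl (fun s => ∫ r in Ioc 0 t,
          ∫ ω, ∫ z, g (pr ω, z) * qk bt a ρ t θ r (pr ω) (X s r ω) z ∂volume ∂μ) x h y k :=
        (dsl_int _ _ hi x h y k).symm
      rw [h1, ← dsl_add]
      simp only [hL]
      congr 1
      funext s
      exact e s
    have hbd : |∫ r in Ioc 0 t, L r (Rop bt a ρ t θ g r)| ≤ ∫ r in Ioc 0 t, G0 * (S0 * ww r) := by
      rw [← Real.norm_eq_abs]
      refine norm_integral_le_of_norm_le ((hw1.const_mul S0).const_mul G0) ?_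
      have : ∀ᵐ r ∂(volume.restrict (Ioc 0 t)), r ≠ t := by
        refine ae_restrict_of_ae ?_
        simp [ae_iff]
      filter_upwards [ae_restrict_mem measurableSet_Ioc, this] with r hr hrt
      have hr2 : r < t := lt_of_le_of_ne hr.2 hrt
      have h3 := hyp r hr.1 (hr.2.trans htT) _ (Rop_meas hc hθ g hg r) _
        (Rop_bdd hc hθ htT g G0 hgb r hr.1.le hr2)
      refine h3.trans ?_
      have h4 := hw2 r hr.1 hr2
      calc _ = G0 * (S0 * (qC ρ K M T * (t - r) ^ (-(1/2) : ℝ) * (r ^ (-(3/4) : ℝ) * rexp (l * r)))) := by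
            simp only [hw]; ring
        _ ≤ _ := by gcongr
    rw [integral_const_mul, integral_const_mul] at hbd
    have hw4 : t ^ (-(3/4) : ℝ) ≤ w t := by
      have : 1 ≤ rexp (l * t) := Real.one_le_exp (by positivity)
      simp only [hw]
      exact le_mul_of_one_le_right (by positivity) this
    have hP : 0 ≤ P0 := by positivity
    rw [eL]
    refine (abs_add_le _ _).trans ((add_le_add (ell t ht htT θ hθ g hg G0 hgb) hbd).trans ?_)
    calc G0 * (P0 * D * t ^ (-(3/4) : ℝ)) + G0 * (S0 * ∫ r in Ioc 0 t, ww r)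
        ≤ G0 * (P0 * D * w t) + G0 * (S0 * (1 / 2 * w t)) := by gcongr
      _ = _ := by ring
  have hP : 0 ≤ P0 := by positivity
  set S0 : ℝ := A0 * T ^ (3/4 : ℝ) with hS0
  have hS00 : 0 ≤ S0 := by positivity
  have iter : ∀ n : ℕ, ∀ t, 0 < t → t ≤ T → ∀ g, Measurable g → ∀ G0 : ℝ, (∀ z, |g z| ≤ G0) →
        |L t g| ≤ G0 * ((2 * P0 * D + S0 / 2 ^ n) * w t) := by
    intro n
    induction n with
    | zero =>
      intro t ht htT g hg G0 hgb
      have hG0 : 0 ≤ G0 := by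
        by_contra hneg
        have : IsEmpty Ω := ⟨fun ω => hneg ((abs_nonneg _).trans (hgb (pr ω, 0)))⟩
        exact absurd (Measure.eq_zero_of_isEmpty μ) (IsProbabilityMeasure.ne_zero μ)
      refine (apr t g hg G0 hgb).trans ?_
      refine mul_le_mul_of_nonneg_left ?_ hG0
      have h1 : 1 ≤ T ^ (3/4 : ℝ) * t ^ (-(3/4) : ℝ) := by
        have : t ^ (3/4 : ℝ) * t ^ (-(3/4) : ℝ) = 1 := by rw [← Real.rpow_add ht]; norm_num
        rw [← this]
        gcongr
      have h2 : 1 ≤ rexp (l * t) := Real.one_le_exp (by positivity)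
      have hA : 0 ≤ A0 := by positivity
      calc A0 = A0 * 1 * 1 := by ring
        _ ≤ A0 * (T ^ (3/4 : ℝ) * t ^ (-(3/4) : ℝ)) * rexp (l * t) := by gcongr
        _ = S0 * w t := by rw [hS0]; simp only [hw]; ring
        _ ≤ _ := by
          have : 0 ≤ w t := by simp only [hw]; positivity
          gcongr
          simp only [pow_zero, div_one]
          have : 0 ≤ 2 * P0 * D := by positivity
          linarith
    | succ n ih =>
      intro t ht htT g hg G0 hgb
      refine (rec1 _ (by positivity) ih t ht htT g hg G0 hgb).trans (le_of_eq ?_)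
      rw [pow_succ]; ring
  intro g hg G0 hgb
  have hlim : Filter.Tendsto (fun n : ℕ => G0 * ((2 * P0 * D + S0 / 2 ^ n) * w T)) Filter.atTop
      (nhds (G0 * ((2 * P0 * D + 0) * w T))) := by
    refine Filter.Tendsto.const_mul _ (Filter.Tendsto.mul_const _ (Filter.Tendsto.const_add _ ?_))
    have := (tendsto_pow_atTop_nhds_zero_of_lt_one (by norm_num : (0:ℝ) ≤ 1/2) (by norm_num)).const_mul S0
    rw [mul_zero] at this
    refine this.congr fun n => ?_
    rw [one_div, inv_pow]; rfl
  have := ge_of_tendsto' hlim fun n => iter n T hT le_rfl g hg G0 hgb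
  refine this.trans (le_of_eq ?_)
  simp only [hw]; ring

theorem core (hc : Coef μ pr bt a β W ρ K C M T) (X : ℝ → ℝ → Ω → ℝ)
    (hX : ∀ x, Sol μ pr bt a β W ρ T x (X x)) (Φ : ℝ → ℝ) (hΦ : Measurable Φ) (G0 : ℝ)
    (hb : ∀ z, |Φ z| ≤ G0) : ContDiff ℝ 1 fun x => ∫ ω, Φ (X x T ω) ∂μ := by
  obtain ⟨C0, h⟩ := main_bound hc X hX
  refine c1_of_slopes _ (G0 * C0) fun x y h' k hh hk => ?_
  have := h x h' y k hh hk (fun q => Φ q.2) (hΦ.comp measurable_snd) G0 (fun q => hb _)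
  rw [mul_assoc]
  exact this
end

section
variable {Ω : Type*} [MeasurableSpace Ω] {μ : Measure Ω} [IsProbabilityMeasure μ] {H : ℝ} {B : ℝ → Ω → ℝ}

lemma fbm_gauss (hB : IsFBM μ H B) {ι : Type*} [Fintype ι] (c t : ι → ℝ) :
    ∃ v : ℝ≥0, μ.map (fun ω => ∑ i, c i * B (t i) ω) = gaussianReal 0 v := by
  obtain ⟨v, hv⟩ := hB.gaussian (Fintype.card ι) (t ∘ (Fintype.equivFin ι).symm) (c ∘ (Fintype.equivFin ι).symm)
  refine ⟨v, ?_⟩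
  rw [← hv]
  congr 1
  funext ω
  exact ((Fintype.equivFin ι).symm.sum_comp (fun i => c i * B (t i) ω)).symm

lemma fbm_one (hB : IsFBM μ H B) (t : ℝ) : ∃ v : ℝ≥0, μ.map (B t) = gaussianReal 0 v := by
  obtain ⟨v, hv⟩ := fbm_gauss hB (fun _ : Unit => 1) (fun _ => t)
  exact ⟨v, by simpa using hv⟩

lemma fbm_memLp (hB : IsFBM μ H B) (t : ℝ) : MemLp (B t) 2 μ := by
  obtain ⟨v, hv⟩ := fbm_one hB t
  have := memLp_id_gaussianReal (μ := 0) (v := v) 2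
  rw [← hv] at this
  exact (memLp_map_measure_iff (by fun_prop) (hB.meas t).aemeasurable).1 this

lemma fbm_mean (hB : IsFBM μ H B) (t : ℝ) : ∫ ω, B t ω ∂μ = 0 := by
  obtain ⟨v, hv⟩ := fbm_one hB t
  have := integral_map (μ := μ) (hB.meas t).aemeasurable (f := id) (by fun_prop)
  rw [hv] at this
  simpa using this.symm

lemma fbm_zero (hB : IsFBM μ H B) (hH : 0 < H) : ∀ᵐ ω ∂μ, B 0 ω = 0 := by
  have h1 := hB.cov 0 0 le_rfl le_rfl
  rw [sub_self, abs_zero, Real.zero_rpow (by positivity)] at h1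
  have hi : Integrable (fun ω => B 0 ω * B 0 ω) μ := (fbm_memLp hB 0).integrable_mul (fbm_memLp hB 0)
  have h2 := (integral_eq_zero_iff_of_nonneg (fun ω => mul_self_nonneg (B 0 ω)) hi).1 (by rw [h1]; simp)
  filter_upwards [h2] with ω h
  simpa using h

end

section
variable {Ω : Type*} [MeasurableSpace Ω] {μ : Measure Ω} [IsProbabilityMeasure μ] {W : ℝ → Ω → ℝ}

lemma bm_cov (hW : IsFBM μ (1/2) W) (s t : ℝ) (hs : 0 ≤ s) (hst : s ≤ t) :
    ∫ ω, W s ω * W t ω ∂μ = s ∧ ∫ ω, W t ω * W s ω ∂μ = s := by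
  have h1 := hW.cov s t hs (hs.trans hst)
  have e : (2 * (1/2) : ℝ) = 1 := by norm_num
  rw [e, Real.rpow_one, Real.rpow_one, Real.rpow_one, abs_of_nonneg (by linarith)] at h1
  have h2 : ∫ ω, W t ω * W s ω ∂μ = s := by rw [h1]; ring
  refine ⟨?_, h2⟩
  simp_rw [mul_comm (W s _)]
  exact h2

lemma bm_law (hW : IsFBM μ (1/2) W) (s s' : ℝ) (hs : 0 ≤ s) (hss : s < s') :
    μ.map (fun ω => W s' ω - W s ω) = gaussianReal 0 (s' - s).toNNReal := by
  obtain ⟨v, hv⟩ := fbm_gauss hW (fun i : Bool => if i then 1 else -1) (fun i => if i then s' else s)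
  have e : (fun ω => ∑ i : Bool, (if i then (1:ℝ) else -1) * W (if i then s' else s) ω) =
      fun ω => W s' ω - W s ω := by
    funext ω; simp [sub_eq_add_neg]
  rw [e] at hv
  have hm : Measurable fun ω => W s' ω - W s ω := (hW.meas s').sub (hW.meas s)
  have m1 := fbm_memLp hW s
  have m2 := fbm_memLp hW s'
  have i11 : Integrable (fun ω => W s ω * W s ω) μ := m1.integrable_mul m1
  have i12 : Integrable (fun ω => W s ω * W s' ω) μ := m1.integrable_mul m2
  have i22 : Integrable (fun ω => W s' ω * W s' ω) μ := m2.integrable_mul m2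
  have hvar : ∫ ω, (W s' ω - W s ω) ^ 2 ∂μ = s' - s := by
    have e2 : ∀ ω, (W s' ω - W s ω) ^ 2 = W s' ω * W s' ω - 2 * (W s ω * W s' ω) + W s ω * W s ω := by
      intro ω; ring
    simp_rw [e2]
    have i3 : Integrable (fun ω => W s' ω * W s' ω - 2 * (W s ω * W s' ω)) μ := i22.sub (i12.const_mul 2)
    rw [integral_add i3 i11, integral_sub i22 (i12.const_mul 2),
      integral_const_mul, (bm_cov hW s s hs le_rfl).1, (bm_cov hW s s' hs hss.le).1,
      (bm_cov hW s' s' (hs.trans hss.le) le_rfl).1]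
    ring
  have hv2 : ∫ y, y ^ 2 ∂(gaussianReal 0 v) = v := by
    have h1 := variance_id_gaussianReal (μ := 0) (v := v)
    rw [variance_of_integral_eq_zero (by fun_prop) (by simp)] at h1
    simpa only [id] using h1
  rw [← hv, integral_map hm.aemeasurable (by fun_prop), hvar] at hv2
  rw [hv]
  congr 1
  rw [hv2]; simp

lemma bm_indep (hW : IsFBM μ (1/2) W) (s s' : ℝ) (hs : 0 ≤ s) (hss : s < s') :
    IndepFun (fun ω => fun r : Icc (0:ℝ) s => W r ω) (fun ω => W s' ω - W s ω) μ := by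
  have hm : Measurable fun ω => W s' ω - W s ω := (hW.meas s').sub (hW.meas s)
  have key := IsGaussianProcess.indepFun_of_covariance_eq_zero (P := μ)
    (X := fun r : Icc (0:ℝ) s => W r) (Y := fun (_ : Unit) ω => W s' ω - W s ω) ?_
    (fun r => (hW.meas r).aemeasurable) (fun _ => hm.aemeasurable) ?_
  · exact key.comp measurable_id (measurable_pi_apply ())
  · refine ⟨fun I => ⟨?_⟩⟩
    refine isGaussian_of_map_eq_gaussianReal fun L => ?_
    classical
    set c : I → ℝ := fun i => L (Pi.single i 1) with hcdef
    have hL : ∀ z, L z = ∑ i, c i * z i := by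
      intro z
      have : z = ∑ i, z i • (Pi.single i (1:ℝ) : I → ℝ) := by
        ext j; simp [Finset.sum_apply, Pi.single_apply]
      conv_lhs => rw [this]
      simp [map_sum, hcdef, mul_comm]
    set p : (Icc (0:ℝ) s) ⊕ Unit → ℝ := Sum.elim (fun r => r) (fun _ => s') with hp
    set q : (Icc (0:ℝ) s) ⊕ Unit → ℝ := Sum.elim (fun _ => 0) (fun _ => -1) with hq
    obtain ⟨v, hv⟩ := fbm_gauss hW (ι := I ⊕ I) (Sum.elim c (fun i => c i * q i))
      (Sum.elim (fun i => p i) (fun _ => s))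
    refine ⟨0, v, ?_⟩
    rw [← hv, Measure.map_map (by fun_prop)]
    · congr 1
      funext ω
      simp only [Function.comp_apply, hL, Fintype.sum_sum_type, Sum.elim_inl, Sum.elim_inr]
      rw [← Finset.sum_add_distrib]
      refine Finset.sum_congr rfl fun i _ => ?_
      rcases i with ⟨i | i, hi⟩
      · simp [hp, hq, Finset.restrict]
      · simp [hp, hq, Finset.restrict]; ring
    · refine measurable_pi_iff.2 fun i => ?_
      rcases i with ⟨i | i, hi⟩
      · exact hW.meas _
      · exact hm
  · intro r _
    have m1 := fbm_memLp hW s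
    have m2 := fbm_memLp hW s'
    have m3 := fbm_memLp hW r
    have m4 : MemLp (fun ω => W s' ω - W s ω) 2 μ := m2.sub m1
    rw [covariance_eq_sub m3 m4]
    have i1 : Integrable (fun ω => W r ω * W s ω) μ := m3.integrable_mul m1
    have i2 : Integrable (fun ω => W r ω * W s' ω) μ := m3.integrable_mul m2
    have e1 : ∫ ω, (W r * fun ω => W s' ω - W s ω) ω ∂μ = 0 := by
      simp only [Pi.mul_apply, mul_sub]
      rw [integral_sub i2 i1, (bm_cov hW r s' r.2.1 (r.2.2.trans hss.le)).1,
        (bm_cov hW r s r.2.1 r.2.2).1, sub_self]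
    rw [e1, fbm_mean hW, zero_mul, sub_zero]

end

lemma indep_sup3 {Ω : Type*} [m0 : MeasurableSpace Ω] {μ : Measure Ω} [IsProbabilityMeasure μ]
    (mB mW m1 m2 : MeasurableSpace Ω) (hB : mB ≤ m0) (hW : mW ≤ m0) (h1 : m1 ≤ mW) (h2 : m2 ≤ mW)
    (hi : Indep mB mW μ) (hi' : Indep m1 m2 μ) : Indep (mB ⊔ m1) m2 μ := by
  set P : Set (Set Ω) := {E | ∃ A C, MeasurableSet[mB] A ∧ MeasurableSet[m1] C ∧ E = A ∩ C} with hP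
  have hgen : mB ⊔ m1 = MeasurableSpace.generateFrom P := by
    apply le_antisymm
    · refine sup_le (fun A hA => ?_) (fun C hC => ?_)
      · exact MeasurableSpace.measurableSet_generateFrom ⟨A, univ, hA, MeasurableSet.univ, by simp⟩
      · exact MeasurableSpace.measurableSet_generateFrom ⟨univ, C, MeasurableSet.univ, hC, by simp⟩
    · refine MeasurableSpace.generateFrom_le ?_
      rintro _ ⟨A, C, hA, hC, rfl⟩
      exact MeasurableSet.inter ((le_sup_left : mB ≤ mB ⊔ m1) _ hA) ((le_sup_right : m1 ≤ mB ⊔ m1) _ hC)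
  have hpi : IsPiSystem P := by
    rintro _ ⟨A, C, hA, hC, rfl⟩ _ ⟨A', C', hA', hC', rfl⟩ _
    exact ⟨A ∩ A', C ∩ C', hA.inter hA', hC.inter hC', by rw [inter_inter_inter_comm]⟩
  refine IndepSets.indep (sup_le hB (h1.trans hW)) (h2.trans hW) hpi
    (@MeasurableSpace.isPiSystem_measurableSet Ω m2) hgen
    (@MeasurableSpace.generateFrom_measurableSet Ω m2).symm ?_
  rw [IndepSets_iff]
  rintro _ D ⟨A, C, hA, hC, rfl⟩ hD
  rw [Indep_iff] at hi hi'
  rw [inter_assoc, hi A (C ∩ D) hA ((h1 _ hC).inter (h2 _ hD)), hi' C D hC hD, hi A C hA (h1 _ hC), mul_assoc]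

lemma indep_null {Ω : Type*} [m0 : MeasurableSpace Ω] {μ : Measure Ω}
    (m1 m2 : MeasurableSpace Ω) (hi : Indep m1 m2 μ) :
    Indep (m1 ⊔ MeasurableSpace.generateFrom {A : Set Ω | μ A = 0}) m2 μ := by
  have hle : m1 ⊔ MeasurableSpace.generateFrom {A : Set Ω | μ A = 0} ≤
      eventuallyMeasurableSpace m1 (ae μ) := by
    refine sup_le le_eventuallyMeasurableSpace (MeasurableSpace.generateFrom_le fun A hA => ?_)
    refine ⟨∅, @MeasurableSet.empty _ m1, ?_⟩
    exact ae_eq_empty.2 hA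
  rw [Indep_iff] at hi ⊢
  intro A D hA hD
  obtain ⟨A', hA', he⟩ := hle _ hA
  have e1 : μ (A ∩ D) = μ (A' ∩ D) := measure_congr (he.inter (Filter.EventuallyEq.refl _ _))
  rw [e1, measure_congr he, hi A' D hA' hD]

abbrev pathSigma {ι Ω : Type*} (V : ι → Ω → ℝ) : MeasurableSpace Ω :=
  MeasurableSpace.comap (fun ω => fun t : ι => V t ω) inferInstance

lemma aug_indep {Ω : Type*} [m0 : MeasurableSpace Ω] {μ : Measure Ω} [IsProbabilityMeasure μ]
    (B W : ℝ → Ω → ℝ) (hBm : ∀ t, Measurable (B t)) (hW : IsFBM μ (1 / 2) W)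
    (hindep : IndepFun (fun ω => fun t : ℝ => B t ω) (fun ω => fun t : ℝ => W t ω) μ)
    (s s' : ℝ) (hs : 0 ≤ s) (hss : s < s') :
    Indep (MeasurableSpace.comap (fun ω => fun t : ℝ => B t ω) inferInstance ⊔ augPairFiltration μ B W s)
      (MeasurableSpace.comap (fun ω => W s' ω - W s ω) inferInstance) μ := by
  have hBle : (pathSigma B) ≤ m0 := (measurable_pi_iff.2 hBm).comap_le
  have hWle : (pathSigma W) ≤ m0 := (measurable_pi_iff.2 hW.meas).comap_le
  have hcW : ∀ r, Measurable[(pathSigma W)] (W r) := fun r =>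
    (measurable_pi_apply r).comp (comap_measurable (fun ω => fun t : ℝ => W t ω))
  have hcB : ∀ r, Measurable[(pathSigma B)] (B r) := fun r =>
    (measurable_pi_apply r).comp (comap_measurable (fun ω => fun t : ℝ => B t ω))
  have hc1 : ∀ r : Icc (0:ℝ) s, Measurable[(pathSigma (fun r : Icc (0:ℝ) s => W r))] (W r) := fun r =>
    (measurable_pi_apply r).comp (comap_measurable (fun ω => fun r : Icc (0:ℝ) s => W r ω))
  have h1 : (pathSigma (fun r : Icc (0:ℝ) s => W r)) ≤ (pathSigma W) := by
    refine Measurable.comap_le ?_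
    exact @measurable_pi_iff _ _ _ (pathSigma W) _ _ |>.2 fun r => hcW r
  have h2 : MeasurableSpace.comap (fun ω => W s' ω - W s ω) inferInstance ≤ (pathSigma W) :=
    Measurable.comap_le ((hcW s').sub (hcW s))
  have hi := indep_sup3 (μ := μ) (pathSigma B) (pathSigma W) (pathSigma (fun r : Icc (0:ℝ) s => W r)) _ hBle hWle h1 h2 ((IndepFun_iff_Indep _ _ _).1 hindep)
    ((IndepFun_iff_Indep _ _ _).1 (bm_indep hW s s' hs hss))
  have hi2 := indep_null _ _ hi
  refine indep_of_indep_of_le_left hi2 ?_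
  refine sup_le (le_sup_left.trans le_sup_left) (sup_le ?_ le_sup_right)
  refine iSup₂_le fun r hr => sup_le ?_ ?_
  · exact (hcB r).comap_le.trans (le_sup_left.trans le_sup_left)
  · exact (hc1 ⟨r, hr⟩).comap_le.trans (le_sup_right.trans le_sup_left)

lemma aug_le {Ω : Type*} [m0 : MeasurableSpace Ω] {μ : Measure Ω} (hμc : μ.IsComplete)
    (B W : ℝ → Ω → ℝ) (hBm : ∀ t, Measurable (B t)) (hWm : ∀ t, Measurable (W t)) (s : ℝ) :
    augPairFiltration μ B W s ≤ m0 := by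
  refine sup_le (iSup₂_le fun r _ => sup_le (hBm r).comap_le (hWm r).comap_le) ?_
  exact MeasurableSpace.generateFrom_le fun A hA => hμc.out' A hA

theorem assemble {Ω S : Type*} [m0 : MeasurableSpace Ω] [mS : MeasurableSpace S] (μ : Measure Ω)
    [IsProbabilityMeasure μ]
    (hμc : μ.IsComplete) (H T : ℝ) (hH0 : 0 < H) (hT : 0 < T)
    (ρ₁ ρ₂ : ℝ) (hρ₂ : ρ₂ ≠ 0)
    (B W : ℝ → Ω → ℝ) (hB : IsFBM μ H B) 
    (hW : IsFBM μ (1 / 2) W) (hWcont : ∀ ω, Continuous fun t => W t ω)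
    (hindep : IndepFun (fun ω => fun t : ℝ => B t ω) (fun ω => fun t : ℝ => W t ω) μ)
    (pr : Ω → S) (hpr : Measurable pr) (hprle : MeasurableSpace.comap pr mS ≤
      MeasurableSpace.comap (fun ω => fun t : ℝ => B t ω) inferInstance)
    (β : ℝ → S → ℝ) (hβ : ∀ s ω, β s (pr ω) = ρ₁ * B s ω) (hβm : ∀ s, Measurable (β s))
    (hβc : ∀ σ, Continuous fun s => β s σ)
    (b btilde bhat : ℝ → ℝ → ℝ)
    (hdecomp : ∀ t x, b t x = btilde t x + bhat t x)
    (htmeas : Measurable fun p : ℝ × ℝ => btilde p.1 p.2)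
    (htbdd : ∃ M : ℝ, ∀ t x, |btilde t x| ≤ M)
    (hhmeas : Measurable fun p : ℝ × ℝ => bhat p.1 p.2)
    (Klip Cgr : ℝ)
    (hhlip : ∀ t ∈ Set.Icc (0 : ℝ) T, ∀ x y : ℝ, |bhat t x - bhat t y| ≤ Klip * |x - y|)
    (hhgrowth : ∀ t ∈ Set.Icc (0 : ℝ) T, ∀ x : ℝ, |bhat t x| ≤ Cgr * (1 + |x|))
    (X : ℝ → ℝ → Ω → ℝ)
    (hXsol : ∀ x : ℝ,
      (∀ ω, ContinuousOn (fun t => X x t ω) (Set.Icc 0 T)) ∧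
      (∀ t ∈ Set.Icc (0 : ℝ) T, Measurable[augPairFiltration μ B W t] (X x t)) ∧
      (∀ᵐ ω ∂μ, ∀ t ∈ Set.Icc (0 : ℝ) T,
          X x t ω = x + (∫ u in Set.Ioc (0 : ℝ) t, b u (X x u ω)) +
            ρ₁ * B t ω + ρ₂ * W t ω))
    (Φ : ℝ → ℝ) (hΦ : Measurable Φ) (G0 : ℝ) (hΦb : ∀ z, |Φ z| ≤ G0) :
    ContDiff ℝ 1 fun x : ℝ => ∫ ω, Φ (X x T ω) ∂μ := by
  classical
  obtain ⟨M, hM⟩ := htbdd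
  set a : ℝ → ℝ → ℝ := fun t x => if t ∈ Icc 0 T then bhat t x else 0 with ha
  have hc : Coef μ pr btilde a β W ρ₂ (|Klip| + 1) |Cgr| M T :=
    { hT := hT
      hρ := hρ₂
      hK := by positivity
      hC := abs_nonneg _
      hM := (abs_nonneg _).trans (hM 0 0)
      a_meas := by
        refine Measurable.ite ?_ hhmeas measurable_const
        exact measurable_fst measurableSet_Icc
      a_off := fun r x hr => by simp only [ha, if_neg hr]
      a_gr := fun r x => by
        by_cases hr : r ∈ Icc 0 T
        · simp only [ha, if_pos hr]
          refine (hhgrowth r hr x).trans ?_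
          gcongr
          exact le_abs_self _
        · simp only [ha, if_neg hr, abs_zero]; positivity
      a_lip := fun r x y => by
        by_cases hr : r ∈ Icc 0 T
        · simp only [ha, if_pos hr]
          refine (hhlip r hr x y).trans ?_
          gcongr
          linarith [le_abs_self Klip]
        · simp only [ha, if_neg hr, sub_self, abs_zero]; positivity
      bt_meas := htmeas
      bt_bdd := hM
      pr_meas := hpr
      β_meas := hβm
      β_cont := hβc
      W_meas := hW.meas
      W_cont := hWcont
      law := fun s s' hs hss _ => bm_law hW s s' hs hss }
  set cl : ℝ → ℝ := fun s => max 0 (min s T) with hcl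
  have hclm : ∀ s, cl s ∈ Icc 0 T := fun s =>
    ⟨le_max_left _ _, max_le hT.le (min_le_right _ _)⟩
  have hcle : ∀ s ∈ Icc 0 T, cl s = s := fun s hs => by
    simp only [hcl]; rw [min_eq_left hs.2, max_eq_right hs.1]
  have hclc : Continuous cl := by simp only [hcl]; fun_prop
  set Y : ℝ → ℝ → Ω → ℝ := fun x s ω => X x (cl s) ω with hY
  have hYX : ∀ x s, s ∈ Icc 0 T → Y x s = X x s := fun x s hs => by simp only [hY, hcle s hs]
  have hYc : ∀ x ω, Continuous fun s => Y x s ω := fun x ω =>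
    ((hXsol x).1 ω).comp_continuous hclc hclm
  have hbe : ∀ x ω u, u ∈ Icc 0 T → b u (X x u ω) = btilde u (Y x u ω) + a u (Y x u ω) := by
    intro x ω u hu
    rw [hdecomp, hYX x u hu]
    simp only [ha, if_pos hu]
  have hSol : ∀ x, Sol μ pr btilde a β W ρ₂ T x (Y x) := fun x =>
    { meas := fun s => ((hXsol x).2.1 _ (hclm s)).mono (aug_le hμc B W hB.meas hW.meas _) le_rfl
      cont := hYc x
      init := by
        filter_upwards [(hXsol x).2.2, fbm_zero hB hH0, fbm_zero hW (by norm_num)] with ω h1 h2 h3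
        have := h1 0 ⟨le_rfl, hT.le⟩
        rw [h2, h3] at this
        rw [hYX x 0 ⟨le_rfl, hT.le⟩, this]; simp
      inc := by
        filter_upwards [(hXsol x).2.2] with ω h1 s s' hs hss hsT
        have ms : s ∈ Icc 0 T := ⟨hs, hss.trans hsT⟩
        have ms' : s' ∈ Icc 0 T := ⟨hs.trans hss, hsT⟩
        have e : ∀ q ∈ Icc 0 T, ∫ u in Ioc 0 q, b u (X x u ω) =
            ∫ u in (0:ℝ)..q, (btilde u (Y x u ω) + a u (Y x u ω)) := by
          intro q hq
          rw [intervalIntegral.integral_of_le hq.1]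
          refine setIntegral_congr_fun measurableSet_Ioc fun u hu => ?_
          exact hbe x ω u ⟨hu.1.le, hu.2.trans hq.2⟩
        have hI := b_intble hc (fun u => Y x u ω) (hYc x ω)
        have e2 := intervalIntegral.integral_interval_sub_left (hI 0 s') (hI 0 s)
        rw [hYX x s ms, hYX x s' ms', h1 s ms, h1 s' ms', e s ms, e s' ms', hβ, hβ, ← e2]
        ring
      ind := fun s s' hs hss hsT => by
        rw [IndepFun_iff_Indep]
        refine indep_of_indep_of_le_left (aug_indep B W hB.meas hW hindep s s' hs hss) ?_
        have ms : s ∈ Icc 0 T := ⟨hs, hss.le.trans hsT⟩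
        rw [hYX x s ms]
        have := MeasurableSpace.comap_prodMk (mβ := mS) (mγ := inferInstance) pr (X x s)
        refine le_trans (le_of_eq this) ?_
        exact sup_le_sup hprle ((hXsol x).2.1 s ms).comap_le }
  have := core hc Y hSol Φ hΦ G0 hΦb
  have e : (fun x => ∫ ω, Φ (Y x T ω) ∂μ) = fun x => ∫ ω, Φ (X x T ω) ∂μ := by
    funext x
    rw [hYX x T ⟨hT.le, le_rfl⟩]
  rw [e] at this
  exact this

theorem stmt9 {Ω : Type*} [MeasurableSpace Ω] (μ : Measure Ω) [IsProbabilityMeasure μ]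
    (hμc : μ.IsComplete) (H T : ℝ) (hH0 : 0 < H) (hH : H < 1 / 2) (hT : 0 < T)
    (ρ₁ ρ₂ : ℝ) (hρ₁ : ρ₁ ≠ 0) (hρ₂ : ρ₂ ≠ 0)
    (B W : ℝ → Ω → ℝ) (hB : IsFBM μ H B) (hBcont : ∀ ω, Continuous fun t => B t ω)
    (hW : IsFBM μ (1 / 2) W) (hWcont : ∀ ω, Continuous fun t => W t ω)
    (hindep : IndepFun (fun ω => fun t : ℝ => B t ω) (fun ω => fun t : ℝ => W t ω) μ)
    (b btilde bhat : ℝ → ℝ → ℝ)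
    (hdecomp : ∀ t x, b t x = btilde t x + bhat t x)
    (htmeas : Measurable fun p : ℝ × ℝ => btilde p.1 p.2)
    (htbdd : ∃ M : ℝ, ∀ t x, |btilde t x| ≤ M)
    (hhmeas : Measurable fun p : ℝ × ℝ => bhat p.1 p.2)
    (Klip Cgr : ℝ)
    (hhlip : ∀ t ∈ Set.Icc (0 : ℝ) T, ∀ x y : ℝ, |bhat t x - bhat t y| ≤ Klip * |x - y|)
    (hhgrowth : ∀ t ∈ Set.Icc (0 : ℝ) T, ∀ x : ℝ, |bhat t x| ≤ Cgr * (1 + |x|))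
    (X : ℝ → ℝ → Ω → ℝ)
    (hXsol : ∀ x : ℝ,
      (∀ ω, ContinuousOn (fun t => X x t ω) (Set.Icc 0 T)) ∧
      (∀ t ∈ Set.Icc (0 : ℝ) T, Measurable[augPairFiltration μ B W t] (X x t)) ∧
      (∀ᵐ ω ∂μ, ∀ t ∈ Set.Icc (0 : ℝ) T,
          X x t ω = x + (∫ u in Set.Ioc (0 : ℝ) t, b u (X x u ω)) +
            ρ₁ * B t ω + ρ₂ * W t ω))
    (Φ : ℝ → ℝ) (hΦsmooth : ContDiff ℝ (⊤ : ℕ∞) Φ) (hΦsupp : HasCompactSupport Φ) :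
    ContDiff ℝ 1 fun x : ℝ => ∫ ω, Φ (X x T ω) ∂μ := by
  obtain ⟨G0, hG0⟩ := hΦsupp.exists_bound_of_continuous hΦsmooth.continuous
  have hpath : Measurable fun ω => fun t : ℝ => B t ω := measurable_pi_iff.2 hB.meas
  refine @assemble Ω Ω _ (MeasurableSpace.comap (fun ω => fun t : ℝ => B t ω) inferInstance) μ _ hμc H T hH0 hT
    ρ₁ ρ₂ hρ₂ B W hB hW hWcont hindep id ?_ ?_ (fun s ω => ρ₁ * B s ω) (fun _ _ => rfl) ?_
    (fun ω => (hBcont ω).const_mul ρ₁)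
    b btilde bhat hdecomp htmeas htbdd hhmeas Klip Cgr hhlip hhgrowth X hXsol Φ
    hΦsmooth.continuous.measurable G0 hG0
  · exact measurable_id'' hpath.comap_le
  · rw [MeasurableSpace.comap_id]
  · intro s
    exact ((measurable_pi_apply s).comp (comap_measurable (fun ω => fun t : ℝ => B t ω))).const_mul ρ₁
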